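/- arXiv:2605.27312 — 5 statements merged into one kernel-verified Lean document; each statement's English description precedes it below -/
import Mathlib

section
/- Let m ≥ 4 and 1 ≤ w ≤ m. If 3 does not divide w, or if m is odd, then the automorphism group of the abelian code C(3,m,{w}) is a subgroup of AO(m,3) = Z_3^m ⋊ O(m,3) (acting on F_3^m by x ↦ Ax + b with A ∈ O(m,3)), and equality holds if and only if (m,w) = (4,2) or (m,w) = (5,3). -/
open Matrix

/-- The automorphism group of a binary code of length `|I|` (as a set of coordinate
permutations): those permutations of the index set that map the code onto itself. -/
def codeAut {I : Type} (C : Set (I → ZMod 2)) : Set (Equiv.Perm I) :=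
  { π | (fun c => c ∘ ⇑π.symm) '' C = C }

/-- The abelian code `C(n, m, W)`: binary vectors indexed by `(Z_n)^m` whose finite-field
DFT (with respect to a primitive `n`-th root of unity `α` in a field `K` of characteristic 2)
vanishes at every frequency `j` whose Hamming weight lies outside `W`. -/
def abelianCode (n m : ℕ) [NeZero n] (W : Set ℕ) (K : Type) [Field K] (α : K) :
    Set ((Fin m → ZMod n) → ZMod 2) :=
  { a | ∀ j : Fin m → ZMod n, hammingNorm j ∉ W →
      ∑ i : Fin m → ZMod n, (if a i = 1 then (1 : K) else 0) * α ^ (∑ k, i k * j k).val = 0 }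

/-- The group `AO(m, 3) = Z_3^m ⋊ O(m, 3)`, realized as the set of permutations of
`F_3^m` of the form `x ↦ A x + b` with `A` invertible and `AᵀA = I`. -/
def aoSet (m : ℕ) : Set (Equiv.Perm (Fin m → ZMod 3)) :=
  { f | ∃ (A : Matrix (Fin m) (Fin m) (ZMod 3)) (b : Fin m → ZMod 3),
      IsUnit A ∧ Aᵀ * A = 1 ∧ ∀ x, f x = A.mulVec x + b }

namespace AbCode

open Polynomial

section ring
variable {R : Type} [CommRing R] (ω : R) {m : ℕ}

/-- The additive character of `ZMod 3` attached to a cube root of unity. -/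
def ee (a : ZMod 3) : R := ω ^ a.val

/-- The character of `(ZMod 3)^m` with frequency `j`. -/
def chr (j x : Fin m → ZMod 3) : R := ee ω (∑ k, j k * x k)

variable {ω}

lemma cube_eq_one (h : 1 + ω + ω ^ 2 = 0) : ω ^ 3 = 1 := by
  linear_combination (ω - 1) * h

lemma ee_zero : ee ω 0 = 1 := by simp [ee]

lemma ee_add (h : 1 + ω + ω ^ 2 = 0) (a b : ZMod 3) : ee ω (a + b) = ee ω a * ee ω b := by
  have h3 := cube_eq_one h
  have key : ∀ a b : ZMod 3, a.val + b.val = (a + b).val ∨ a.val + b.val = (a + b).val + 3 := by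
    decide
  unfold ee
  rw [← pow_add]
  rcases key a b with h | h
  · rw [h]
  · rw [h, pow_add, h3, mul_one]

lemma ee_sum (h : 1 + ω + ω ^ 2 = 0) {ι : Type} (s : Finset ι) (f : ι → ZMod 3) :
    ee ω (∑ i ∈ s, f i) = ∏ i ∈ s, ee ω (f i) := by
  classical
  induction s using Finset.induction_on with
  | empty => simp [ee_zero]
  | insert a s ha ih => rw [Finset.sum_insert ha, Finset.prod_insert ha, ee_add h, ih]

lemma chr_add_left (h : 1 + ω + ω ^ 2 = 0) (j l x : Fin m → ZMod 3) :
    chr ω (j + l) x = chr ω j x * chr ω l x := by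
  unfold chr
  rw [← ee_add h, ← Finset.sum_add_distrib]
  congr 1
  exact Finset.sum_congr rfl fun k _ => by simp [add_mul]

lemma chr_comm (j x : Fin m → ZMod 3) : chr ω j x = chr ω x j := by
  unfold chr
  simp_rw [mul_comm]

lemma chr_add_right (h : 1 + ω + ω ^ 2 = 0) (j x y : Fin m → ZMod 3) :
    chr ω j (x + y) = chr ω j x * chr ω j y := by
  rw [chr_comm, chr_add_left h, chr_comm x, chr_comm y]

lemma chr_prod (h : 1 + ω + ω ^ 2 = 0) (j x : Fin m → ZMod 3) :
    chr ω j x = ∏ k, ee ω (j k * x k) := ee_sum h _ _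

lemma sum_ee (h : 1 + ω + ω ^ 2 = 0) (b : ZMod 3) :
    ∑ a : ZMod 3, ee ω (a * b) = if b = 0 then 3 else 0 := by
  have h3 := cube_eq_one h
  have e : ∀ f : ZMod 3 → R, ∑ a : ZMod 3, f a = f 0 + f 1 + f 2 := fun f => Fin.sum_univ_three f
  rw [e]
  have v0 : (0 : ZMod 3).val = 0 := rfl
  have v1 : (1 : ZMod 3).val = 1 := rfl
  have v2 : (2 : ZMod 3).val = 2 := rfl
  have c : b = 0 ∨ b = 1 ∨ b = 2 := by revert b; decide
  have n1 : (1 : ZMod 3) ≠ 0 := by decide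
  have n2 : (2 : ZMod 3) ≠ 0 := by decide
  have m22 : (2 : ZMod 3) * 2 = 1 := by decide
  rcases c with rfl | rfl | rfl
  · simp [ee]; norm_num
  · simp only [ee, mul_one, v0, v1, v2, n1, if_false]
    linear_combination h
  · simp only [ee, zero_mul, one_mul, m22, v0, v1, v2, n2, if_false]
    linear_combination h

lemma sum_prod_eq {S : Type} [CommRing S] (f : Fin m → ZMod 3 → S) :
    ∑ j : Fin m → ZMod 3, ∏ k, f k (j k) = ∏ k, ∑ a : ZMod 3, f k a := by
  rw [Finset.prod_univ_sum]
  simp [Fintype.piFinset_univ]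

lemma sum_chr (h : 1 + ω + ω ^ 2 = 0) (x : Fin m → ZMod 3) :
    ∑ j : Fin m → ZMod 3, chr ω j x = if x = 0 then 3 ^ m else 0 := by
  simp_rw [chr_prod h]
  rw [sum_prod_eq (fun k a => ee ω (a * x k))]
  simp_rw [sum_ee h]
  split_ifs with hx
  · subst hx; simp
  · obtain ⟨k, hk⟩ := Function.ne_iff.mp hx
    exact Finset.prod_eq_zero (Finset.mem_univ k) (if_neg hk)

/-- Krawtchouk generating polynomial. -/
noncomputable def kp (x : Fin m → ZMod 3) : ℤ[X] :=
  ∏ k, if x k = 0 then 1 + 2 * X else 1 - X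

/-- Ternary Krawtchouk value. -/
noncomputable def Kr (w : ℕ) (x : Fin m → ZMod 3) : ℤ := (kp x).coeff w

lemma hn_eq (j : Fin m → ZMod 3) : hammingNorm j = ∑ k, if j k = 0 then 0 else 1 := by
  unfold hammingNorm
  rw [Finset.card_filter]
  exact Finset.sum_congr rfl fun k _ => by by_cases h : j k = 0 <;> simp [h]

lemma pow_hn {S : Type} [CommRing S] (u : S) (j : Fin m → ZMod 3) :
    u ^ hammingNorm j = ∏ k, if j k = 0 then 1 else u := by
  rw [hn_eq, Finset.prod_pow_eq_pow_sum Finset.univ _ u |>.symm]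
  exact Finset.prod_congr rfl fun k _ => by by_cases h : j k = 0 <;> simp [h]

lemma kp_eq (x : Fin m → ZMod 3) :
    kp x = (1 + 2 * X) ^ (m - hammingNorm x) * (1 - X) ^ hammingNorm x := by
  unfold kp
  rw [Finset.prod_ite, Finset.prod_const, Finset.prod_const]
  have h2 : (Finset.univ.filter fun k => ¬ x k = 0).card = hammingNorm x := rfl
  have h1 : (Finset.univ.filter fun k => x k = 0).card = m - hammingNorm x := by
    have := Finset.card_filter_add_card_filter_not (s := (Finset.univ : Finset (Fin m)))
      (fun k => x k = 0)
    simp only [Finset.card_univ, Fintype.card_fin] at this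
    omega
  rw [h1, h2]

lemma gen_eq (h : 1 + ω + ω ^ 2 = 0) (x : Fin m → ZMod 3) :
    ∑ j : Fin m → ZMod 3, (X : R[X]) ^ hammingNorm j * C (chr ω j x)
      = (kp x).map (Int.castRingHom R) := by
  have h3 := cube_eq_one h
  simp_rw [pow_hn, chr_prod h, map_prod, ← Finset.prod_mul_distrib]
  rw [sum_prod_eq (fun k a => (if a = 0 then (1 : R[X]) else X) * C (ee ω (a * x k)))]
  unfold kp
  rw [Polynomial.map_prod]
  refine Finset.prod_congr rfl fun k _ => ?_
  have e : ∀ f : ZMod 3 → R[X], ∑ a : ZMod 3, f a = f 0 + f 1 + f 2 := fun f => Fin.sum_univ_three f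
  have s := sum_ee h (x k)
  have e' : ∀ f : ZMod 3 → R, ∑ a : ZMod 3, f a = f 0 + f 1 + f 2 := fun f => Fin.sum_univ_three f
  rw [e]
  rw [e'] at s
  have n1 : (1 : ZMod 3) ≠ 0 := by decide
  have n2 : (2 : ZMod 3) ≠ 0 := by decide
  simp only [n1, n2, if_true, if_false, zero_mul, ee_zero] at s ⊢
  have s' : C (ee ω (1 * x k)) + C (ee ω (2 * x k))
      = (if x k = 0 then 2 else -1 : R[X]) := by
    rw [← C_add]
    have : ee ω (1 * x k) + ee ω (2 * x k) = if x k = 0 then 2 else -1 := by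
      split_ifs with hx
      · rw [if_pos hx] at s; linear_combination s
      · rw [if_neg hx] at s; linear_combination s
    rw [this]
    split_ifs
    · rw [C_ofNat]
    · rw [C_neg, C_1]
  have : (1 : R[X]) * C 1 + X * C (ee ω (1 * x k)) + X * C (ee ω (2 * x k))
      = 1 + X * (if x k = 0 then 2 else -1 : R[X]) := by
    rw [← s', C_1]; ring
  rw [this]
  split_ifs with hx
  · simp; ring
  · simp; ring

lemma Kr_cast (h : 1 + ω + ω ^ 2 = 0) (w : ℕ) (x : Fin m → ZMod 3) :
    (Kr w x : R) = ∑ j : Fin m → ZMod 3, (if hammingNorm j = w then 1 else 0) * chr ω j x := by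
  have := congrArg (fun p => Polynomial.coeff p w) (gen_eq h x)
  simp only [finsetSum_coeff, coeff_mul_C, coeff_X_pow, coeff_map] at this
  unfold Kr
  rw [eq_intCast] at this
  rw [← this]
  exact Finset.sum_congr rfl fun j _ => by simp [eq_comm]

lemma Kr_mod_two (w : ℕ) (x : Fin m → ZMod 3) :
    (Kr w x : ZMod 2) = ((hammingNorm x).choose w : ZMod 2) := by
  have : (kp x).map (Int.castRingHom (ZMod 2)) = (1 + X) ^ hammingNorm x := by
    rw [kp_eq]
    have h2 : (2 : (ZMod 2)[X]) = 0 := by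
      have : (2 : ZMod 2) = 0 := by decide
      rw [← C_ofNat, this, C_0]
    simp [h2, CharTwo.sub_eq_add]
  have := congrArg (fun p => Polynomial.coeff p w) this
  simp only [coeff_map, coeff_one_add_X_pow, eq_intCast] at this
  exact this

lemma Kr_neg (w : ℕ) (x : Fin m → ZMod 3) : Kr w (-x) = Kr w x := by
  unfold Kr kp; simp

end ring
section inv
set_option linter.unusedSectionVars false
variable {R : Type} [CommRing R] {m : ℕ}

/-- Invariance of the kernel `g (x - y)` under a permutation. -/
def Inv (π : Equiv.Perm (Fin m → ZMod 3)) (g : (Fin m → ZMod 3) → R) : Prop :=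
  ∀ x y, g (π x - π y) = g (x - y)

/-- Convolution. -/
def conv (f g : (Fin m → ZMod 3) → R) (x : Fin m → ZMod 3) : R := ∑ y, f y * g (x - y)

lemma conv_sub (f g : (Fin m → ZMod 3) → R) (x y : Fin m → ZMod 3) :
    conv f g (x - y) = ∑ u, f (x - u) * g (u - y) := by
  unfold conv
  refine Fintype.sum_equiv (Equiv.subLeft x) _ _ fun z => ?_
  simp [Equiv.subLeft, sub_right_comm]

lemma Inv.conv {π : Equiv.Perm (Fin m → ZMod 3)} {f g : (Fin m → ZMod 3) → R}
    (hf : Inv π f) (hg : Inv π g) : Inv π (conv f g) := by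
  intro x y
  rw [conv_sub, conv_sub, ← Equiv.sum_comp π]
  exact Finset.sum_congr rfl fun u _ => by rw [hf, hg]

lemma Inv.symm {π : Equiv.Perm (Fin m → ZMod 3)} {f : (Fin m → ZMod 3) → R}
    (hf : Inv π f) : Inv π.symm f := by
  intro x y
  rw [← hf, π.apply_symm_apply, π.apply_symm_apply]

variable (ω : R)

/-- Function with prescribed Fourier coefficients. -/
def FF (c : (Fin m → ZMod 3) → R) (x : Fin m → ZMod 3) : R := ∑ j, c j * chr ω j x

variable {ω}

lemma chr_zero_right (j : Fin m → ZMod 3) : chr ω j 0 = 1 := by simp [chr, ee_zero]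

lemma chr_neg (j x : Fin m → ZMod 3) : chr ω j (-x) = chr ω (-j) x := by simp [chr]

lemma chr_sub (h : 1 + ω + ω ^ 2 = 0) (j x y : Fin m → ZMod 3) :
    chr ω j (x - y) = chr ω j x * chr ω (-j) y := by
  rw [sub_eq_add_neg, chr_add_right h, chr_neg]

lemma FF_mul (h : 1 + ω + ω ^ 2 = 0) (c d : (Fin m → ZMod 3) → R) (x : Fin m → ZMod 3) :
    FF ω c x * FF ω d x = FF ω (conv c d) x := by
  unfold FF conv
  rw [Finset.sum_mul_sum]
  simp_rw [Finset.sum_mul]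
  rw [Finset.sum_comm (s := (Finset.univ : Finset (Fin m → ZMod 3))) (t := Finset.univ)
    (f := fun j y => c y * d (j - y) * chr ω j x)]
  refine Finset.sum_congr rfl fun y _ => ?_
  refine Fintype.sum_equiv (Equiv.addRight y) _ _ fun z => ?_
  simp only [Equiv.coe_addRight, add_sub_cancel_right, chr_add_left h]
  ring

lemma FF_conv (h : 1 + ω + ω ^ 2 = 0) (c d : (Fin m → ZMod 3) → R) (x : Fin m → ZMod 3) :
    conv (FF ω c) (FF ω d) x = 3 ^ m * FF ω (c * d) x := by
  unfold FF conv
  simp_rw [Finset.sum_mul_sum]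
  rw [Finset.sum_comm, Finset.mul_sum]
  refine Finset.sum_congr rfl fun a _ => ?_
  rw [Finset.sum_comm]
  have : ∀ b : Fin m → ZMod 3, ∑ y, c a * chr ω a y * (d b * chr ω b (x - y))
      = c a * d b * chr ω b x * (if a - b = 0 then 3 ^ m else 0) := by
    intro b
    rw [← sum_chr h, Finset.mul_sum]
    refine Finset.sum_congr rfl fun y _ => ?_
    rw [chr_sub h, chr_comm y, sub_eq_add_neg, chr_add_left h]
    ring
  simp_rw [this, sub_eq_zero]
  rw [Finset.sum_eq_single a]
  · simp; ring
  · intro b _ hb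
    rw [if_neg (Ne.symm hb), mul_zero]
  · simp

/-- Indicator of the vectors of weight `w`. -/
def ind (R : Type) [CommRing R] {m : ℕ} (w : ℕ) (j : Fin m → ZMod 3) : R :=
  if hammingNorm j = w then 1 else 0

lemma Kr_FF (h : 1 + ω + ω ^ 2 = 0) (w : ℕ) (x : Fin m → ZMod 3) :
    (Kr w x : R) = FF ω (ind R w) x := Kr_cast h w x

end inv

lemma exists_omega : ∃ ω : ℂ, 1 + ω + ω ^ 2 = 0 := by
  have h := Complex.isPrimitiveRoot_exp 3 (by norm_num)
  have h2 := h.geom_sum_eq_zero (by norm_num)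
  simp only [Finset.sum_range_succ, Finset.sum_range_zero, zero_add, pow_zero, pow_one] at h2
  exact ⟨_, h2⟩

lemma Kr_conv {m : ℕ} (w : ℕ) (x : Fin m → ZMod 3) :
    conv (Kr w) (Kr w) x = 3 ^ m * Kr w x := by
  obtain ⟨ω, h⟩ := exists_omega
  have : ((conv (Kr w) (Kr w) x : ℤ) : ℂ) = ((3 ^ m * Kr w x : ℤ) : ℂ) := by
    have e : ((conv (Kr w) (Kr w) x : ℤ) : ℂ) = conv (FF ω (ind ℂ w)) (FF ω (ind ℂ w)) x := by
      unfold conv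
      push_cast
      simp_rw [Kr_FF h]
    rw [e, FF_conv h]
    push_cast
    rw [Kr_FF h]
    congr 2
    funext j
    simp [ind]
  exact_mod_cast this


/-- Lifting from characteristic two to the integers. -/
lemma lift_inv {m w : ℕ} {π : Equiv.Perm (Fin m → ZMod 3)}
    (h : Inv π (fun x => (Kr w x : ZMod 2))) : Inv π (Kr w) := by
  have step : ∀ n : ℕ, ∃ (f g : (Fin m → ZMod 3) → ℤ) (c : ℤ), Inv π f ∧ Odd c ∧
      ∀ x, f x = c * Kr w x + 2 ^ (n + 1) * g x := by
    intro n
    induction n with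
    | zero =>
      refine ⟨fun x => ((Kr w x : ZMod 2).val : ℤ), fun x => - (Kr w x / 2), 1, ?_, odd_one, ?_⟩
      · intro x y
        have := h x y
        simp only at this ⊢
        rw [this]
      · intro x
        have : ((Kr w x : ZMod 2).val : ℤ) = Kr w x % 2 := by
          rw [ZMod.val_intCast]; rfl
        simp only [this]
        have := Int.emod_add_mul_ediv (Kr w x) 2
        rw [zero_add, pow_one]
        linarith
    | succ n ih =>
      obtain ⟨f, g, c, hf, hc, hfg⟩ := ih
      refine ⟨conv f f, fun x => c * conv (Kr w) g x + 2 ^ n * conv g g x, c ^ 2 * 3 ^ m,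
        hf.conv hf, (hc.pow).mul (Odd.pow (by decide)), ?_⟩
      intro x
      have e : f = fun x => c * Kr w x + 2 ^ (n + 1) * g x := funext hfg
      have hcm : conv g (Kr w) x = conv (Kr w) g x := by
        unfold conv
        refine Fintype.sum_equiv (Equiv.subLeft x) _ _ fun z => ?_
        simp [mul_comm]
      have : conv f f x = c ^ 2 * conv (Kr w) (Kr w) x + c * 2 ^ (n + 1) * conv (Kr w) g x
          + c * 2 ^ (n + 1) * conv g (Kr w) x + (2 ^ (n + 1)) ^ 2 * conv g g x := by
        rw [e]
        unfold conv
        simp only [Finset.mul_sum, ← Finset.sum_add_distrib]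
        exact Finset.sum_congr rfl fun y _ => by ring
      rw [this, hcm, Kr_conv]
      ring
  intro x y
  have dv : ∀ n : ℕ, (2 : ℤ) ^ (n + 1) ∣ Kr w (π x - π y) - Kr w (x - y) := by
    intro n
    obtain ⟨f, g, c, hf, hc, hfg⟩ := step n
    have h1 := hfg (π x - π y)
    rw [hf, hfg] at h1
    have h2 : (2 : ℤ) ^ (n + 1) ∣ c * (Kr w (π x - π y) - Kr w (x - y)) :=
      ⟨g (x - y) - g (π x - π y), by linear_combination -h1⟩
    refine IsCoprime.dvd_of_dvd_mul_left ?_ h2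
    exact IsCoprime.pow_left (Int.isCoprime_iff_gcd_eq_one.mpr (by
      rw [Int.gcd_comm]
      exact Int.isCoprime_iff_gcd_eq_one.mp (Int.isCoprime_two_right.mpr hc)))
  by_contra hne
  have hne' : Kr w (π x - π y) - Kr w (x - y) ≠ 0 := sub_ne_zero.mpr hne
  set D := Kr w (π x - π y) - Kr w (x - y)
  have h1 := Int.natAbs_dvd_natAbs.mpr (dv D.natAbs)
  have h2 := Nat.le_of_dvd (Int.natAbs_pos.mpr hne') h1
  rw [Int.natAbs_pow] at h2
  have h3 : D.natAbs + 1 < 2 ^ (D.natAbs + 1) := Nat.lt_two_pow_self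
  simp at h2
  omega

lemma hn_neg {m : ℕ} (j : Fin m → ZMod 3) : hammingNorm (-j) = hammingNorm j := by
  rw [hn_eq, hn_eq]; simp

section code
set_option linter.unusedSectionVars false
variable {m w : ℕ} {K : Type} [Field K] [CharP K 2] {α : K}

lemma omega_rel (hα : IsPrimitiveRoot α 3) : 1 + α + α ^ 2 = 0 := by
  have := hα.geom_sum_eq_zero (by norm_num)
  simpa [Finset.sum_range_succ] using this

lemma ite_cast (b : ZMod 2) : (if b = 1 then (1 : K) else 0) = ZMod.castHom (dvd_refl 2) K b := by
  have : b = 0 ∨ b = 1 := by revert b; decide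
  rcases this with rfl | rfl
  · rw [map_zero, if_neg (by decide)]
  · rw [map_one, if_pos rfl]

lemma three_pow_one : (3 : K) ^ m = 1 := by
  have h2 : (2 : K) = 0 := CharTwo.two_eq_zero
  have : (3 : K) = 1 := by linear_combination h2
  rw [this, one_pow]

lemma mem_code_iff (hα : IsPrimitiveRoot α 3) (a : (Fin m → ZMod 3) → ZMod 2) :
    a ∈ abelianCode 3 m {w} K α ↔ ∀ x, a x = ∑ y, (Kr w (x - y) : ZMod 2) * a y := by
  have h := omega_rel hα
  set φ := ZMod.castHom (dvd_refl 2) K with hφ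
  have hinj : Function.Injective φ := φ.injective
  have hat : ∀ j : Fin m → ZMod 3,
      (∑ i : Fin m → ZMod 3, (if a i = 1 then (1 : K) else 0) * α ^ (∑ k, i k * j k).val)
        = ∑ i, φ (a i) * chr α j i := by
    intro j
    refine Finset.sum_congr rfl fun i _ => ?_
    rw [ite_cast, chr_comm]
    rfl
  have hmem : a ∈ abelianCode 3 m {w} K α ↔
      ∀ j : Fin m → ZMod 3, hammingNorm j ≠ w → ∑ i, φ (a i) * chr α j i = 0 := by
    unfold abelianCode
    simp only [Set.mem_ofPred_eq, Set.mem_singleton_iff, hat]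
  rw [hmem]
  have hphi : ∀ x, φ (∑ y, (Kr w (x - y) : ZMod 2) * a y)
      = ∑ j, ind K w j * chr α j x * ∑ i, φ (a i) * chr α (-j) i := by
    intro x
    rw [map_sum]
    simp_rw [map_mul, map_intCast, Kr_FF h, FF, Finset.sum_mul, Finset.mul_sum]
    rw [Finset.sum_comm]
    refine Finset.sum_congr rfl fun j _ => Finset.sum_congr rfl fun i _ => ?_
    rw [chr_sub h]; ring
  constructor
  · intro ha x
    apply hinj
    rw [hphi]
    have : ∀ j : Fin m → ZMod 3, ind K w j * chr α j x * ∑ i, φ (a i) * chr α (-j) i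
        = ∑ i, φ (a i) * chr α j (x - i) := by
      intro j
      have e : ∑ i, φ (a i) * chr α j (x - i) = chr α j x * ∑ i, φ (a i) * chr α (-j) i := by
        rw [Finset.mul_sum]
        exact Finset.sum_congr rfl fun i _ => by rw [chr_sub h]; ring
      rw [e]
      by_cases hj : hammingNorm j = w
      · simp [ind, hj]
      · rw [ha (-j) (by rwa [hn_neg]), mul_zero, mul_zero]
    simp_rw [this]
    rw [Finset.sum_comm]
    simp_rw [← Finset.mul_sum, sum_chr h, sub_eq_zero]
    rw [Finset.sum_eq_single x]
    · rw [if_pos rfl, three_pow_one, mul_one]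
    · intro b _ hb
      rw [if_neg (Ne.symm hb), mul_zero]
    · simp
  · intro ha j hj
    have : ∀ i, φ (a i) = ∑ l, ind K w l * chr α l i * ∑ i, φ (a i) * chr α (-l) i := by
      intro i
      rw [← hphi, ← ha]
    have e : ∑ i, φ (a i) * chr α j i
        = ∑ i, (∑ l, ind K w l * chr α l i * ∑ i, φ (a i) * chr α (-l) i) * chr α j i :=
      Finset.sum_congr rfl fun i _ => by rw [← this]
    rw [e]
    simp_rw [Finset.sum_mul]
    rw [Finset.sum_comm]
    refine Finset.sum_eq_zero fun l _ => ?_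
    have e2 : ∑ i, ind K w l * chr α l i * (∑ i, φ (a i) * chr α (-l) i) * chr α j i
        = ind K w l * (∑ i, φ (a i) * chr α (-l) i) * ∑ i, chr α i (l + j) := by
      rw [Finset.mul_sum]
      refine Finset.sum_congr rfl fun i _ => ?_
      rw [chr_comm i, chr_add_left h]; ring
    rw [e2, sum_chr h]
    by_cases hl : l + j = 0
    · have : hammingNorm l ≠ w := by
        rw [eq_neg_of_add_eq_zero_left hl, hn_neg]; exact hj
      simp [ind, this]
    · rw [if_neg hl, mul_zero]

lemma aut_iff (hα : IsPrimitiveRoot α 3) (π : Equiv.Perm (Fin m → ZMod 3)) :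
    π ∈ codeAut (abelianCode 3 m {w} K α) ↔ Inv π (fun x => (Kr w x : ZMod 2)) := by
  set C := abelianCode 3 m {w} K α with hC
  have hmem := mem_code_iff (w := w) (m := m) hα
  rw [← hC] at hmem
  have hev : ∀ x y : Fin m → ZMod 3, Kr w (x - y) = Kr w (y - x) := by
    intro x y; rw [← Kr_neg, neg_sub]
  have hker : ∀ y, (fun x => (Kr w (x - y) : ZMod 2)) ∈ C := by
    intro y
    rw [hmem]
    intro x
    have := congrArg (fun z : ℤ => (z : ZMod 2)) (Kr_conv w (x - y))
    have h3 : (3 : ZMod 2) ^ m = 1 := by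
      have : (3 : ZMod 2) = 1 := by decide
      rw [this, one_pow]
    simp only [conv_sub] at this
    push_cast at this
    rw [h3, one_mul] at this
    exact this.symm
  have hrep : ∀ c ∈ C, ∀ y, ∑ x, (Kr w (x - y) : ZMod 2) * c x = c y := by
    intro c hc y
    rw [(hmem c).mp hc y]
    exact Finset.sum_congr rfl fun x _ => by rw [hev]
  constructor
  · intro hπ
    have h1 : ∀ c ∈ C, c ∘ π.symm ∈ C := by
      intro c hc
      have : (fun c => c ∘ ⇑π.symm) '' C = C := hπ
      rw [← this]; exact ⟨c, hc, rfl⟩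
    have h2 : ∀ c ∈ C, c ∘ π ∈ C := by
      intro c hc
      have : (fun c => c ∘ ⇑π.symm) '' C = C := hπ
      rw [← this] at hc
      obtain ⟨d, hd, rfl⟩ := hc
      have : (d ∘ ⇑π.symm) ∘ ⇑π = d := by funext x; simp
      simp only [this]; exact hd
    intro x y
    simp only
    have hd := h2 _ (hker (π y))
    have r1 := hrep _ hd x
    have r2 := hrep _ (h1 _ (hker x)) (π y)
    simp only [Function.comp_apply, π.symm_apply_apply] at r1 r2
    rw [← r1, hev x y, ← r2]
    refine Fintype.sum_equiv π _ _ fun u => ?_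
    simp only [π.symm_apply_apply]
    ring
  · intro hI
    have aux : ∀ π : Equiv.Perm (Fin m → ZMod 3), Inv π (fun x => (Kr w x : ZMod 2)) →
        ∀ c ∈ C, c ∘ π ∈ C := by
      intro π hI c hc
      rw [hmem]
      intro x
      rw [Function.comp_apply, (hmem c).mp hc, ← Equiv.sum_comp π]
      refine Finset.sum_congr rfl fun u _ => ?_
      have := hI x u
      simp only at this
      rw [this]; rfl
    change (fun c => c ∘ ⇑π.symm) '' C = C
    apply Set.Subset.antisymm
    · rintro _ ⟨c, hc, rfl⟩
      exact aux π.symm hI.symm c hc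
    · intro c hc
      refine ⟨c ∘ π, aux π hI c hc, ?_⟩
      funext x; simp

end code
lemma hn_le {m : ℕ} (x : Fin m → ZMod 3) : hammingNorm x ≤ m := by
  have := hammingNorm_le_card_fintype (x := x)
  simpa using this

lemma hn_mod {m : ℕ} (x : Fin m → ZMod 3) : (hammingNorm x : ZMod 3) = x ⬝ᵥ x := by
  rw [hn_eq]
  push_cast
  refine Finset.sum_congr rfl fun k _ => ?_
  generalize x k = a
  revert a; decide

lemma ao_of_mod {m : ℕ} (π : Equiv.Perm (Fin m → ZMod 3))
    (h : ∀ x y, (hammingNorm (π x - π y) : ZMod 3) = hammingNorm (x - y)) : π ∈ aoSet m := by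
  set σ : (Fin m → ZMod 3) → (Fin m → ZMod 3) := fun x => π x - π 0 with hσ
  have h1 : ∀ x, σ x ⬝ᵥ σ x = x ⬝ᵥ x := by
    intro x
    have := h x 0
    rw [hn_mod, hn_mod, sub_zero] at this
    exact this
  have h2 : ∀ x y, (σ x - σ y) ⬝ᵥ (σ x - σ y) = (x - y) ⬝ᵥ (x - y) := by
    intro x y
    have := h x y
    rw [hn_mod, hn_mod] at this
    rw [← this]
    simp [hσ]
  have h3 : ∀ x y, σ x ⬝ᵥ σ y = x ⬝ᵥ y := by
    intro x y
    have e := h2 x y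
    simp only [sub_dotProduct, dotProduct_sub, h1] at e
    rw [dotProduct_comm (σ y) (σ x), dotProduct_comm y x] at e
    have c3 : (3 : ZMod 3) = 0 := by decide
    linear_combination e + (σ x ⬝ᵥ σ y - x ⬝ᵥ y) * c3
  set A : Matrix (Fin m) (Fin m) (ZMod 3) := Matrix.of fun k i => σ (Pi.single i 1) k with hA
  have hAA : Aᵀ * A = 1 := by
    ext i j
    have : (Aᵀ * A) i j = σ (Pi.single i 1) ⬝ᵥ σ (Pi.single j 1) := rfl
    rw [this, h3, single_one_dotProduct, Matrix.one_apply, Pi.single_apply]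
  have hAA' : A * Aᵀ = 1 := mul_eq_one_comm.mp hAA
  refine ⟨A, π 0, ⟨⟨A, Aᵀ, hAA', hAA⟩, rfl⟩, hAA, fun x => ?_⟩
  have h4 : Aᵀ.mulVec (σ x) = x := by
    funext i
    have : Aᵀ.mulVec (σ x) i = σ (Pi.single i 1) ⬝ᵥ σ x := rfl
    rw [this, h3, single_one_dotProduct]
  have h5 : A.mulVec x = σ x := by
    conv_lhs => rw [← h4]
    rw [Matrix.mulVec_mulVec, hAA', Matrix.one_mulVec]
  rw [h5]; simp [hσ]

lemma mod_of_ao {m : ℕ} {π : Equiv.Perm (Fin m → ZMod 3)} (h : π ∈ aoSet m)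
    (x y : Fin m → ZMod 3) : (hammingNorm (π x - π y) : ZMod 3) = hammingNorm (x - y) := by
  obtain ⟨A, b, -, hA, hf⟩ := h
  rw [hn_mod, hn_mod, hf, hf, add_sub_add_right_eq_sub, ← Matrix.mulVec_sub,
    Matrix.dotProduct_mulVec, ← Matrix.mulVec_transpose, Matrix.mulVec_mulVec, hA,
    Matrix.one_mulVec]

/-- Krawtchouk numbers as a function of the weight. -/
def kv (m w t : ℕ) : ℤ :=
  ∑ i ∈ Finset.range (w + 1), ((m - t).choose i * 2 ^ i) * (t.choose (w - i) * (-1) ^ (w - i))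

lemma coeff_lin {S : Type} [CommRing S] (r : S) (n i : ℕ) :
    ((1 + C r * X : S[X]) ^ n).coeff i = n.choose i * r ^ i := by
  have : (1 + C r * X : S[X]) ^ n = ((1 + X) ^ n).comp (C r * X) := by simp
  rw [this, comp_C_mul_X_coeff, coeff_one_add_X_pow]

lemma Kr_kv {m : ℕ} (w : ℕ) (x : Fin m → ZMod 3) : Kr w x = kv m w (hammingNorm x) := by
  unfold Kr kv
  rw [kp_eq]
  have h1 : (1 + 2 * X : ℤ[X]) = 1 + C 2 * X := by simp
  have h2 : (1 - X : ℤ[X]) = 1 + C (-1) * X := by simp [sub_eq_add_neg]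
  rw [h1, h2, coeff_mul, Finset.Nat.sum_antidiagonal_eq_sum_range_succ_mk]
  exact Finset.sum_congr rfl fun i _ => by simp only [coeff_lin]

lemma kv_one {m t : ℕ} (ht : t ≤ m) : kv m 1 t = 2 * m - 3 * t := by
  simp [kv, Finset.sum_range_succ]
  rw [Nat.cast_sub ht]; ring

lemma choose_two_cast (n : ℕ) : 2 * (n.choose 2 : ℤ) = n * (n - 1) := by
  induction n with
  | zero => simp
  | succ n ih =>
    rw [Nat.choose_succ_succ' n 1, Nat.choose_one_right]
    push_cast
    linear_combination ih

lemma kv_two {m t : ℕ} (ht : t ≤ m) :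
    2 * kv m 2 t = 9 * t ^ 2 - 12 * t * m + 3 * t + 4 * m ^ 2 - 4 * m := by
  simp [kv, Finset.sum_range_succ]
  have h1 := choose_two_cast t
  have h2 := choose_two_cast (m - t)
  rw [Nat.cast_sub ht] at h2 ⊢
  linear_combination h1 + 4 * h2

/-- Number of decompositions of a weight-`k` vector (with `n` zeros) into two of weight `w`. -/
def AA (n k w : ℕ) : ℕ :=
  ∑ j ∈ Finset.range (w + 1), k.choose j * j.choose (k - j) * 2 ^ (w - j) * n.choose (w - j)

lemma coeff_lin2 (k j : ℕ) :
    ((C (X : ℤ[X]) + X * C (1 + X)) ^ k).coeff j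
      = X ^ (k - j) * (k.choose j : ℤ[X]) * (1 + X) ^ j := by
  have : (C (X : ℤ[X]) + X * C (1 + X)) ^ k = ((X + C X) ^ k).comp (C (1 + X) * X) := by
    simp; ring
  rw [this, comp_C_mul_X_coeff, coeff_X_add_C_pow]

lemma count_eq {m : ℕ} (w : ℕ) (x : Fin m → ZMod 3) :
    conv (ind ℤ w) (ind ℤ w) x = AA (m - hammingNorm x) (hammingNorm x) w := by
  have gen : ∑ y : Fin m → ZMod 3, (X : ℤ[X][X]) ^ hammingNorm y * (C X) ^ hammingNorm (x - y)
      = (1 + C (2 * X) * X) ^ (m - hammingNorm x) * (C X + X * C (1 + X)) ^ hammingNorm x := by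
    have hpr : ∀ y : Fin m → ZMod 3, (X : ℤ[X][X]) ^ hammingNorm y * (C X) ^ hammingNorm (x - y)
        = ∏ k, ((if y k = 0 then (1 : ℤ[X][X]) else X)
          * (if (x k - y k) = 0 then 1 else C X)) := by
      intro y
      rw [pow_hn, pow_hn, ← Finset.prod_mul_distrib]
      rfl
    rw [Finset.sum_congr rfl (fun y _ => hpr y)]
    rw [sum_prod_eq (fun k a => (if a = 0 then (1 : ℤ[X][X]) else X)
      * (if (x k - a) = 0 then 1 else C X))]
    have : ∀ k, ∑ a : ZMod 3, ((if a = 0 then (1 : ℤ[X][X]) else X)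
      * (if (x k - a) = 0 then 1 else C X))
      = if x k = 0 then 1 + C (2 * X) * X else C X + X * C (1 + X) := by
      intro k
      have e : ∀ f : ZMod 3 → ℤ[X][X], ∑ a : ZMod 3, f a = f 0 + f 1 + f 2 :=
        fun f => Fin.sum_univ_three f
      rw [e]
      generalize x k = b
      have n0 : (0 : ZMod 3) = 0 := rfl
      have n1 : (1 : ZMod 3) ≠ 0 := by decide
      have n2 : (2 : ZMod 3) ≠ 0 := by decide
      have c : b = 0 ∨ b = 1 ∨ b = 2 := by revert b; decide
      rcases c with rfl | rfl | rfl
      · have a1 : (0 - 1 : ZMod 3) ≠ 0 := by decide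
        have a2 : (0 - 2 : ZMod 3) ≠ 0 := by decide
        have c2 : (C (2 : ℤ[X]) : ℤ[X][X]) = 2 := map_ofNat C 2
        simp only [n1, n2, a1, a2, sub_self, if_true, if_false, map_mul, c2]
        ring
      · have a2 : (1 - 2 : ZMod 3) ≠ 0 := by decide
        simp only [n1, n2, a2, sub_self, sub_zero, if_true, if_false]
        simp; ring
      · have a2 : (2 - 1 : ZMod 3) ≠ 0 := by decide
        simp only [n1, n2, a2, sub_self, sub_zero, if_true, if_false]
        simp; ring
    simp_rw [this]
    rw [Finset.prod_ite, Finset.prod_const, Finset.prod_const]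
    have h2 : (Finset.univ.filter fun k => ¬ x k = 0).card = hammingNorm x := rfl
    have h1 : (Finset.univ.filter fun k => x k = 0).card = m - hammingNorm x := by
      have := Finset.card_filter_add_card_filter_not (s := (Finset.univ : Finset (Fin m)))
        (fun k => x k = 0)
      simp only [Finset.card_univ, Fintype.card_fin] at this
      omega
    rw [h1, h2]
  have hl : ((∑ y : Fin m → ZMod 3, (X : ℤ[X][X]) ^ hammingNorm y
      * (C X) ^ hammingNorm (x - y)).coeff w).coeff w = conv (ind ℤ w) (ind ℤ w) x := by
    simp_rw [finsetSum_coeff, ← C_pow, coeff_mul_C, coeff_X_pow]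
    unfold conv ind
    refine Finset.sum_congr rfl fun y _ => ?_
    by_cases h1 : w = hammingNorm y
    · simp [← h1, coeff_X_pow, eq_comm]
    · simp [h1, Ne.symm h1]
  rw [← hl, gen, coeff_mul, Finset.Nat.sum_antidiagonal_eq_sum_range_succ_mk,
    ← Finset.sum_range_reflect]
  unfold AA
  push_cast
  rw [finsetSum_coeff]
  refine Finset.sum_congr rfl fun j hj => ?_
  have hj' : j ≤ w := by simpa [Nat.lt_succ_iff] using hj
  have e1 : w + 1 - 1 - j = w - j := by omega
  have e2 : w - (w - j) = j := by omega
  simp only [e2, coeff_lin, coeff_lin2]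
  generalize m - hammingNorm x = n
  generalize hammingNorm x = k
  have e3 : ((n.choose (w - j) : ℤ[X]) * (2 * X) ^ (w - j)
      * (X ^ (k - j) * (k.choose j : ℤ[X]) * (1 + X) ^ j))
      = C ((n.choose (w - j) : ℤ) * 2 ^ (w - j) * (k.choose j : ℤ))
        * ((1 + X) ^ j * X ^ (w - j + (k - j))) := by
    simp only [map_mul, map_pow, pow_add, mul_pow]
    simp; ring
  rw [e3, coeff_C_mul, coeff_mul_X_pow']
  by_cases hk : j ≤ k
  · split_ifs with hle
    · rw [coeff_one_add_X_pow]
      have : w - (w - j + (k - j)) = j - (k - j) := by omega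
      rw [this, Nat.choose_symm (by omega)]
      ring
    · rw [Nat.choose_eq_zero_of_lt (show j < k - j by omega)]
      simp
  · rw [Nat.choose_eq_zero_of_lt (show k < j by omega)]
    simp

section dual
variable {m : ℕ} {ω : ℂ}

/-- The algebra of Fourier coefficient functions of invariant kernels. -/
noncomputable def dualAlg (h : 1 + ω + ω ^ 2 = 0) (π : Equiv.Perm (Fin m → ZMod 3)) :
    Subalgebra ℂ ((Fin m → ZMod 3) → ℂ) where
  carrier := {c | Inv π (FF ω c)}
  mul_mem' := by
    intro c d hc hd x y
    have hI := Inv.conv hc hd x y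
    rw [FF_conv h, FF_conv h] at hI
    exact mul_left_cancel₀ (pow_ne_zero m (by norm_num)) hI
  add_mem' := by
    intro c d hc hd x y
    have e : ∀ z, FF ω (c + d) z = FF ω c z + FF ω d z := by
      intro z
      simp [FF, add_mul, Finset.sum_add_distrib]
    rw [e, e, hc x y, hd x y]
  algebraMap_mem' := by
    intro r x y
    have e : ∀ z : Fin m → ZMod 3, FF ω (algebraMap ℂ ((Fin m → ZMod 3) → ℂ) r) z
        = r * if z = 0 then 3 ^ m else 0 := by
      intro z
      rw [← sum_chr h, Finset.mul_sum]
      rfl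
    rw [e, e]
    simp only [sub_eq_zero, π.injective.eq_iff]

variable {h : 1 + ω + ω ^ 2 = 0} {π : Equiv.Perm (Fin m → ZMod 3)}

lemma conv_mem {c d : (Fin m → ZMod 3) → ℂ} (hc : c ∈ dualAlg h π) (hd : d ∈ dualAlg h π) :
    conv c d ∈ dualAlg h π := by
  intro x y
  rw [← FF_mul h, ← FF_mul h, hc x y, hd x y]

lemma ind_mem {w : ℕ} (hK : Inv π (Kr w)) : ind ℂ w ∈ dualAlg h π := by
  intro x y
  rw [← Kr_FF h, ← Kr_FF h, hK x y]

open Classical in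
lemma level_mem {c : (Fin m → ZMod 3) → ℂ} (hc : c ∈ dualAlg h π) (v : ℂ) :
    (fun x => if c x = v then (1 : ℂ) else 0) ∈ dualAlg h π := by
  have e : (fun x => if c x = v then (1 : ℂ) else 0)
      = ∏ u ∈ (Finset.univ.image c).erase v,
        (v - u)⁻¹ • (c - algebraMap ℂ ((Fin m → ZMod 3) → ℂ) u) := by
    funext x
    rw [Finset.prod_apply]
    split_ifs with hx
    · symm
      refine Finset.prod_eq_one fun u hu => ?_
      have : v - u ≠ 0 := sub_ne_zero.mpr (Finset.ne_of_mem_erase hu).symm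
      simp [hx, this]
    · symm
      refine Finset.prod_eq_zero (i := c x) ?_ ?_
      · exact Finset.mem_erase.mpr ⟨hx, Finset.mem_image_of_mem c (Finset.mem_univ x)⟩
      · simp
  rw [e]
  refine Subalgebra.prod_mem _ fun u _ => Subalgebra.smul_mem _ (Subalgebra.sub_mem _ hc ?_) _
  exact Subalgebra.algebraMap_mem _ _

end dual

section numeric

lemma AA_succ (n k w : ℕ) : AA (n + 1) k (w + 1) = AA n k (w + 1) + 2 * AA n k w := by
  unfold AA
  rw [Finset.sum_range_succ, Finset.sum_range_succ _ (w + 1), Finset.mul_sum]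
  have : ∀ j ∈ Finset.range (w + 1),
      k.choose j * j.choose (k - j) * 2 ^ (w + 1 - j) * (n + 1).choose (w + 1 - j)
      = k.choose j * j.choose (k - j) * 2 ^ (w + 1 - j) * n.choose (w + 1 - j)
        + 2 * (k.choose j * j.choose (k - j) * 2 ^ (w - j) * n.choose (w - j)) := by
    intro j hj
    have hj' : j ≤ w := by simpa [Nat.lt_succ_iff] using hj
    have e : w + 1 - j = (w - j) + 1 := by omega
    rw [e, Nat.choose_succ_succ, pow_succ]
    ring
  rw [Finset.sum_congr rfl this, Finset.sum_add_distrib]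
  simp
  ring

lemma AA_big {n k w : ℕ} (h : n + k < w) : AA n k w = 0 := by
  unfold AA
  refine Finset.sum_eq_zero fun j _ => ?_
  by_cases hj : k < j
  · simp [Nat.choose_eq_zero_of_lt hj]
  · rw [Nat.choose_eq_zero_of_lt (show n < w - j by omega)]; simp

lemma AA_w0 {n k : ℕ} (h : 0 < k) : AA n k 0 = 0 := by
  simp [AA, Nat.choose_eq_zero_of_lt h]

/-- The inequality between structure constants. -/
def Gd (n k : ℕ) : Prop :=
  ∀ w, 1 ≤ w → w ≤ n + k → AA n k w < 2 ^ (w - 1) * (n + k - 1).choose (w - 1)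

lemma Gd_succ {n k : ℕ} (hk : 0 < k) (h : Gd n k) : Gd (n + 1) k := by
  intro w hw1 hw2
  obtain ⟨w, rfl⟩ : ∃ v, w = v + 1 := ⟨w - 1, by omega⟩
  obtain ⟨N, hN⟩ : ∃ N, n + k = N + 1 := ⟨n + k - 1, by omega⟩
  have hN1 : n + 1 + k - 1 = N + 1 := by omega
  rw [AA_succ, hN1, Nat.add_sub_cancel]
  have h0 : n + k - 1 = N := by omega
  rcases w with _ | w
  · have := h 1 le_rfl (by omega)
    rw [AA_w0 hk]
    simpa using this
  · have a1 := h (w + 1) (by omega) (by omega)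
    have a2 : AA n k (w + 1 + 1) ≤ 2 ^ (w + 1) * N.choose (w + 1) := by
      by_cases hh : w + 2 ≤ n + k
      · have := h (w + 2) (by omega) hh
        rw [h0] at this
        exact this.le
      · rw [AA_big (by omega)]; exact Nat.zero_le _
    rw [h0, Nat.add_sub_cancel] at a1
    rw [Nat.choose_succ_succ, mul_add]
    have : 2 ^ (w + 1) * N.choose w = 2 * (2 ^ w * N.choose w) := by ring
    simp only [Nat.succ_eq_add_one]
    rw [this]
    omega

lemma Gd_of {n k : ℕ} (h : ∀ w < n + k + 1, 1 ≤ w →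
  AA n k w < 2 ^ (w - 1) * (n + k - 1).choose (w - 1)) : Gd n k :=
  fun w h1 h2 => h w (by omega) h1

lemma AA_zero (k w : ℕ) : AA 0 k w = k.choose w * w.choose (k - w) := by
  unfold AA
  rw [Finset.sum_eq_single w]
  · simp
  · intro j hj hne
    have : j < w := by
      have := Finset.mem_range.mp hj
      omega
    rw [Nat.choose_eq_zero_of_lt (show 0 < w - j by omega)]; simp
  · simp

lemma four_choose (w : ℕ) (hw : 10 ≤ w) : ∀ r, 4 * w.choose r < 2 ^ w := by
  induction w, hw using Nat.le_induction with
  | base =>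
    intro r
    by_cases h : r < 11
    · revert r; decide
    · rw [Nat.choose_eq_zero_of_lt (by omega)]; simp
  | succ w hw ih =>
    intro r
    rw [pow_succ]
    rcases r with _ | r
    · have := ih 0
      simp at this ⊢
      omega
    · have h1 := ih r
      have h2 := ih (r + 1)
      rw [Nat.choose_succ_succ]
      simp only [Nat.succ_eq_add_one]
      omega

lemma small_choose : ∀ w < 10, ∀ k < 19, 9 ≤ k → 1 ≤ w →
    2 * k * w.choose (k - w) < w * 2 ^ w ∨ k < w := by decide

lemma Gd_base {k : ℕ} (hk : 9 ≤ k) : Gd 0 k := by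
  intro w hw1 hw2
  rw [zero_add] at hw2 ⊢
  rw [AA_zero]
  have key : 2 * k * w.choose (k - w) < w * 2 ^ w := by
    by_cases hw : w < 10
    · by_cases hk' : k < 19
      · rcases small_choose w hw k hk' hk hw1 with h | h
        · exact h
        · omega
      · rw [Nat.choose_eq_zero_of_lt (by omega)]
        simp; omega
    · by_cases hk' : k ≤ 2 * w
      · have := four_choose w (by omega) (k - w)
        calc 2 * k * w.choose (k - w) ≤ 2 * (2 * w) * w.choose (k - w) := by gcongr
          _ = w * (4 * w.choose (k - w)) := by ring
          _ < w * 2 ^ w := by gcongr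
      · rw [Nat.choose_eq_zero_of_lt (by omega)]
        simp; omega
  obtain ⟨u, rfl⟩ : ∃ v, w = v + 1 := ⟨w - 1, by omega⟩
  obtain ⟨N, rfl⟩ : ∃ N, k = N + 1 := ⟨k - 1, by omega⟩
  simp only [Nat.add_sub_cancel]
  have hid : (N + 1) * N.choose u = (N + 1).choose (u + 1) * (u + 1) :=
    Nat.add_one_mul_choose_eq N u
  have hpos : 0 < N.choose u := Nat.choose_pos (by omega)
  have : 2 * (u + 1) * (N + 1) * ((N + 1).choose (u + 1) * (u + 1).choose (N + 1 - (u + 1)))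
      < 2 * (u + 1) * (N + 1) * (2 ^ u * N.choose u) := by
    calc _ = ((N + 1).choose (u + 1) * (u + 1)) *
          (2 * (N + 1) * (u + 1).choose (N + 1 - (u + 1))) := by ring
      _ < ((N + 1).choose (u + 1) * (u + 1)) * ((u + 1) * 2 ^ (u + 1)) := by
        rw [← hid]
        exact Nat.mul_lt_mul_of_pos_left key (by positivity)
      _ = _ := by rw [← hid]; ring
  exact Nat.lt_of_mul_lt_mul_left this

lemma Gd_all {n k : ℕ} (hk : 3 ≤ k) (hm : 9 ≤ n + k) : Gd n k := by
  by_cases h9 : 9 ≤ k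
  · clear hm
    induction n with
    | zero => exact Gd_base h9
    | succ n ih => exact Gd_succ (by omega) ih
  · have base : Gd (9 - k) k := by
      have : k = 3 ∨ k = 4 ∨ k = 5 ∨ k = 6 ∨ k = 7 ∨ k = 8 := by omega
      rcases this with rfl | rfl | rfl | rfl | rfl | rfl <;> exact Gd_of (by decide)
    obtain ⟨a, rfl⟩ : ∃ a, n = 9 - k + a := ⟨n - (9 - k), by omega⟩
    clear hm
    induction a with
    | zero => exact base
    | succ a ih => exact Gd_succ (by omega) ih

/-- Auxiliary bounded inequality for the small cases. -/
def Sg (m w : ℕ) : Prop :=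
  ∀ k < m + 1, 3 ≤ k → AA (m - k) k w < 2 ^ (w - 1) * (m - 1).choose (w - 1)

instance (m w : ℕ) : Decidable (Sg m w) :=
  inferInstanceAs (Decidable (∀ k < m + 1, 3 ≤ k →
    AA (m - k) k w < 2 ^ (w - 1) * (m - 1).choose (w - 1)))

lemma small_good : ∀ m < 9, ∀ w < 9, m < 4 ∨ m < w ∨ w < 1 ∨
    ((m, w) ∈ [(4, 2), (4, 3), (5, 3), (6, 4), (8, 5)] ∨ Sg m w) := by decide

lemma good_all {m w : ℕ} (hm : 4 ≤ m) (h1 : 1 ≤ w) (h2 : w ≤ m) :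
    (m = 4 ∧ w = 2) ∨ (m = 4 ∧ w = 3) ∨ (m = 5 ∧ w = 3) ∨ (m = 6 ∧ w = 4) ∨ (m = 8 ∧ w = 5) ∨
    ∀ k ≤ m, 3 ≤ k → AA (m - k) k w < 2 ^ (w - 1) * (m - 1).choose (w - 1) := by
  by_cases h9 : m < 9
  · rcases small_good m h9 w (by omega) with h | h | h | h | h
    · omega
    · omega
    · omega
    · simp at h
      tauto
    · exact Or.inr <| Or.inr <| Or.inr <| Or.inr <| Or.inr fun k hk => h k (by omega)
  · refine Or.inr <| Or.inr <| Or.inr <| Or.inr <| Or.inr fun k hk hk3 => ?_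
    have := Gd_all (n := m - k) hk3 (by omega) w h1 (by omega)
    rwa [Nat.sub_add_cancel hk] at this

lemma AA_k0 (m w : ℕ) : AA m 0 w = 2 ^ w * m.choose w := by
  unfold AA
  rw [Finset.sum_eq_single 0]
  · simp
  · intro j hj hne
    rw [Nat.choose_eq_zero_of_lt (show 0 < j by omega)]; simp
  · simp

lemma AA_k1 (n w : ℕ) : AA n 1 (w + 1) = 2 ^ w * n.choose w := by
  unfold AA
  rw [Finset.sum_eq_single 1]
  · simp
  · intro j hj hne
    rcases j with _ | _ | j
    · simp
    · omega
    · rw [Nat.choose_eq_zero_of_lt (show 1 < j + 1 + 1 by omega)]; simp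
  · simp

lemma AA_k2 (n w : ℕ) :
    AA n 2 (w + 2) = 2 * 2 ^ (w + 1) * n.choose (w + 1) + 2 ^ w * n.choose w := by
  unfold AA
  rw [Finset.sum_range_succ', Finset.sum_range_succ', Finset.sum_range_succ',
    Finset.sum_eq_zero]
  · simp; ring
  · intro j hj
    rw [Nat.choose_eq_zero_of_lt (show 2 < j + 1 + 1 + 1 by omega)]; simp

lemma AA_12 {m w : ℕ} (hm : 4 ≤ m) (h1 : 1 ≤ w) (h2 : w ≤ m)
    (h : AA (m - 2) 2 w = AA (m - 1) 1 w) : 3 * w = 2 * m + 1 := by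
  obtain ⟨n, rfl⟩ : ∃ n, m = n + 2 := ⟨m - 2, by omega⟩
  have e : n + 2 - 1 = n + 1 := by omega
  rw [e, Nat.add_sub_cancel] at h
  obtain ⟨u, rfl⟩ : ∃ n, w = n + 1 := ⟨w - 1, by omega⟩
  rcases u with _ | u
  · simp [AA, Finset.sum_range_succ] at h
  · rw [AA_k1, AA_k2, Nat.choose_succ_succ] at h
    have h3 : 2 * n.choose (u + 1) = n.choose u := by
      have : 2 ^ u * (2 * n.choose (u + 1)) = 2 ^ u * n.choose u := by
        simp only [pow_succ, Nat.succ_eq_add_one] at h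
        linarith
      exact Nat.eq_of_mul_eq_mul_left (by positivity) this
    have h4 := Nat.choose_succ_right_eq n u
    have hpos : 0 < n.choose u := Nat.choose_pos (by omega)
    have h5 : n.choose u * (u + 1) = n.choose u * (2 * (n - u)) := by
      rw [mul_left_comm, ← h4, ← h3]; ring
    have := Nat.eq_of_mul_eq_mul_left hpos h5
    omega

lemma AA_01 {m w : ℕ} (hm : 4 ≤ m) (h1 : 1 ≤ w) (h2 : w ≤ m) :
    AA m 0 w ≠ AA (m - 1) 1 w := by
  obtain ⟨u, rfl⟩ : ∃ n, w = n + 1 := ⟨w - 1, by omega⟩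
  obtain ⟨n, rfl⟩ : ∃ n, m = n + 1 := ⟨m - 1, by omega⟩
  rw [AA_k0, Nat.add_sub_cancel, AA_k1, Nat.choose_succ_succ, pow_succ]
  have hpos : 0 < 2 ^ u * n.choose u := Nat.mul_pos (by positivity) (Nat.choose_pos (by omega))
  simp only [Nat.succ_eq_add_one]
  nlinarith [Nat.zero_le (2 ^ u * n.choose (u + 1))]

end numeric

section main
variable {m : ℕ} {π : Equiv.Perm (Fin m → ZMod 3)}

lemma conv_val (w : ℕ) (x : Fin m → ZMod 3) : conv (ind ℂ w) (ind ℂ w) x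
    = ((AA (m - hammingNorm x) (hammingNorm x) w : ℕ) : ℂ) := by
  have := count_eq w x
  have h2 : ((conv (ind ℤ w) (ind ℤ w) x : ℤ) : ℂ) = conv (ind ℂ w) (ind ℂ w) x := by
    simp [conv, ind]
  rw [← h2, this]
  simp

lemma good_case {w : ℕ} (hm : 4 ≤ m) (h1 : 1 ≤ w) (h2 : w ≤ m)
    (hg : ∀ k ≤ m, 3 ≤ k → AA (m - k) k w < 2 ^ (w - 1) * (m - 1).choose (w - 1))
    (hK : Inv π (Kr w)) (x y : Fin m → ZMod 3) :
    hammingNorm (π x - π y) = hammingNorm (x - y) := by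
  classical
  obtain ⟨ω, hω⟩ := exists_omega
  have hp := conv_mem (ind_mem (h := hω) hK) (ind_mem (h := hω) hK)
  have hL := level_mem hp ((AA (m - 1) 1 w : ℕ) : ℂ)
  have hA1 : AA (m - 1) 1 w = 2 ^ (w - 1) * (m - 1).choose (w - 1) := by
    obtain ⟨u, rfl⟩ : ∃ n, w = n + 1 := ⟨w - 1, by omega⟩
    rw [AA_k1]; simp
  simp only [conv_val, Nat.cast_inj] at hL
  have hs := hn_le (π x - π y)
  have ht := hn_le (x - y)
  have h0 := AA_01 hm h1 h2
  by_cases h12 : AA (m - 2) 2 w = AA (m - 1) 1 w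
  · have e : (fun x : Fin m → ZMod 3 => if AA (m - hammingNorm x) (hammingNorm x) w
        = AA (m - 1) 1 w then (1 : ℂ) else 0) = ind ℂ 1 + ind ℂ 2 := by
      funext z
      have hz := hn_le z
      simp only [ind, Pi.add_apply]
      generalize hammingNorm z = k at hz
      rcases k with _ | _ | _ | k
      · simp [h0]
      · simp
      · simp [h12]
      · have := hg (k + 1 + 1 + 1) hz (by omega)
        rw [← hA1] at this
        simp [this.ne]
    rw [e] at hL
    have e2 : ∀ z : Fin m → ZMod 3, FF ω (ind ℂ 1 + ind ℂ 2) z = ((Kr 1 z + Kr 2 z : ℤ) : ℂ) := by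
      intro z
      push_cast
      rw [Kr_FF hω, Kr_FF hω]
      simp [FF, add_mul, Finset.sum_add_distrib]
    have e3 := hL x y
    rw [e2, e2] at e3
    have e4 : Kr 1 (π x - π y) + Kr 2 (π x - π y) = Kr 1 (x - y) + Kr 2 (x - y) := by
      exact_mod_cast e3
    simp only [Kr_kv] at e4
    generalize hammingNorm (π x - π y) = s at *
    generalize hammingNorm (x - y) = t at *
    have k1 := kv_two hs
    have k2 := kv_two ht
    rw [kv_one hs, kv_one ht] at e4
    have e5 : ((s : ℤ) - t) * (9 * (s + t) - 12 * m - 3) = 0 := by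
      linear_combination 2 * e4 - k1 + k2
    have h3w := AA_12 hm h1 h2 h12
    rcases mul_eq_zero.mp e5 with h | h
    · omega
    · omega
  · have e : (fun x : Fin m → ZMod 3 => if AA (m - hammingNorm x) (hammingNorm x) w
        = AA (m - 1) 1 w then (1 : ℂ) else 0) = ind ℂ 1 := by
      funext z
      have hz := hn_le z
      simp only [ind]
      generalize hammingNorm z = k at hz
      rcases k with _ | _ | _ | k
      · simp [h0]
      · simp
      · simp [h12]
      · have := hg (k + 1 + 1 + 1) hz (by omega)
        rw [← hA1] at this
        simp [this.ne]
    rw [e] at hL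
    have e3 := hL x y
    rw [← Kr_FF hω, ← Kr_FF hω] at e3
    have e4 : Kr 1 (π x - π y) = Kr 1 (x - y) := by exact_mod_cast e3
    simp only [Kr_kv] at e4
    rw [kv_one hs, kv_one ht] at e4
    omega

end main

section fourtwo

/-- Quadruples over `ZMod 3`. -/
abbrev Qd := ZMod 3 × ZMod 3 × ZMod 3 × ZMod 3

/-- All quadruples. -/
def VV : List Qd :=
  let l : List (ZMod 3) := [0, 1, 2]
  l ×ˢ (l ×ˢ (l ×ˢ l))

lemma mem_VV : ∀ a b c d : ZMod 3, (a, b, c, d) ∈ VV := by decide +kernel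

/-- Norm form. -/
def qq (x y : Qd) : ZMod 3 :=
  (x.1 - y.1) * (x.1 - y.1) + (x.2.1 - y.2.1) * (x.2.1 - y.2.1)
    + (x.2.2.1 - y.2.2.1) * (x.2.2.1 - y.2.2.1) + (x.2.2.2 - y.2.2.2) * (x.2.2.2 - y.2.2.2)

/-- Boolean unit distance relation. -/
def rr (x y : Qd) : Bool := decide (qq x y = 1)

/-- Boolean relation: distinct and not at unit distance. -/
def nn (x y : Qd) : Bool := (!rr x y) && decide (x ≠ y)

lemma no_triple : VV.all (fun x => !decide (qq x 0 = 2) || VV.all (fun a =>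
    !(rr 0 a && rr x a) || VV.all (fun b => !(rr 0 b && (rr x b && nn a b)) ||
      VV.all (fun c => !(rr 0 c && (rr x c && (nn a c && nn b c))))))) = true := by
  decide +kernel

lemma yes_triple : VV.all (fun x => !(decide (qq x 0 = 0) && decide (x ≠ 0)) || VV.any (fun a =>
    (rr 0 a && rr x a) && VV.any (fun b => (rr 0 b && (rr x b && nn a b)) &&
      VV.any (fun c => (rr 0 c && (rr x c && (nn a c && nn b c))))))) = true := by
  decide +kernel

/-- Vector to quadruple. -/
def toQ (x : Fin 4 → ZMod 3) : Qd := (x 0, x 1, x 2, x 3)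

/-- Quadruple to vector. -/
def ofQ (x : Qd) : Fin 4 → ZMod 3 := ![x.1, x.2.1, x.2.2.1, x.2.2.2]

lemma toQ_ofQ (x : Qd) : toQ (ofQ x) = x := rfl

lemma toQ_inj {x y : Fin 4 → ZMod 3} : toQ x = toQ y ↔ x = y := by
  constructor
  · intro h
    simp only [toQ, Prod.mk.injEq] at h
    funext k
    fin_cases k
    · exact h.1
    · exact h.2.1
    · exact h.2.2.1
    · exact h.2.2.2
  · rintro rfl; rfl

lemma toQ_mem (x : Fin 4 → ZMod 3) : toQ x ∈ VV := mem_VV _ _ _ _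

lemma qq_toQ (x y : Fin 4 → ZMod 3) : qq (toQ x) (toQ y) = (hammingNorm (x - y) : ZMod 3) := by
  rw [hn_mod]
  simp [qq, toQ, dotProduct, Fin.sum_univ_four]

lemma toQ_zero : toQ 0 = 0 := rfl

/-- Unit distance. -/
def R1 (x y : Fin 4 → ZMod 3) : Prop := (hammingNorm (x - y) : ZMod 3) = 1

lemma rr_iff (x y : Fin 4 → ZMod 3) : rr (toQ x) (toQ y) = true ↔ R1 x y := by
  simp [rr, qq_toQ, R1]

lemma nn_iff (x y : Fin 4 → ZMod 3) : nn (toQ x) (toQ y) = true ↔ (¬ R1 x y ∧ x ≠ y) := by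
  unfold nn
  rw [Bool.and_eq_true, Bool.not_eq_true', ← Bool.not_eq_true, rr_iff, decide_eq_true_iff,
    Ne, toQ_inj]

/-- Existence of a coclique of size three among common neighbours. -/
def TT (x y : Fin 4 → ZMod 3) : Prop := ∃ a b c, R1 y a ∧ R1 x a ∧ R1 y b ∧ R1 x b ∧
  (¬ R1 a b ∧ a ≠ b) ∧ R1 y c ∧ R1 x c ∧ (¬ R1 a c ∧ a ≠ c) ∧ (¬ R1 b c ∧ b ≠ c)

lemma R1_sub (x y z : Fin 4 → ZMod 3) : R1 (x - z) (y - z) ↔ R1 x y := by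
  simp [R1]

lemma TT_sub (x y : Fin 4 → ZMod 3) : TT x y ↔ TT (x - y) 0 := by
  constructor
  · rintro ⟨a, b, c, h⟩
    refine ⟨a - y, b - y, c - y, ?_⟩
    have e : (0 : Fin 4 → ZMod 3) = y - y := by simp
    rw [e]
    simpa only [R1_sub, ne_eq, sub_left_inj] using h
  · rintro ⟨a, b, c, h⟩
    refine ⟨a + y, b + y, c + y, ?_⟩
    have key : ∀ u v : Fin 4 → ZMod 3, R1 u (v + y) ↔ R1 (u - y) v := by
      intro u v
      rw [← R1_sub u (v + y) y, add_sub_cancel_right]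
    simpa only [key, add_sub_cancel_right, sub_self, ne_eq, add_left_inj] using h

lemma TT_two (x : Fin 4 → ZMod 3) (h : (hammingNorm x : ZMod 3) = 2) : ¬ TT x 0 := by
  rintro ⟨a, b, c, h1, h2, h3, h4, h5, h6, h7, h8, h9⟩
  have := no_triple
  rw [List.all_eq_true] at this
  have := this _ (toQ_mem x)
  have e : qq (toQ x) 0 = 2 := by rw [← toQ_zero, qq_toQ, sub_zero, h]
  simp only [e, decide_true, Bool.not_true, Bool.false_or, List.all_eq_true] at this
  have := this _ (toQ_mem a)
  rw [← toQ_zero] at this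
  simp only [(rr_iff _ _).mpr h1, (rr_iff _ _).mpr h2, Bool.and_true, Bool.not_true,
    Bool.false_or, List.all_eq_true] at this
  have := this _ (toQ_mem b)
  simp only [(rr_iff _ _).mpr h3, (rr_iff _ _).mpr h4, (nn_iff _ _).mpr h5, Bool.and_true,
    Bool.not_true, Bool.false_or, List.all_eq_true] at this
  have := this _ (toQ_mem c)
  simp [(rr_iff _ _).mpr h6, (rr_iff _ _).mpr h7, (nn_iff _ _).mpr h8, (nn_iff _ _).mpr h9] at this

lemma TT_zero (x : Fin 4 → ZMod 3) (h : (hammingNorm x : ZMod 3) = 0) (hx : x ≠ 0) : TT x 0 := by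
  have := yes_triple
  rw [List.all_eq_true] at this
  have := this _ (toQ_mem x)
  have e : qq (toQ x) 0 = 0 := by rw [← toQ_zero, qq_toQ, sub_zero, h]
  have e2 : toQ x ≠ 0 := by rw [← toQ_zero, Ne, toQ_inj]; exact hx
  simp only [e, e2, decide_true, Bool.and_true, ne_eq, not_false_eq_true, Bool.not_true,
    Bool.false_or, List.any_eq_true, Bool.and_eq_true] at this
  obtain ⟨a, -, ⟨h1, h2⟩, b, -, ⟨h3, h4, h5⟩, c, -, h6, h7, h8, h9⟩ := this
  rw [← toQ_ofQ a] at *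
  rw [← toQ_ofQ b] at *
  rw [← toQ_ofQ c] at *
  rw [← toQ_zero] at *
  rw [rr_iff] at *
  rw [nn_iff] at *
  exact ⟨_, _, _, h1, h2, h3, h4, h5, h6, h7, h8, h9⟩

lemma kv42 : ∀ t : ℕ, t < 5 → ((t : ZMod 3) = 1 ↔ kv 4 2 t = 6) := by decide +kernel

lemma case42 {π : Equiv.Perm (Fin 4 → ZMod 3)} (hK : Inv π (Kr 2)) (x y : Fin 4 → ZMod 3) :
    (hammingNorm (π x - π y) : ZMod 3) = hammingNorm (x - y) := by
  have hR : ∀ x y, R1 (π x) (π y) ↔ R1 x y := by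
    intro x y
    unfold R1
    have := hK x y
    rw [Kr_kv, Kr_kv] at this
    have h1 := hn_le (π x - π y)
    have h2 := hn_le (x - y)
    rw [kv42 _ (by omega), kv42 _ (by omega), this]
  have hT : ∀ x y, TT x y → TT (π x) (π y) := by
    rintro x y ⟨a, b, c, h⟩
    exact ⟨π a, π b, π c, by simpa only [hR, ne_eq, EmbeddingLike.apply_eq_iff_eq] using h⟩
  have hT' : ∀ x y, TT (π x) (π y) → TT x y := by
    rintro x y ⟨a, b, c, h⟩
    obtain ⟨a, rfl⟩ := π.surjective a
    obtain ⟨b, rfl⟩ := π.surjective b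
    obtain ⟨c, rfl⟩ := π.surjective c
    exact ⟨a, b, c, by simpa only [hR, ne_eq, EmbeddingLike.apply_eq_iff_eq] using h⟩
  by_cases hxy : x = y
  · subst hxy; simp
  have hxy' : π x ≠ π y := fun h => hxy (π.injective h)
  have hr := hR x y
  unfold R1 at hr
  have t0 : (hammingNorm (x - y) : ZMod 3) = 0 → TT x y := fun h => by
    rw [TT_sub]; exact TT_zero _ h (sub_ne_zero.mpr hxy)
  have t0' : (hammingNorm (π x - π y) : ZMod 3) = 0 → TT (π x) (π y) := fun h => by
    rw [TT_sub]; exact TT_zero _ h (sub_ne_zero.mpr hxy')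
  have t2 : (hammingNorm (x - y) : ZMod 3) = 2 → ¬ TT x y := fun h => by
    rw [TT_sub]; exact TT_two _ h
  have t2' : (hammingNorm (π x - π y) : ZMod 3) = 2 → ¬ TT (π x) (π y) := fun h => by
    rw [TT_sub]; exact TT_two _ h
  have d : ∀ a : ZMod 3, a = 0 ∨ a = 1 ∨ a = 2 := by decide
  rcases d (hammingNorm (x - y) : ZMod 3) with h | h | h
  · rcases d (hammingNorm (π x - π y) : ZMod 3) with h' | h' | h'
    · rw [h, h']
    · rw [hr.mp h', h']
    · exact absurd (hT _ _ (t0 h)) (t2' h')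
  · rw [hr.mpr h, h]
  · rcases d (hammingNorm (π x - π y) : ZMod 3) with h' | h' | h'
    · exact absurd (hT' _ _ (t0' h')) (t2 h)
    · rw [hr.mp h', h']
    · rw [h, h']

end fourtwo

lemma kv53 : ∀ s < 6, ∀ t < 6, kv 5 3 s = kv 5 3 t → (s : ZMod 3) = t := by decide +kernel
lemma kv64 : ∀ s < 7, ∀ t < 7, kv 6 4 s = kv 6 4 t → (s : ZMod 3) = t := by decide +kernel
lemma kv85 : ∀ s < 9, ∀ t < 9, kv 8 5 s = kv 8 5 t → (s : ZMod 3) = t := by decide +kernel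

lemma sub_part {m w : ℕ} (hm : 4 ≤ m) (hw1 : 1 ≤ w) (hwm : w ≤ m)
    (h : ¬ (3 ∣ w) ∨ Odd m) (π : Equiv.Perm (Fin m → ZMod 3)) (hK : Inv π (Kr w)) :
    π ∈ aoSet m := by
  apply ao_of_mod
  rcases good_all hm hw1 hwm with ⟨rfl, rfl⟩ | ⟨rfl, rfl⟩ | ⟨rfl, rfl⟩ | ⟨rfl, rfl⟩ | ⟨rfl, rfl⟩ | hg
  · exact case42 hK
  · exfalso; revert h; decide
  · intro x y
    have := hK x y
    rw [Kr_kv, Kr_kv] at this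
    exact kv53 _ (Nat.lt_succ_of_le (hn_le _)) _ (Nat.lt_succ_of_le (hn_le _)) this
  · intro x y
    have := hK x y
    rw [Kr_kv, Kr_kv] at this
    exact kv64 _ (Nat.lt_succ_of_le (hn_le _)) _ (Nat.lt_succ_of_le (hn_le _)) this
  · intro x y
    have := hK x y
    rw [Kr_kv, Kr_kv] at this
    exact kv85 _ (Nat.lt_succ_of_le (hn_le _)) _ (Nat.lt_succ_of_le (hn_le _)) this
  · intro x y
    rw [good_case hm hw1 hwm hg hK x y]

lemma pat42 : ∀ s : ℕ, s < 5 → ∀ t : ℕ, t < 5 → (s : ZMod 3) = t → (s = 0 ↔ t = 0) →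
    (s.choose 2 : ZMod 2) = t.choose 2 := by decide +kernel

lemma pat53 : ∀ s : ℕ, s < 6 → ∀ t : ℕ, t < 6 → (s : ZMod 3) = t → (s = 0 ↔ t = 0) →
    (s.choose 3 : ZMod 2) = t.choose 3 := by decide +kernel

lemma hn_zero_iff {m : ℕ} (π : Equiv.Perm (Fin m → ZMod 3)) (x y : Fin m → ZMod 3) :
    hammingNorm (π x - π y) = 0 ↔ hammingNorm (x - y) = 0 := by
  rw [hammingNorm_eq_zero, hammingNorm_eq_zero, sub_eq_zero, sub_eq_zero, π.injective.eq_iff]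

lemma exists_wt (n s : ℕ) (h : s ≤ n) : ∃ u : Fin n → ZMod 3, hammingNorm u = s := by
  refine ⟨fun k => if k.val < s then 1 else 0, ?_⟩
  have e : hammingNorm (fun k : Fin n => if k.val < s then (1 : ZMod 3) else 0)
      = (Finset.univ.filter fun k : Fin n => k.val < s).card := by
    unfold hammingNorm
    congr 1
    ext k
    simp
  rw [e, Fin.card_filter_val_lt]
  omega

/-- The reflection vector. -/
def vv (n : ℕ) : Fin (n + 4) → ZMod 3 :=
  vecCons 1 (vecCons 1 (vecCons 1 (vecCons 1 (fun _ : Fin n => 0))))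

lemma vv_dot (n : ℕ) : vv n ⬝ᵥ vv n = 1 := by
  simp only [vv, cons_dotProduct_cons]
  simp [dotProduct]
  decide

/-- The reflection. -/
def rf (n : ℕ) (x : Fin (n + 4) → ZMod 3) : Fin (n + 4) → ZMod 3 := x + (vv n ⬝ᵥ x) • vv n

lemma rf_invol (n : ℕ) : Function.Involutive (rf n) := by
  intro x
  unfold rf
  simp only [dotProduct_add, dotProduct_smul, vv_dot, smul_eq_mul]
  funext k
  simp only [Pi.add_apply, Pi.smul_apply, smul_eq_mul]
  have c3 : (3 : ZMod 3) = 0 := by decide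
  linear_combination (vv n ⬝ᵥ x) * vv n k * c3

lemma rf_mem (n : ℕ) : (rf_invol n).toPerm ∈ aoSet (n + 4) := by
  have c3 : (3 : ZMod 3) = 0 := by decide
  have hA : (1 + vecMulVec (vv n) (vv n))ᵀ * (1 + vecMulVec (vv n) (vv n)) = 1 := by
    rw [transpose_add, transpose_one, transpose_vecMulVec, add_mul, mul_add, mul_add,
      vecMulVec_mul_vecMulVec, vv_dot]
    simp only [one_mul, mul_one, one_smul]
    ext i j
    simp only [Matrix.add_apply]
    linear_combination (vecMulVec (vv n) (vv n) i j) * c3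
  refine ⟨1 + vecMulVec (vv n) (vv n), 0, ?_, hA, fun x => ?_⟩
  · exact ⟨⟨_, _, mul_eq_one_comm.mp hA, hA⟩, rfl⟩
  · simp [rf, add_mulVec, vecMulVec_mulVec]

lemma hn_cons {n : ℕ} (a : ZMod 3) (u : Fin n → ZMod 3) :
    hammingNorm (vecCons a u) = (if a = 0 then 0 else 1) + hammingNorm u := by
  rw [hn_eq, hn_eq, Fin.sum_univ_succ]
  rfl

lemma shift_of_eq {n w : ℕ} (h : ∀ f ∈ aoSet (n + 4), Inv f (fun x => (Kr w x : ZMod 2)))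
    (s : ℕ) (hs : s ≤ n) : ((s + 1).choose w : ZMod 2) = (s + 4).choose w := by
  obtain ⟨u, hu⟩ := exists_wt n s hs
  set x : Fin (n + 4) → ZMod 3 := vecCons 1 (vecCons 0 (vecCons 0 (vecCons 0 u))) with hx
  have h1 : hammingNorm x = s + 1 := by
    simp only [hx, hn_cons, hu]
    simp; omega
  have hd : vv n ⬝ᵥ x = 1 := by
    simp only [hx, vv, cons_dotProduct_cons]
    simp [dotProduct]
  have h2 : rf n x = vecCons 2 (vecCons 1 (vecCons 1 (vecCons 1 u))) := by
    unfold rf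
    rw [hd, one_smul]
    simp only [hx, vv, cons_add_cons]
    have e1 : (1 + 1 : ZMod 3) = 2 := by decide
    have e2 : u + (fun _ : Fin n => (0 : ZMod 3)) = u := by funext k; simp
    rw [e1, e2, zero_add]
  have h3 : hammingNorm (rf n x) = s + 4 := by
    rw [h2]
    simp only [hn_cons, hu]
    have n2 : (2 : ZMod 3) ≠ 0 := by decide
    simp [n2]; omega
  have := h _ (rf_mem n) x 0
  simp only [Kr_mod_two, Function.Involutive.coe_toPerm] at this
  have r0 : rf n 0 = 0 := by simp [rf]
  rw [r0, sub_zero, sub_zero, h1, h3] at this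
  exact this.symm

lemma eq_forward {m w : ℕ} (hm : 4 ≤ m) (hw1 : 1 ≤ w) (hwm : w ≤ m)
    (h : ¬ (3 ∣ w) ∨ Odd m)
    (hI : ∀ f ∈ aoSet m, Inv f (fun x => (Kr w x : ZMod 2))) :
    (m = 4 ∧ w = 2) ∨ (m = 5 ∧ w = 3) := by
  obtain ⟨n, rfl⟩ : ∃ n, m = n + 4 := ⟨m - 4, by omega⟩
  have key := shift_of_eq hI
  by_cases h4 : 4 ≤ w
  · exfalso
    have := key (w - 4) (by omega)
    rw [show w - 4 + 4 = w by omega, Nat.choose_self,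
      Nat.choose_eq_zero_of_lt (show w - 4 + 1 < w by omega)] at this
    revert this; decide
  · have : w = 1 ∨ w = 2 ∨ w = 3 := by omega
    rcases this with rfl | rfl | rfl
    · exfalso
      have := key 0 (by omega)
      revert this; decide
    · by_cases hn : n = 0
      · left; omega
      · exfalso
        have := key 1 (by omega)
        revert this; decide
    · by_cases hn : n ≤ 1
      · right
        have : n = 0 ∨ n = 1 := by omega
        rcases this with rfl | rfl
        · exfalso; revert h; decide
        · simp
      · exfalso
        have := key 2 (by omega)
        revert this; decide
end AbCode
/-- For `m ≥ 4` and `1 ≤ w ≤ m` with `3 ∤ w` or `m` odd, the automorphism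
group of `C(3, m, {w})` is a subgroup of `AO(m, 3) = Z_3^m ⋊ O(m, 3)`, with equality iff
`(m, w) = (4, 2)` or `(m, w) = (5, 3)`. -/
theorem statement3 (m w : ℕ) (hm : 4 ≤ m) (hw1 : 1 ≤ w) (hwm : w ≤ m)
    (h : ¬ (3 ∣ w) ∨ Odd m)
    (K : Type) [Field K] [CharP K 2] (α : K) (hα : IsPrimitiveRoot α 3) :
    codeAut (abelianCode 3 m {w} K α) ⊆ aoSet m ∧
    (codeAut (abelianCode 3 m {w} K α) = aoSet m ↔ (m = 4 ∧ w = 2) ∨ (m = 5 ∧ w = 3)) := by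
  have sub : codeAut (abelianCode 3 m {w} K α) ⊆ aoSet m := by
    intro π hπ
    exact AbCode.sub_part hm hw1 hwm h π (AbCode.lift_inv ((AbCode.aut_iff hα π).mp hπ))
  refine ⟨sub, fun he => ?_, fun hc => Set.Subset.antisymm sub fun f hf => ?_⟩
  · refine AbCode.eq_forward hm hw1 hwm h fun f hf => ?_
    rw [← he] at hf
    exact (AbCode.aut_iff hα f).mp hf
  · refine (AbCode.aut_iff hα f).mpr fun x y => ?_
    have h1 := AbCode.mod_of_ao hf x y
    have h2 := AbCode.hn_zero_iff f x y
    have h3 := AbCode.hn_le (f x - f y)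
    have h4 := AbCode.hn_le (x - y)
    simp only [AbCode.Kr_mod_two]
    rcases hc with ⟨rfl, rfl⟩ | ⟨rfl, rfl⟩
    · exact AbCode.pat42 _ (by omega) _ (by omega) h1 h2
    · exact AbCode.pat53 _ (by omega) _ (by omega) h1 h2
end

section
/- Let m ≥ 4 and 1 ≤ w ≤ m. If 3 divides w and m is even, then the automorphism group of the abelian code C(3,m,{w}) is a subgroup of AÕ(m,3) = Z_3^m ⋊ Õ(m,3) (acting on F_3^m by x ↦ Ax + b with A ∈ Õ(m,3)), and equality holds if and only if (m,w) = (4,3). -/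
open Matrix

/-- The group `AÕ(m, 3) = Z_3^m ⋊ Õ(m, 3)`, realized as the set of permutations of
`F_3^m` of the form `x ↦ A x + b` with `A` invertible and `AᵀA = λI` for some `λ ≠ 0`. -/
def aoTildeSet (m : ℕ) : Set (Equiv.Perm (Fin m → ZMod 3)) :=
  { f | ∃ (A : Matrix (Fin m) (Fin m) (ZMod 3)) (b : Fin m → ZMod 3) (lam : ZMod 3),
      IsUnit A ∧ lam ≠ 0 ∧ Aᵀ * A = lam • 1 ∧ ∀ x, f x = A.mulVec x + b }


def chi3 {F : Type*} [Field F] (ζ : F) (a : ZMod 3) : F := ζ ^ a.val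

section PartA
variable {F : Type*} [Field F] {ζ : F} {m : ℕ}

lemma chi3_zero : chi3 ζ 0 = 1 := by simp [chi3]

lemma chi3_one : chi3 ζ 1 = ζ := by
  have : (1 : ZMod 3).val = 1 := rfl
  simp [chi3, this]

lemma chi3_two : chi3 ζ 2 = ζ ^ 2 := by
  have : (2 : ZMod 3).val = 2 := rfl
  simp [chi3, this]

lemma chi3_add (h : IsPrimitiveRoot ζ 3) (a b : ZMod 3) :
    chi3 ζ (a + b) = chi3 ζ a * chi3 ζ b := by
  unfold chi3
  rw [ZMod.val_add, ← pow_add]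
  exact (pow_eq_pow_mod _ h.pow_eq_one).symm

lemma chi3_sum (h : IsPrimitiveRoot ζ 3) {ι : Type*} (s : Finset ι) (g : ι → ZMod 3) :
    chi3 ζ (∑ i ∈ s, g i) = ∏ i ∈ s, chi3 ζ (g i) := by
  classical
  induction s using Finset.induction_on with
  | empty => simp [chi3_zero]
  | insert a s ha ih => rw [Finset.sum_insert ha, Finset.prod_insert ha, chi3_add h, ih]

lemma zeta_rel (h : IsPrimitiveRoot ζ 3) : 1 + ζ + ζ ^ 2 = 0 := by
  have := h.geom_sum_eq_zero (by norm_num)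
  simpa [Finset.sum_range_succ] using this

lemma chi3_ne_one (h : IsPrimitiveRoot ζ 3) {a : ZMod 3} (ha : a ≠ 0) : chi3 ζ a ≠ 1 := by
  unfold chi3
  apply h.pow_ne_one_of_pos_of_lt
  · simpa using ha
  · exact ZMod.val_lt a

lemma chi3_orth (h : IsPrimitiveRoot ζ 3) (x : Fin m → ZMod 3) :
    ∑ j : Fin m → ZMod 3, chi3 ζ (x ⬝ᵥ j) = if x = 0 then 3 ^ m else 0 := by
  split_ifs with hx
  · subst hx
    simp [chi3_zero]
  · obtain ⟨i, hi⟩ : ∃ i, x i ≠ 0 := by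
      by_contra hcon
      push Not at hcon
      exact hx (funext hcon)
    have h1 : ∑ j : Fin m → ZMod 3, chi3 ζ (x ⬝ᵥ j)
        = chi3 ζ (x i) * ∑ j : Fin m → ZMod 3, chi3 ζ (x ⬝ᵥ j) := by
      rw [Finset.mul_sum]
      rw [← Equiv.sum_comp (Equiv.addLeft (Pi.single i (1 : ZMod 3)))]
      refine Finset.sum_congr rfl fun j _ => ?_
      simp [dotProduct_add, chi3_add h]
    have h2 : (1 - chi3 ζ (x i)) * ∑ j : Fin m → ZMod 3, chi3 ζ (x ⬝ᵥ j) = 0 := by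
      linear_combination h1
    rcases mul_eq_zero.1 h2 with h3 | h3
    · exact absurd (sub_eq_zero.1 h3).symm (chi3_ne_one h hi)
    · exact h3

def nnS (S : Finset (Fin m → ZMod 3)) (j : Fin m → ZMod 3) : ℤ :=
  ((S.filter fun x => x ⬝ᵥ j = 0).card : ℤ) - ((S.filter fun x => x ⬝ᵥ j = 1).card : ℤ)

lemma chi3_eq (a : ZMod 3) :
    chi3 ζ a = (if a = 0 then 1 else 0) + (if a = 1 then ζ else 0) + (if a = 2 then ζ ^ 2 else 0) := by
  have : a = 0 ∨ a = 1 ∨ a = 2 := by revert a; decide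
  rcases this with rfl | rfl | rfl
  · simp [chi3_zero, show (0 : ZMod 3) ≠ 2 by decide]
  · simp [chi3_one, show (1 : ZMod 3) ≠ 2 by decide]
  · simp [chi3_two, show (2 : ZMod 3) ≠ 0 by decide, show (2 : ZMod 3) ≠ 1 by decide]

lemma sum_chi3_eq_nnS (h : IsPrimitiveRoot ζ 3) (S : Finset (Fin m → ZMod 3))
    (hS : ∀ x ∈ S, -x ∈ S) (j : Fin m → ZMod 3) :
    ∑ x ∈ S, chi3 ζ (x ⬝ᵥ j) = (nnS S j : F) := by
  have h12 : (S.filter fun x => x ⬝ᵥ j = 1).card = (S.filter fun x => x ⬝ᵥ j = 2).card := by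
    refine Finset.card_bij' (fun x _ => -x) (fun x _ => -x) ?_ ?_ ?_ ?_
    · intro x hx
      simp only [Finset.mem_filter] at hx ⊢
      refine ⟨hS x hx.1, ?_⟩
      rw [neg_dotProduct, hx.2]; decide
    · intro x hx
      simp only [Finset.mem_filter] at hx ⊢
      refine ⟨hS x hx.1, ?_⟩
      rw [neg_dotProduct, hx.2]; decide
    · simp
    · simp
  simp_rw [chi3_eq, Finset.sum_add_distrib, ← Finset.sum_filter, Finset.sum_const, nsmul_eq_mul]
  rw [← h12]
  unfold nnS
  push_cast
  linear_combination ((S.filter fun x => x ⬝ᵥ j = 1).card : F) * zeta_rel h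

end PartA


def Sw (m w : ℕ) : Finset (Fin m → ZMod 3) := Finset.univ.filter fun x => hammingNorm x = w

lemma mem_Sw {m w : ℕ} {x : Fin m → ZMod 3} : x ∈ Sw m w ↔ hammingNorm x = w := by simp [Sw]

lemma hammingNorm_neg' {m : ℕ} (x : Fin m → ZMod 3) : hammingNorm (-x) = hammingNorm x := by
  simp [hammingNorm]

lemma Sw_neg {m w : ℕ} : ∀ x ∈ Sw m w, -x ∈ Sw m w := by
  intro x hx
  rw [mem_Sw] at hx ⊢
  rw [hammingNorm_neg', hx]

/-- the reproducing kernel of the code -/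
def eker (m w : ℕ) (x : Fin m → ZMod 3) : ZMod 2 := (nnS (Sw m w) x : ZMod 2)

def Dset (m w : ℕ) : Finset (Fin m → ZMod 3) := Finset.univ.filter fun x => eker m w x = 1

section PartB
variable {m w : ℕ} {K : Type} [Field K] [CharP K 2] {α : K}

def phi2 (K : Type) [Field K] [CharP K 2] : ZMod 2 →+* K := ZMod.castHom (dvd_refl 2) K

lemma phi2_inj : Function.Injective (phi2 K) := (phi2 K).injective

lemma phi2_ite (a : ZMod 2) : (if a = 1 then (1 : K) else 0) = phi2 K a := by
  have : a = 0 ∨ a = 1 := by revert a; decide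
  rcases this with rfl | rfl <;> simp

def hat2 (α : K) (a : (Fin m → ZMod 3) → ZMod 2) (j : Fin m → ZMod 3) : K :=
  ∑ i, phi2 K (a i) * chi3 α (i ⬝ᵥ j)

lemma mem_code {a : (Fin m → ZMod 3) → ZMod 2} :
    a ∈ abelianCode 3 m {w} K α ↔ ∀ j : Fin m → ZMod 3, hammingNorm j ≠ w → hat2 α a j = 0 := by
  unfold abelianCode hat2
  simp only [Set.mem_ofPred_eq, phi2_ite]
  rfl


lemma three_pow_K : (3 : K) ^ m = 1 := by
  have : (3 : K) = 1 := by
    have h2 : (2 : K) = 0 := CharTwo.two_eq_zero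
    linear_combination h2
  rw [this, one_pow]

lemma phi2_eker (hα : IsPrimitiveRoot α 3) (x : Fin m → ZMod 3) :
    phi2 K (eker m w x) = ∑ l ∈ Sw m w, chi3 α (l ⬝ᵥ x) := by
  rw [sum_chi3_eq_nnS hα _ Sw_neg, eker]
  simp

lemma eker_neg (x : Fin m → ZMod 3) : eker m w (-x) = eker m w x := by
  unfold eker nnS
  congr 3
  · simp
  · refine Finset.card_bij' (fun x _ => -x) (fun x _ => -x) ?_ ?_ ?_ ?_
    · intro x hx
      simp only [Finset.mem_filter] at hx ⊢
      exact ⟨Sw_neg _ hx.1, by simpa using hx.2⟩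
    · intro x hx
      simp only [Finset.mem_filter] at hx ⊢
      exact ⟨Sw_neg _ hx.1, by simpa using hx.2⟩
    · simp
    · simp

lemma hat2_eker (hα : IsPrimitiveRoot α 3) (j : Fin m → ZMod 3) :
    hat2 α (eker m w) j = if hammingNorm j = w then 1 else 0 := by
  unfold hat2
  simp_rw [phi2_eker hα, Finset.sum_mul]
  rw [Finset.sum_comm]
  have : ∀ l ∈ Sw m w, ∑ x : Fin m → ZMod 3, chi3 α (l ⬝ᵥ x) * chi3 α (x ⬝ᵥ j)
      = if l = -j then 1 else 0 := by
    intro l _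
    have h1 : ∀ x : Fin m → ZMod 3, chi3 α (l ⬝ᵥ x) * chi3 α (x ⬝ᵥ j) = chi3 α ((l + j) ⬝ᵥ x) := by
      intro x
      rw [add_dotProduct, chi3_add hα, dotProduct_comm x j]
    simp_rw [h1]
    rw [chi3_orth hα, three_pow_K]
    simp only [add_eq_zero_iff_eq_neg]
  rw [Finset.sum_congr rfl this, Finset.sum_ite_eq']
  simp only [mem_Sw, hammingNorm_neg']

lemma hat2_shift (hα : IsPrimitiveRoot α 3) (a : (Fin m → ZMod 3) → ZMod 2) (y j : Fin m → ZMod 3) :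
    hat2 α (fun x => a (x - y)) j = chi3 α (y ⬝ᵥ j) * hat2 α a j := by
  unfold hat2
  rw [Finset.mul_sum, ← Equiv.sum_comp (Equiv.addRight y)]
  refine Finset.sum_congr rfl fun x _ => ?_
  simp only [Equiv.coe_addRight, add_sub_cancel_right, add_dotProduct, chi3_add hα]
  ring

lemma eker_shift_mem (hα : IsPrimitiveRoot α 3) (y : Fin m → ZMod 3) :
    (fun x => eker m w (x - y)) ∈ abelianCode 3 m {w} K α := by
  rw [mem_code]
  intro j hj
  rw [hat2_shift hα, hat2_eker hα, if_neg hj, mul_zero]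

lemma hat2_inv (hα : IsPrimitiveRoot α 3) (a : (Fin m → ZMod 3) → ZMod 2) (y : Fin m → ZMod 3) :
    ∑ l, chi3 α (l ⬝ᵥ (-y)) * hat2 α a l = phi2 K (a y) := by
  unfold hat2
  simp_rw [Finset.mul_sum]
  rw [Finset.sum_comm]
  have : ∀ x : Fin m → ZMod 3, ∑ l : Fin m → ZMod 3,
      chi3 α (l ⬝ᵥ (-y)) * (phi2 K (a x) * chi3 α (x ⬝ᵥ l)) = if x = y then phi2 K (a x) else 0 := by
    intro x
    have h1 : ∀ l : Fin m → ZMod 3, chi3 α (l ⬝ᵥ (-y)) * (phi2 K (a x) * chi3 α (x ⬝ᵥ l))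
        = phi2 K (a x) * chi3 α ((x - y) ⬝ᵥ l) := by
      intro l
      rw [sub_eq_add_neg, add_dotProduct, chi3_add hα, dotProduct_comm l]
      ring
    simp_rw [h1]
    rw [← Finset.mul_sum, chi3_orth hα, three_pow_K]
    simp only [sub_eq_zero, mul_ite, mul_one, mul_zero]
  rw [Finset.sum_congr rfl fun x _ => this x]
  simp

lemma reproducing (hα : IsPrimitiveRoot α 3) {a : (Fin m → ZMod 3) → ZMod 2}
    (ha : a ∈ abelianCode 3 m {w} K α) (y : Fin m → ZMod 3) :
    ∑ x, a x * eker m w (x - y) = a y := by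
  apply phi2_inj (K := K)
  rw [map_sum]
  simp_rw [map_mul, phi2_eker hα, Finset.mul_sum]
  rw [Finset.sum_comm, ← hat2_inv hα a y]
  rw [← Finset.sum_subset (Finset.subset_univ (Sw m w))]
  · refine Finset.sum_congr rfl fun l _ => ?_
    unfold hat2
    rw [Finset.mul_sum]
    refine Finset.sum_congr rfl fun x _ => ?_
    rw [sub_eq_add_neg, dotProduct_add, chi3_add hα, dotProduct_comm x l]
    ring
  · intro l _ hl
    rw [mem_code.1 ha l (by rwa [mem_Sw] at hl), mul_zero]

lemma codeAut_symm_mem {I : Type} {C : Set (I → ZMod 2)} {π : Equiv.Perm I} (h : π ∈ codeAut C)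
    {c : I → ZMod 2} (hc : c ∈ C) : c ∘ ⇑π.symm ∈ C := by
  unfold codeAut at h
  simp only [Set.mem_ofPred_eq] at h
  rw [← h]
  exact ⟨c, hc, rfl⟩

lemma codeAut_mem {I : Type} {C : Set (I → ZMod 2)} {π : Equiv.Perm I} (h : π ∈ codeAut C)
    {c : I → ZMod 2} (hc : c ∈ C) : c ∘ ⇑π ∈ C := by
  unfold codeAut at h
  simp only [Set.mem_ofPred_eq] at h
  rw [← h] at hc
  obtain ⟨d, hd, rfl⟩ := hc
  have : ((fun c => c ∘ ⇑π.symm) d) ∘ ⇑π = d := by ext x; simp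
  rwa [this]

theorem eker_inv (hα : IsPrimitiveRoot α 3) {π : Equiv.Perm (Fin m → ZMod 3)}
    (hπ : π ∈ codeAut (abelianCode 3 m {w} K α)) (x y : Fin m → ZMod 3) :
    eker m w (π x - π y) = eker m w (x - y) := by
  have ha := codeAut_mem hπ (eker_shift_mem (w := w) hα (π y))
  have hb := codeAut_symm_mem hπ (eker_shift_mem (w := w) hα x)
  have h1 := reproducing hα ha x
  have h2 := reproducing hα hb (π y)
  rw [← Equiv.sum_comp π] at h2
  simp only [Function.comp_apply, Equiv.symm_apply_apply] at h1 h2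
  rw [← h1, ← neg_sub y x, eker_neg, ← h2]
  exact Finset.sum_congr rfl fun z _ => mul_comm _ _

lemma Dset_neg : ∀ x ∈ Dset m w, -x ∈ Dset m w := by
  intro x hx
  simp only [Dset, Finset.mem_filter, Finset.mem_univ, true_and] at hx ⊢
  rw [eker_neg, hx]

theorem lam_odd (hα : IsPrimitiveRoot α 3) (j : Fin m → ZMod 3) :
    Odd (nnS (Dset m w) j) ↔ hammingNorm j = w := by
  have h1 : (nnS (Dset m w) j : K) = if hammingNorm j = w then 1 else 0 := by
    rw [← sum_chi3_eq_nnS hα _ Dset_neg, ← hat2_eker hα]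
    unfold hat2 Dset
    rw [Finset.sum_filter]
    refine Finset.sum_congr rfl fun x _ => ?_
    rw [← phi2_ite]
    split_ifs <;> simp
  constructor
  · intro h
    obtain ⟨k, hk⟩ := h
    by_contra hne
    rw [if_neg hne, hk] at h1
    push_cast at h1
    rw [CharTwo.two_eq_zero] at h1
    simp at h1
  · intro h
    rw [if_pos h] at h1
    by_contra hne
    rw [Int.not_odd_iff_even] at hne
    obtain ⟨k, hk⟩ := hne
    rw [hk] at h1
    push_cast at h1
    rw [CharTwo.add_self_eq_zero] at h1
    simp at h1

end PartB


noncomputable def om3 : ℂ := Complex.exp (2 * Real.pi * Complex.I / (3 : ℕ))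

lemma om3_prim : IsPrimitiveRoot om3 3 := Complex.isPrimitiveRoot_exp 3 (by norm_num)

section PartC
variable {m w : ℕ}

noncomputable def Fc (c : (Fin m → ZMod 3) → ℂ) (x : Fin m → ZMod 3) : ℂ :=
  ∑ j, c j * chi3 om3 (j ⬝ᵥ x)

def InvB (π : Equiv.Perm (Fin m → ZMod 3)) (c : (Fin m → ZMod 3) → ℂ) : Prop :=
  ∀ x y, Fc c (π x - π y) = Fc c (x - y)

lemma Fc_conv (c c' : (Fin m → ZMod 3) → ℂ) (x : Fin m → ZMod 3) :
    ∑ z, Fc c (x - z) * Fc c' z = 3 ^ m * Fc (c * c') x := by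
  unfold Fc
  simp_rw [Finset.sum_mul_sum]
  rw [Finset.sum_comm]
  rw [Finset.mul_sum]
  refine Finset.sum_congr rfl fun j _ => ?_
  rw [Finset.sum_comm]
  have : ∀ l : Fin m → ZMod 3, ∑ z : Fin m → ZMod 3,
      c j * chi3 om3 (j ⬝ᵥ (x - z)) * (c' l * chi3 om3 (l ⬝ᵥ z))
      = if l = j then 3 ^ m * (c j * c' l * chi3 om3 (j ⬝ᵥ x)) else 0 := by
    intro l
    have h1 : ∀ z : Fin m → ZMod 3, c j * chi3 om3 (j ⬝ᵥ (x - z)) * (c' l * chi3 om3 (l ⬝ᵥ z))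
        = c j * c' l * chi3 om3 (j ⬝ᵥ x) * chi3 om3 ((l - j) ⬝ᵥ z) := by
      intro z
      rw [sub_eq_add_neg x z, dotProduct_add, chi3_add om3_prim, sub_eq_add_neg, add_dotProduct,
        chi3_add om3_prim, dotProduct_neg, neg_dotProduct]
      ring
    simp_rw [h1]
    rw [← Finset.mul_sum, chi3_orth om3_prim]
    simp only [sub_eq_zero, mul_ite, mul_zero]
    split_ifs <;> ring
  rw [Finset.sum_congr rfl fun x _ => this x]
  simp

lemma InvB.mul {π : Equiv.Perm (Fin m → ZMod 3)} {c c' : (Fin m → ZMod 3) → ℂ}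
    (h : InvB π c) (h' : InvB π c') : InvB π (c * c') := by
  intro x y
  have h3 : (3 : ℂ) ^ m ≠ 0 := pow_ne_zero _ (by norm_num)
  apply mul_left_cancel₀ h3
  rw [← Fc_conv, ← Fc_conv]
  rw [← Equiv.sum_comp (Equiv.subRight y) (fun z => Fc c (x - y - z) * Fc c' z),
    ← Equiv.sum_comp (Equiv.subRight (π y)), ← Equiv.sum_comp π]
  refine Finset.sum_congr rfl fun z _ => ?_
  simp only [Equiv.subRight_apply, sub_sub_sub_cancel_right]
  rw [h, h']

lemma InvB.add {π : Equiv.Perm (Fin m → ZMod 3)} {c c' : (Fin m → ZMod 3) → ℂ}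
    (h : InvB π c) (h' : InvB π c') : InvB π (c + c') := by
  have : ∀ x, Fc (c + c') x = Fc c x + Fc c' x := by
    intro x
    simp [Fc, add_mul, Finset.sum_add_distrib]
  intro x y
  rw [this, this, h, h']

lemma InvB.const (π : Equiv.Perm (Fin m → ZMod 3)) (r : ℂ) : InvB π (fun _ => r) := by
  have : ∀ x : Fin m → ZMod 3, Fc (fun _ => r) x = r * if x = 0 then 3 ^ m else 0 := by
    intro x
    unfold Fc
    rw [← Finset.mul_sum, ← chi3_orth om3_prim]
    simp_rw [dotProduct_comm x]
  intro x y
  rw [this, this]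
  simp only [sub_eq_zero, π.injective.eq_iff]

lemma InvB.delta (π : Equiv.Perm (Fin m → ZMod 3)) : InvB π (fun j => if j = 0 then 1 else 0) := by
  have : ∀ x : Fin m → ZMod 3, Fc (fun j => if j = 0 then 1 else 0) x = 1 := by
    intro x
    simp [Fc, chi3_zero]
  intro x y
  rw [this, this]

lemma InvB.conv {π : Equiv.Perm (Fin m → ZMod 3)} {c c' : (Fin m → ZMod 3) → ℂ}
    (h : InvB π c) (h' : InvB π c') : InvB π (fun j => ∑ l, c l * c' (j - l)) := by
  have : ∀ x, Fc (fun j => ∑ l, c l * c' (j - l)) x = Fc c x * Fc c' x := by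
    intro x
    unfold Fc
    simp_rw [Finset.sum_mul]
    rw [Finset.sum_comm]
    refine Finset.sum_congr rfl fun l _ => ?_
    rw [← Equiv.sum_comp (Equiv.addRight l), Finset.mul_sum]
    refine Finset.sum_congr rfl fun j _ => ?_
    simp only [Equiv.coe_addRight, add_sub_cancel_right, add_dotProduct, chi3_add om3_prim]
    ring
  intro x y
  rw [this, this, h, h']

noncomputable def BAlg (π : Equiv.Perm (Fin m → ZMod 3)) : Subalgebra ℂ ((Fin m → ZMod 3) → ℂ) where
  carrier := {c | InvB π c}
  mul_mem' := fun h h' => InvB.mul h h'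
  add_mem' := fun h h' => InvB.add h h'
  algebraMap_mem' := fun r => InvB.const π r

lemma InvB.comp {π : Equiv.Perm (Fin m → ZMod 3)} {c : (Fin m → ZMod 3) → ℂ}
    (h : InvB π c) (φ : ℂ → ℂ) : InvB π (fun j => φ (c j)) := by
  classical
  set p := Lagrange.interpolate (Finset.univ.image c) id φ with hp
  have h1 : Polynomial.aeval c p = fun j => φ (c j) := by
    ext j
    have h2 : Polynomial.aeval c p j = Polynomial.aeval (c j) p :=
      (Polynomial.aeval_algHom_apply (Pi.evalAlgHom ℂ (fun _ => ℂ) j) c p).symm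
    rw [h2, Polynomial.coe_aeval_eq_eval, hp]
    exact Lagrange.eval_interpolate_at_node φ (v := id) (Set.injOn_id _)
      (Finset.mem_image_of_mem c (Finset.mem_univ j))
  have hc : c ∈ BAlg π := h
  have h2 : Polynomial.aeval c p ∈ BAlg π := by
    have := Polynomial.aeval_mem_adjoin_singleton (p := p) ℂ c
    exact (Algebra.adjoin_le (by simpa using hc)) this
  rw [h1] at h2
  exact h2

/-- number of `l` of weight `w` with `j - l` of weight `w` -/
def cntw (m w : ℕ) (j : Fin m → ZMod 3) : ℕ :=
  (Finset.univ.filter fun l : Fin m → ZMod 3 => hammingNorm l = w ∧ hammingNorm (j - l) = w).card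

lemma lam_inv {π : Equiv.Perm (Fin m → ZMod 3)}
    (hπ : ∀ x y, eker m w (π x - π y) = eker m w (x - y)) :
    InvB π (fun j => (nnS (Dset m w) j : ℂ)) := by
  have : ∀ x, Fc (fun j => (nnS (Dset m w) j : ℂ)) x = 3 ^ m * if eker m w x = 1 then 1 else 0 := by
    intro x
    unfold Fc
    simp_rw [← sum_chi3_eq_nnS om3_prim _ Dset_neg, Finset.sum_mul]
    rw [Finset.sum_comm]
    have : ∀ y ∈ Dset m w, ∑ j : Fin m → ZMod 3, chi3 om3 (y ⬝ᵥ j) * chi3 om3 (j ⬝ᵥ x)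
      = if y = -x then 3 ^ m else 0 := by
      intro l _
      have h1 : ∀ j : Fin m → ZMod 3, chi3 om3 (l ⬝ᵥ j) * chi3 om3 (j ⬝ᵥ x)
          = chi3 om3 ((l + x) ⬝ᵥ j) := by
        intro j
        rw [add_dotProduct, chi3_add om3_prim, dotProduct_comm x j]
      simp_rw [h1]
      rw [chi3_orth om3_prim]
      simp only [add_eq_zero_iff_eq_neg]
    rw [Finset.sum_congr rfl this, Finset.sum_ite_eq']
    simp [Dset, eker_neg]
  intro x y
  rw [this, this, hπ]

lemma cnt_inv {π : Equiv.Perm (Fin m → ZMod 3)} 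
    (hπ : ∀ x y, eker m w (π x - π y) = eker m w (x - y))
    (hodd : ∀ j : Fin m → ZMod 3, Odd (nnS (Dset m w) j) ↔ hammingNorm j = w) :
    InvB π (fun j => (cntw m w j : ℂ)) := by
  classical
  have h1 := (lam_inv hπ).comp (fun z => if ∃ n : ℤ, Odd n ∧ (n : ℂ) = z then 1 else 0)
  have h2 := h1.conv h1
  convert h2 using 2 with j
  have h3 : ∀ j : Fin m → ZMod 3, (∃ n : ℤ, Odd n ∧ (n : ℂ) = (nnS (Dset m w) j : ℂ))
      ↔ hammingNorm j = w := by
    intro j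
    rw [← hodd]
    constructor
    · rintro ⟨n, hn, h⟩
      rwa [← Int.cast_injective h]
    · intro h
      exact ⟨_, h, rfl⟩
  simp_rw [h3]
  have h4 : ∀ l : Fin m → ZMod 3, (if hammingNorm l = w then (1 : ℂ) else 0) *
      (if hammingNorm (j - l) = w then 1 else 0)
      = if hammingNorm l = w ∧ hammingNorm (j - l) = w then 1 else 0 := by
    intro l
    by_cases h5 : hammingNorm l = w <;> simp [h5]
  simp_rw [h4]
  rw [Finset.sum_boole]
  rfl

end PartC


def rr : ℕ → ℕ → ℕ → ℕ
  | 0, k, w => k.choose w * w.choose (k - w)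
  | n + 1, k, 0 => rr n k 0
  | n + 1, k, w + 1 => rr n k (w + 1) + 2 * rr n k w

section PartD
open Polynomial

lemma coeff_XC_add_C_pow {R : Type*} [CommSemiring R] (p q : R) (k w : ℕ) :
    ((X * C p + C q : R[X]) ^ k).coeff w = p ^ w * q ^ (k - w) * (k.choose w : R) := by
  rw [add_pow, finsetSum_coeff]
  have : ∀ a ∈ Finset.range (k + 1), ((X * C p : R[X]) ^ a * C q ^ (k - a) * (k.choose a : R[X])).coeff w
      = if w = a then p ^ a * q ^ (k - a) * (k.choose a : R) else 0 := by
    intro a _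
    have : (X * C p : R[X]) ^ a * C q ^ (k - a) * (k.choose a : R[X])
        = C (p ^ a * q ^ (k - a) * (k.choose a : R)) * X ^ a := by
      simp only [map_mul, map_pow, map_natCast]
      ring
    rw [this, coeff_C_mul_X_pow]
  rw [Finset.sum_congr rfl this, Finset.sum_ite_eq]
  split_ifs with h
  · rfl
  · rw [Nat.choose_eq_zero_of_lt (by simpa using h)]
    simp

noncomputable def PP (n k : ℕ) : ℤ[X][X] :=
  (1 + 2 * (X * C X)) ^ n * (X * C (1 + X) + C X) ^ k

lemma coeff_PP (n k w : ℕ) : ((PP n k).coeff w).coeff w = (rr n k w : ℤ) := by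
  induction n generalizing w with
  | zero =>
    unfold PP rr
    rw [pow_zero, one_mul, coeff_XC_add_C_pow, mul_comm, coeff_natCast_mul]
    rw [coeff_mul_X_pow']
    push_cast
    by_cases h : w ≤ k
    · split_ifs with h2
      · rw [coeff_one_add_X_pow]
        rw [Nat.choose_symm h2]
      · rw [Nat.choose_eq_zero_of_lt (n := w) (k := k - w) (by omega)]
        simp
    · rw [Nat.choose_eq_zero_of_lt (n := k) (k := w) (by omega)]
      simp
  | succ n ih =>
    have h1 : PP (n + 1) k = PP n k + X * (C (2 * X) * PP n k) := by
      unfold PP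
      rw [pow_succ]
      simp only [map_mul, map_ofNat]
      ring
    cases w with
    | zero =>
      rw [h1, coeff_add, coeff_X_mul_zero, add_zero, ih]
      rfl
    | succ w =>
      rw [h1, coeff_add, coeff_X_mul, coeff_C_mul, coeff_add, ih, mul_assoc, ← C_ofNat, coeff_C_mul,
        coeff_X_mul, ih]
      rfl

variable {m : ℕ}

lemma prod_ite_hamming {R : Type*} [CommSemiring R] (A B : R) (j : Fin m → ZMod 3) :
    ∏ i, (if j i = 0 then A else B) = A ^ (m - hammingNorm j) * B ^ hammingNorm j := by
  rw [Finset.prod_ite, Finset.prod_const, Finset.prod_const]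
  have h1 : (Finset.univ.filter fun i => j i = 0).card + hammingNorm j = m := by
    have := Finset.card_filter_add_card_filter_not (s := (Finset.univ : Finset (Fin m))) (fun i => j i = 0)
    simpa [hammingNorm] using this
  have h2 : (Finset.univ.filter fun i => j i = 0).card = m - hammingNorm j := by omega
  rw [h2]
  rfl

lemma pow_hamming {R : Type*} [CommSemiring R] (B : R) (j : Fin m → ZMod 3) :
    B ^ hammingNorm j = ∏ i, (if j i = 0 then 1 else B) := by
  rw [prod_ite_hamming, one_pow, one_mul]

lemma sum_prod_pi {R : Type*} [CommSemiring R] (g : Fin m → ZMod 3 → R) :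
    ∑ l : Fin m → ZMod 3, ∏ i, g i (l i) = ∏ i, ∑ a, g i a := by
  rw [Finset.prod_univ_sum, Fintype.piFinset_univ]

lemma gen_cnt (j : Fin m → ZMod 3) :
    ∑ l : Fin m → ZMod 3, (X : ℤ[X][X]) ^ hammingNorm l * C X ^ hammingNorm (j - l)
      = PP (m - hammingNorm j) (hammingNorm j) := by
  have h0 : ∀ l : Fin m → ZMod 3, (X : ℤ[X][X]) ^ hammingNorm l * C X ^ hammingNorm (j - l)
      = ∏ i, ((if l i = 0 then (1 : ℤ[X][X]) else X) * (if j i - l i = 0 then 1 else C X)) := by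
    intro l
    rw [pow_hamming, pow_hamming, Finset.prod_mul_distrib]
    rfl
  simp_rw [h0]
  have := sum_prod_pi (m := m) (fun i a => (if a = 0 then (1 : ℤ[X][X]) else X) *
    (if j i - a = 0 then 1 else C X))
  rw [this]
  unfold PP
  rw [← prod_ite_hamming]
  refine Finset.prod_congr rfl fun i _ => ?_
  have huniv : (Finset.univ : Finset (ZMod 3)) = {0, 1, 2} := by decide
  rw [huniv]
  generalize j i = a
  have h : a = 0 ∨ a = 1 ∨ a = 2 := by revert a; decide
  have h10 : (1 : ZMod 3) ≠ 0 := by decide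
  have h20 : (2 : ZMod 3) ≠ 0 := by decide
  have h12 : (1 : ZMod 3) ≠ 2 := by decide
  have h01 : (0 : ZMod 3) - 1 ≠ 0 := by decide
  have h02 : (0 : ZMod 3) - 2 ≠ 0 := by decide
  have h121 : (1 : ZMod 3) - 2 ≠ 0 := by decide
  have h211 : (2 : ZMod 3) - 1 ≠ 0 := by decide
  rw [Finset.sum_insert (by decide), Finset.sum_insert (by decide), Finset.sum_singleton]
  rcases h with rfl | rfl | rfl
  · simp only [h10, h20, h01, h02, if_true, if_false, sub_self]
    ring
  · simp only [h10, h20, h121, if_true, if_false, sub_self, sub_zero, map_add, map_one]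
    ring
  · simp only [h10, h20, h211, if_true, if_false, sub_self, sub_zero, map_add, map_one]
    ring

lemma cntw_eq (w : ℕ) (j : Fin m → ZMod 3) :
    cntw m w j = rr (m - hammingNorm j) (hammingNorm j) w := by
  have hz : (cntw m w j : ℤ) = (rr (m - hammingNorm j) (hammingNorm j) w : ℤ) := ?_
  · exact_mod_cast hz
  rw [← coeff_PP, ← gen_cnt, finsetSum_coeff, finsetSum_coeff, cntw, Finset.card_filter, Nat.cast_sum]
  refine Finset.sum_congr rfl fun l _ => ?_
  push_cast
  rw [← C_pow, mul_comm (X ^ _) (C _), coeff_C_mul_X_pow]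
  by_cases h : hammingNorm l = w
  · by_cases h' : hammingNorm (j - l) = w
    · rw [if_pos ⟨h, h'⟩, if_pos h.symm, h', coeff_X_pow, if_pos rfl]
    · rw [if_neg (fun hh => h' hh.2), if_pos h.symm, coeff_X_pow, if_neg (Ne.symm h')]
  · rw [if_neg (fun hh => h hh.1), if_neg (Ne.symm h), coeff_zero]

lemma gen_kraw (x : Fin m → ZMod 3) :
    ∑ j : Fin m → ZMod 3, C (chi3 om3 (j ⬝ᵥ x)) * (X : ℂ[X]) ^ hammingNorm j
      = (X * C 2 + C 1) ^ (m - hammingNorm x) * (X * C (-1) + C 1) ^ hammingNorm x := by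
  have h0 : ∀ j : Fin m → ZMod 3, C (chi3 om3 (j ⬝ᵥ x)) * (X : ℂ[X]) ^ hammingNorm j
      = ∏ i, (C (chi3 om3 (j i * x i)) * (if j i = 0 then 1 else X)) := by
    intro j
    rw [Finset.prod_mul_distrib, ← pow_hamming, dotProduct, chi3_sum om3_prim, map_prod]
  simp_rw [h0]
  have := sum_prod_pi (m := m) (fun i a => C (chi3 om3 (a * x i)) * (if a = 0 then (1 : ℂ[X]) else X))
  rw [this, ← prod_ite_hamming]
  refine Finset.prod_congr rfl fun i _ => ?_
  have huniv : (Finset.univ : Finset (ZMod 3)) = {0, 1, 2} := by decide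
  rw [huniv]
  generalize x i = a
  have h : a = 0 ∨ a = 1 ∨ a = 2 := by revert a; decide
  have h10 : (1 : ZMod 3) ≠ 0 := by decide
  have h20 : (2 : ZMod 3) ≠ 0 := by decide
  have h22 : (2 : ZMod 3) * 2 = 1 := by decide
  rw [Finset.sum_insert (by decide), Finset.sum_insert (by decide), Finset.sum_singleton]
  have hz : C (om3 ^ 2) = C (-1 - om3) := by
    congr 1
    linear_combination zeta_rel om3_prim
  rcases h with rfl | rfl | rfl
  · simp only [h10, h20, if_true, if_false, mul_zero, chi3_zero, C_1]
    rw [show (2 : ℂ) = 1 + 1 by norm_num, C_add, C_1]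
    ring
  · simp only [h10, h20, if_true, if_false, mul_one, chi3_zero, chi3_one, chi3_two, C_1, hz]
    simp only [C_sub, C_neg, C_1]
    ring
  · simp only [h10, h20, h22, if_true, if_false, zero_mul, one_mul, chi3_zero, chi3_one, chi3_two, C_1, hz]
    simp only [C_sub, C_neg, C_1]
    ring

/-- indicator of the weight-`w` sphere, complex valued -/
noncomputable def indS (m w : ℕ) (j : Fin m → ZMod 3) : ℂ := if hammingNorm j = w then 1 else 0

lemma Fc_indS (w : ℕ) (x : Fin m → ZMod 3) :
    Fc (indS m w) x =
      ((X * C 2 + C 1 : ℂ[X]) ^ (m - hammingNorm x) * (X * C (-1) + C 1) ^ hammingNorm x).coeff w := by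
  rw [← gen_kraw, finsetSum_coeff]
  unfold Fc indS
  refine Finset.sum_congr rfl fun j _ => ?_
  rw [coeff_C_mul_X_pow]
  by_cases h : hammingNorm j = w
  · simp [h]
  · simp [h, Ne.symm h]

lemma hammingNorm_le_m (x : Fin m → ZMod 3) : hammingNorm x ≤ m := by
  simpa using hammingNorm_le_card_fintype (x := x)

lemma Fc_indS_one (x : Fin m → ZMod 3) :
    Fc (indS m 1) x = 2 * m - 3 * hammingNorm x := by
  rw [Fc_indS, mul_coeff_one]
  simp only [coeff_XC_add_C_pow]
  rw [Nat.choose_zero_right, Nat.choose_one_right, Nat.choose_zero_right, Nat.choose_one_right,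
    Nat.cast_sub (hammingNorm_le_m x)]
  simp
  ring

lemma Fc_indS_two (x : Fin m → ZMod 3) :
    Fc (indS m 2) x = 9 / 2 * hammingNorm x ^ 2 - (6 * m - 3 / 2) * hammingNorm x + 2 * m ^ 2 - 2 * m := by
  rw [Fc_indS, coeff_mul]
  rw [show Finset.HasAntidiagonal.antidiagonal 2 = {(0, 2), (1, 1), (2, 0)} by rfl]
  simp only [coeff_XC_add_C_pow]
  rw [Finset.sum_insert (by decide), Finset.sum_insert (by decide), Finset.sum_singleton]
  simp only [Nat.choose_zero_right, Nat.choose_one_right, Nat.cast_choose_two,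
    Nat.cast_sub (hammingNorm_le_m x), one_pow, pow_zero, Nat.cast_one, mul_one, pow_one, one_mul]
  ring

end PartD


lemma rr_zero (k w : ℕ) : rr 0 k w = k.choose w * w.choose (k - w) := rfl
lemma rr_succ_zero (n k : ℕ) : rr (n + 1) k 0 = rr n k 0 := rfl
lemma rr_succ_succ (n k w : ℕ) : rr (n + 1) k (w + 1) = rr n k (w + 1) + 2 * rr n k w := rfl

lemma rr_one_zero (n : ℕ) : rr n 1 0 = 0 := by
  induction n with
  | zero => rfl
  | succ n ih => rw [rr_succ_zero, ih]

lemma rr_one (n h : ℕ) : rr n 1 (h + 1) = n.choose h * 2 ^ h := by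
  induction n generalizing h with
  | zero =>
    cases h with
    | zero => rfl
    | succ h => rw [rr_zero, Nat.choose_eq_zero_of_lt (n := 1) (by omega)]; simp
  | succ n ih =>
    cases h with
    | zero => rw [rr_succ_succ, ih, rr_one_zero]; simp
    | succ h => rw [rr_succ_succ, ih, ih, Nat.choose_succ_succ]; ring

lemma rr_two_zero (n : ℕ) : rr n 2 0 = 0 := by
  induction n with
  | zero => rfl
  | succ n ih => rw [rr_succ_zero, ih]

lemma rr_two_one (n : ℕ) : rr n 2 1 = 2 := by
  induction n with
  | zero => rfl
  | succ n ih => rw [rr_succ_succ, ih, rr_two_zero]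

lemma rr_two (n h : ℕ) : rr n 2 (h + 2) = n.choose h * 2 ^ h + 2 * (n.choose (h + 1) * 2 ^ (h + 1)) := by
  induction n generalizing h with
  | zero =>
    cases h with
    | zero => rfl
    | succ h => rw [rr_zero, Nat.choose_eq_zero_of_lt (n := 2) (by omega)]; simp
  | succ n ih =>
    cases h with
    | zero => rw [rr_succ_succ, ih, rr_two_one]; simp; ring
    | succ h => rw [rr_succ_succ, ih, ih, Nat.choose_succ_succ n (h + 1), Nat.choose_succ_succ n h]; ring

lemma choose_bd (h j : ℕ) (hh : 7 ≤ h) : 128 * h.choose j ≤ 35 * 2 ^ h := by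
  induction h, hh using Nat.le_induction generalizing j with
  | base =>
    by_cases hj : j ≤ 7
    · interval_cases j <;> decide
    · rw [Nat.choose_eq_zero_of_lt (by omega)]; norm_num
  | succ n hn ih =>
    cases j with
    | zero =>
      have h1 : 2 ^ 7 ≤ 2 ^ (n + 1) := Nat.pow_le_pow_right (by norm_num) (by omega)
      rw [Nat.choose_zero_right]
      omega
    | succ j =>
      rw [Nat.choose_succ_succ, pow_succ]
      have := ih j
      have := ih (j + 1)
      simp only [Nat.succ_eq_add_one] at *
      omega

lemma arith_key (M h : ℕ) (hM : 8 ≤ M) (h1 : M ≤ 2 * h) (h2 : h ≤ M) :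
    8 * (M * (M - 1) * h.choose (M - h)) < 3 * (h * 2 ^ h * (2 * M - h - 1)) := by
  by_cases h7 : 7 ≤ h
  · have hb := choose_bd h (M - h) h7
    have hp : 0 < 2 ^ h := by positivity
    obtain ⟨a, ha⟩ : ∃ a, M = h + a := ⟨M - h, by omega⟩
    have e1 : 2 * M - h - 1 = h + 2 * a - 1 := by omega
    obtain ⟨b, rfl⟩ : ∃ b, h = b + 1 := ⟨h - 1, by omega⟩
    have e2 : M - 1 = b + a := by omega
    have e3 : 2 * M - (b + 1) - 1 = b + 2 * a := by omega
    rw [e2, e3]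
    have hab : a ≤ b + 1 := by omega
    have hq : 8 * 35 * (M * (b + a)) < 128 * 3 * ((b + 1) * (b + 2 * a)) := by
      rw [ha]
      nlinarith [Nat.mul_le_mul hab hab, Nat.mul_le_mul_left a hab]
    generalize 2 ^ (b + 1) = P at *
    generalize (b + 1).choose (M - (b + 1)) = c at *
    have s1 : 128 * (8 * (M * (b + a) * c)) ≤ 8 * 35 * (M * (b + a)) * P := by
      have := Nat.mul_le_mul_left (8 * (M * (b + a))) hb
      nlinarith
    have s2 : 8 * 35 * (M * (b + a)) * P < 128 * 3 * ((b + 1) * (b + 2 * a)) * P :=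
      Nat.mul_lt_mul_of_pos_right hq hp
    nlinarith
  · have : M ≤ 12 := by omega
    interval_cases M <;> interval_cases h <;> first | decide | (exfalso; omega)

lemma top_ineq (M h : ℕ) (hM : 8 ≤ M) (h1 : 1 ≤ h) (h2 : h ≤ M) :
    2 * rr 0 M h < rr (M - 1) 1 h + rr (M - 2) 2 h := by
  obtain ⟨b, rfl⟩ : ∃ b, h = b + 1 := ⟨h - 1, by omega⟩
  obtain ⟨N, rfl⟩ : ∃ N, M = N + 2 := ⟨M - 2, by omega⟩
  rw [show N + 2 - 1 = N + 1 by omega, show N + 2 - 2 = N by omega]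
  by_cases hsmall : N + 2 ≤ 2 * (b + 1)
  · obtain ⟨c, rfl⟩ : ∃ c, b = c + 1 := ⟨b - 1, by omega⟩
    have hk := arith_key (N + 2) (c + 1 + 1) hM hsmall h2
    rw [rr_zero, rr_one, rr_two]
    have hpos : 0 < (N + 2).choose (c + 2) := Nat.choose_pos h2
    -- identities
    have i1 : (N + 2) * (N + 1).choose (c + 1) = (N + 2).choose (c + 2) * (c + 2) :=
      Nat.add_one_mul_choose_eq (N + 1) (c + 1)
    have i2 : (N + 1) * N.choose c = (N + 1).choose (c + 1) * (c + 1) :=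
      Nat.add_one_mul_choose_eq N c
    have i3 : (N + 1).choose (c + 1) = N.choose c + N.choose (c + 1) := Nat.choose_succ_succ N c
    obtain ⟨a, ha⟩ : ∃ a, N = c + a := ⟨N - c, by omega⟩
    rw [show 2 * (N + 2) - (c + 1 + 1) - 1 = c + 2 * a + 1 by omega,
      show N + 2 - 1 = N + 1 by omega] at hk
    rw [show c + 1 + 1 = c + 2 by omega] at *
    generalize (c + 2).choose (N + 2 - (c + 2)) = q at *
    generalize (N + 2).choose (c + 2) = T at *
    generalize (N + 1).choose (c + 1) = A at *
    generalize N.choose (c + 1) = B' at *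
    generalize N.choose c = B at *
    have hpow : 2 ^ (c + 2) = 4 * 2 ^ c := by ring
    have hpow1 : 2 ^ (c + 1) = 2 * 2 ^ c := by ring
    rw [hpow] at hk
    rw [hpow1]
    generalize 2 ^ c = P at *
    -- multiply the goal by (N+2)(N+1)
    have hmul : 0 < (N + 2) * (N + 1) := by positivity
    apply lt_of_mul_lt_mul_left (a := (N + 2) * (N + 1)) _ (Nat.zero_le _)
    have e1 : (N + 2) * (N + 1) * A = T * (c + 2) * (N + 1) := by rw [← i1]; ring
    have e2 : (N + 2) * (N + 1) * B = T * (c + 2) * (c + 1) := by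
      rw [← i1, mul_assoc, i2]; ring
    have e3 : (N + 2) * (N + 1) * B' = T * (c + 2) * a := by
      have : (N + 2) * (N + 1) * B + (N + 2) * (N + 1) * B' = T * (c + 2) * (c + 1) + T * (c + 2) * a := by
        rw [← mul_add, ← i3, e1, ha]; ring
      omega
    have goalR : (N + 2) * (N + 1) * (A * (2 * P) + (B * P + 2 * (B' * (2 * P))))
        = T * (c + 2) * P * (2 * (N + 1) + (c + 1) + 4 * a) := by
      calc _ = ((N + 2) * (N + 1) * A) * (2 * P) + ((N + 2) * (N + 1) * B) * P
            + ((N + 2) * (N + 1) * B') * (4 * P) := by ring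
        _ = _ := by rw [e1, e2, e3]; ring
    rw [goalR]
    have hk2 := Nat.mul_lt_mul_of_pos_left hk hpos
    subst ha
    nlinarith
  · rw [rr_zero, Nat.choose_eq_zero_of_lt (n := b + 1) (by omega), rr_one]
    have : 0 < (N + 1).choose b := Nat.choose_pos (by omega)
    positivity

lemma rr_ineq (m : ℕ) (hm : 7 ≤ m) : ∀ k, 3 ≤ k → k ≤ m → ∀ w,
    2 * rr (m - k) k w ≤ rr (m - 1) 1 w + rr (m - 2) 2 w ∧
    (1 ≤ w → w ≤ m → 2 * rr (m - k) k w < rr (m - 1) 1 w + rr (m - 2) 2 w) := by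
  have top0 : ∀ M, 7 ≤ M → ∀ w, (w = 0 ∨ M < w) → rr 0 M w = 0 := by
    intro M hM w hw
    rw [rr_zero]
    rcases hw with rfl | hw
    · rw [Nat.choose_eq_zero_of_lt (n := 0) (by omega)]; simp
    · rw [Nat.choose_eq_zero_of_lt (n := M) (by omega)]; simp
  have big0 : ∀ n k w, n + k < w → rr n k w = 0 := by
    intro n
    induction n with
    | zero => intro k w h; rw [rr_zero, Nat.choose_eq_zero_of_lt (n := k) (by omega)]; simp
    | succ n ih =>
      intro k w h
      obtain ⟨w, rfl⟩ : ∃ v, w = v + 1 := ⟨w - 1, by omega⟩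
      rw [rr_succ_succ, ih _ _ (by omega), ih _ _ (by omega)]
  induction m, hm using Nat.le_induction with
  | base =>
    intro k hk1 hk2 w
    have key : ∀ k ∈ Finset.Icc 3 7, ∀ w ∈ Finset.Icc 1 7,
        2 * rr (7 - k) k w < rr (7 - 1) 1 w + rr (7 - 2) 2 w := by decide +kernel
    have key0 : ∀ k ∈ Finset.Icc 3 7, 2 * rr (7 - k) k 0 ≤ rr (7 - 1) 1 0 + rr (7 - 2) 2 0 := by
      decide +kernel
    have hstr : 1 ≤ w → w ≤ 7 → 2 * rr (7 - k) k w < rr (7 - 1) 1 w + rr (7 - 2) 2 w := fun h1 h2 =>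
      key k (Finset.mem_Icc.2 ⟨hk1, hk2⟩) w (Finset.mem_Icc.2 ⟨h1, h2⟩)
    refine ⟨?_, hstr⟩
    by_cases h0 : w = 0
    · subst h0; exact key0 k (Finset.mem_Icc.2 ⟨hk1, hk2⟩)
    · by_cases h7 : w ≤ 7
      · exact (hstr (by omega) h7).le
      · rw [big0 _ _ _ (by omega)]; simp
  | succ m hm ih =>
    intro k hk1 hk2 w
    by_cases hk : k ≤ m
    · have ihk := ih k hk1 hk
      rw [show m + 1 - k = (m - k) + 1 by omega, show m + 1 - 1 = (m - 1) + 1 by omega,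
        show m + 1 - 2 = (m - 2) + 1 by omega]
      cases w with
      | zero =>
        simp only [rr_succ_zero]
        exact ⟨(ihk 0).1, by omega⟩
      | succ w =>
        simp only [rr_succ_succ]
        have a1 := ihk w
        have a2 := ihk (w + 1)
        refine ⟨by omega, fun _ h => ?_⟩
        by_cases hw : w + 1 ≤ m
        · have := a2.2 (by omega) hw
          omega
        · have := a1.2 (by omega) (by omega)
          omega
    · obtain rfl : k = m + 1 := by omega
      rw [Nat.sub_self]
      have hstr := fun h1 h2 => top_ineq (m + 1) w (by omega) h1 h2
      refine ⟨?_, hstr⟩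
      by_cases hw : 1 ≤ w ∧ w ≤ m + 1
      · exact (hstr hw.1 hw.2).le
      · rw [top0 (m + 1) (by omega) w (by omega)]; simp

lemma rr_max (m w k : ℕ) (hm : 6 ≤ m) (h3 : 3 ∣ w) (hw1 : 1 ≤ w) (hw : w ≤ m) (hk : 3 ≤ k) (hkm : k ≤ m) :
    rr (m - k) k w < max (rr (m - 1) 1 w) (rr (m - 2) 2 w) := by
  by_cases h6 : m = 6
  · subst h6
    have key : ∀ k ∈ Finset.Icc 3 6, ∀ w ∈ Finset.Icc 1 6, 3 ∣ w →
        rr (6 - k) k w < max (rr (6 - 1) 1 w) (rr (6 - 2) 2 w) := by decide +kernel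
    exact key k (Finset.mem_Icc.2 ⟨hk, hkm⟩) w (Finset.mem_Icc.2 ⟨hw1, hw⟩) h3
  · have := (rr_ineq m (by omega) k hk hkm w).2 hw1 hw
    have h1 := le_max_left (rr (m - 1) 1 w) (rr (m - 2) 2 w)
    have h2 := le_max_right (rr (m - 1) 1 w) (rr (m - 2) 2 w)
    omega


section PartF
variable {m w : ℕ}

lemma Fc_add (c c' : (Fin m → ZMod 3) → ℂ) (x : Fin m → ZMod 3) :
    Fc (fun j => c j + c' j) x = Fc c x + Fc c' x := by
  simp [Fc, add_mul, Finset.sum_add_distrib]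

lemma sphere_inv {π : Equiv.Perm (Fin m → ZMod 3)} (hm : 6 ≤ m) (h3 : 3 ∣ w) (hw1 : 1 ≤ w) (hw : w ≤ m)
    (hc : InvB π (fun j => (cntw m w j : ℂ))) :
    InvB π (indS m 1) ∨ InvB π (indS m 2) ∨ InvB π (fun j => indS m 1 j + indS m 2 j) := by
  classical
  set M := max (rr (m - 1) 1 w) (rr (m - 2) 2 w) with hM
  have h1 := hc.comp (fun z => if z = (M : ℂ) then 1 else 0)
  have h2 := (InvB.delta π).comp (fun z => 1 - z)
  have h4 := h1.mul h2
  have h5 : ∀ j : Fin m → ZMod 3,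
      (if (cntw m w j : ℂ) = (M : ℂ) then (1 : ℂ) else 0) * (1 - if j = 0 then (1 : ℂ) else 0)
      = (if rr (m - 1) 1 w = M then indS m 1 j else 0) + (if rr (m - 2) 2 w = M then indS m 2 j else 0) := by
    intro j
    simp only [Nat.cast_inj, cntw_eq, indS]
    by_cases h0 : hammingNorm j = 0
    · rw [hammingNorm_eq_zero] at h0
      subst h0
      simp
    · have hj : j ≠ 0 := fun h => h0 (by rw [h]; simp)
      by_cases hj1 : hammingNorm j = 1
      · simp [hj1, hj]
      · by_cases hj2 : hammingNorm j = 2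
        · simp [hj2, hj]
        · have := rr_max m w (hammingNorm j) hm h3 hw1 hw (by omega) (hammingNorm_le_m j)
          rw [if_neg (by rw [hM]; exact this.ne)]
          simp [hj1, hj2]
  have h6 : InvB π (fun j => (if rr (m - 1) 1 w = M then indS m 1 j else 0) +
      (if rr (m - 2) 2 w = M then indS m 2 j else 0)) := by
    convert h4 using 1
    exact (funext h5).symm
  by_cases e1 : rr (m - 1) 1 w = M
  · by_cases e2 : rr (m - 2) 2 w = M
    · right; right
      simpa [e1, e2] using h6
    · left
      simpa [e1, e2] using h6
  · have e2 : rr (m - 2) 2 w = M := by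
      rcases max_choice (rr (m - 1) 1 w) (rr (m - 2) 2 w) with h | h
      · exact absurd h.symm e1
      · exact h.symm
    right; left
    simpa [e1, e2] using h6

lemma kraw_one_inj {m d d' : ℕ}
    (h : (2 * m - 3 * d : ℂ) = 2 * m - 3 * d') : d = d' := by
  have : (d : ℂ) = d' := by linear_combination (-1 / 3 : ℂ) * h
  exact_mod_cast this

lemma kraw_two_inj {m d : ℕ} (hm : 6 ≤ m) (hd : d ≤ m)
    (h : (9 / 2 * d ^ 2 - (6 * m - 3 / 2) * d + 2 * m ^ 2 - 2 * m : ℂ)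
      = 9 / 2 * (1 : ℕ) ^ 2 - (6 * m - 3 / 2) * (1 : ℕ) + 2 * m ^ 2 - 2 * m) : d = 1 := by
  have h' : (((d : ℤ) - 1) * (3 * (d + 1) - (4 * m - 1)) : ℤ) = 0 := by
    have : ((((d : ℤ) - 1) * (3 * (d + 1) - (4 * m - 1)) : ℤ) : ℂ) = 0 := by
      push_cast at h ⊢
      linear_combination (2 / 3 : ℂ) * h
    exact_mod_cast this
  rcases mul_eq_zero.1 h' with h | h <;> omega

lemma kraw_12_inj {m d : ℕ} (hm : 6 ≤ m) (hd : d ≤ m)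
    (h : (2 * m - 3 * d : ℂ) + (9 / 2 * d ^ 2 - (6 * m - 3 / 2) * d + 2 * m ^ 2 - 2 * m : ℂ)
      = (2 * m - 3 * (1 : ℕ) : ℂ) + (9 / 2 * (1 : ℕ) ^ 2 - (6 * m - 3 / 2) * (1 : ℕ) + 2 * m ^ 2 - 2 * m)) :
    d = 1 := by
  have h' : (((d : ℤ) - 1) * (3 * (d + 1) - (4 * m + 1)) : ℤ) = 0 := by
    have : ((((d : ℤ) - 1) * (3 * (d + 1) - (4 * m + 1)) : ℤ) : ℂ) = 0 := by
      push_cast at h ⊢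
      linear_combination (2 / 3 : ℂ) * h
    exact_mod_cast this
  rcases mul_eq_zero.1 h' with h | h <;> omega

/-- for `m ≥ 6` automorphisms preserve Hamming distance one -/
theorem dist_one_pres {K : Type} [Field K] [CharP K 2] {α : K} (hα : IsPrimitiveRoot α 3)
    (hm : 6 ≤ m) (h3 : 3 ∣ w) (hw1 : 1 ≤ w) (hw : w ≤ m) {π : Equiv.Perm (Fin m → ZMod 3)}
    (hπ : π ∈ codeAut (abelianCode 3 m {w} K α)) (x y : Fin m → ZMod 3) (hxy : hammingNorm (x - y) = 1) :
    hammingNorm (π x - π y) = 1 := by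
  have hc := cnt_inv (eker_inv hα hπ) (lam_odd hα)
  have hle := hammingNorm_le_m (π x - π y)
  rcases sphere_inv hm h3 hw1 hw hc with h | h | h
  · have := h x y
    rw [Fc_indS_one, Fc_indS_one, hxy] at this
    exact kraw_one_inj this
  · have := h x y
    rw [Fc_indS_two, Fc_indS_two, hxy] at this
    exact kraw_two_inj hm hle this
  · have := h x y
    rw [Fc_add, Fc_add, Fc_indS_two, Fc_indS_two, Fc_indS_one, Fc_indS_one, hxy] at this
    exact kraw_12_inj hm hle this

end PartF


section PartG
variable {m : ℕ}

def DD (h : (Fin m → ZMod 3) → (Fin m → ZMod 3)) (u v x : Fin m → ZMod 3) : Fin m → ZMod 3 :=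
  h (x + u + v) - h (x + u) - h (x + v) + h x

lemma DD_comm (h : (Fin m → ZMod 3) → (Fin m → ZMod 3)) (u v x : Fin m → ZMod 3) :
    DD h u v x = DD h v u x := by
  unfold DD
  rw [add_right_comm x u v]
  abel

lemma DD_closure (h : (Fin m → ZMod 3) → (Fin m → ZMod 3)) (G : Set (Fin m → ZMod 3))
    (u : Fin m → ZMod 3) (hG : ∀ v ∈ G, ∀ x, DD h u v x = 0) {v : Fin m → ZMod 3}
    (hv : v ∈ AddSubgroup.closure G) : ∀ x, DD h u v x = 0 := by
  induction hv using AddSubgroup.closure_induction with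
  | mem v hv => exact hG v hv
  | zero => intro x; simp [DD]
  | add v v' _ _ h1 h2 =>
    intro x
    have a1 := h1 x
    have a2 := h2 (x + v)
    unfold DD at *
    rw [add_right_comm x v u] at a2
    rw [← add_assoc, ← add_assoc]
    have : ∀ a b c d e f : Fin m → ZMod 3, a - b - c + d = 0 → e - a - f + c = 0 → e - b - f + d = 0 := by
      intro a b c d e f h1 h2
      linear_combination h1 + h2
    exact this _ _ _ _ _ _ a1 a2
  | neg v _ h1 =>
    intro x
    have a1 := h1 (x + -v)
    unfold DD at *
    rw [add_right_comm x (-v) u] at a1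
    simp only [neg_add_cancel_right] at a1
    linear_combination -a1

lemma affine_of_DD (h : (Fin m → ZMod 3) → (Fin m → ZMod 3)) (G : Set (Fin m → ZMod 3))
    (hG : AddSubgroup.closure G = ⊤) (hD : ∀ u ∈ G, ∀ v ∈ G, ∀ x, DD h u v x = 0) :
    ∃ A : Matrix (Fin m) (Fin m) (ZMod 3), ∀ x, h x = A.mulVec x + h 0 := by
  have h1 : ∀ u ∈ G, ∀ v x, DD h u v x = 0 := fun u hu v =>
    DD_closure h G u (hD u hu) (by rw [hG]; trivial)
  have h2 : ∀ u v x, DD h u v x = 0 := fun u v =>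
    DD_closure h G u (fun v hv x => by rw [DD_comm]; exact h1 v hv u x) (by rw [hG]; trivial)
  let g : (Fin m → ZMod 3) →+ (Fin m → ZMod 3) :=
    { toFun := fun x => h x - h 0
      map_zero' := sub_self _
      map_add' := by
        intro u v
        have := h2 u v 0
        unfold DD at this
        simp only [zero_add] at this
        linear_combination this }
  refine ⟨LinearMap.toMatrix' (AddMonoidHom.toZModLinearMap 3 g), fun x => ?_⟩
  rw [← Matrix.toLin'_apply, Matrix.toLin'_toMatrix']
  change h x = (h x - h 0) + h 0
  abel

lemma closure_single : AddSubgroup.closure (Set.range fun i : Fin m => (Pi.single i (1 : ZMod 3) : Fin m → ZMod 3)) = ⊤ := by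
  rw [eq_top_iff]
  intro x _
  have : x = ∑ i, (x i).val • (Pi.single i (1 : ZMod 3) : Fin m → ZMod 3) := by
    ext k
    rw [Finset.sum_apply, Finset.sum_eq_single k]
    · rw [Pi.smul_apply, Pi.single_eq_same, nsmul_eq_mul, mul_one, ZMod.natCast_zmod_val]
    · intro b _ hb
      rw [Pi.smul_apply, Pi.single_eq_of_ne (Ne.symm hb), smul_zero]
    · intro h
      exact absurd (Finset.mem_univ _) h
  rw [this]
  refine AddSubgroup.sum_mem _ fun i _ => AddSubgroup.nsmul_mem _ ?_ _
  exact AddSubgroup.subset_closure (Set.mem_range_self i)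

lemma wt_one_iff (p : Fin m → ZMod 3) : hammingNorm p = 1 ↔ ∃ i, p i ≠ 0 ∧ ∀ k, k ≠ i → p k = 0 := by
  unfold hammingNorm
  rw [Finset.card_eq_one]
  constructor
  · rintro ⟨i, hi⟩
    refine ⟨i, ?_, fun k hk => ?_⟩
    · have : i ∈ ({i} : Finset (Fin m)) := by simp
      rw [← hi] at this
      simpa using this
    · by_contra hne
      have : k ∈ ({i} : Finset (Fin m)) := by rw [← hi]; simpa using hne
      exact hk (by simpa using this)
  · rintro ⟨i, hi, hk⟩
    refine ⟨i, ?_⟩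
    ext k
    simp only [Finset.mem_filter, Finset.mem_univ, true_and, Finset.mem_singleton]
    constructor
    · intro h
      by_contra hne
      exact h (hk k hne)
    · rintro rfl; exact hi

lemma wt_single (i : Fin m) {a : ZMod 3} (ha : a ≠ 0) : hammingNorm (Pi.single i a : Fin m → ZMod 3) = 1 := by
  rw [wt_one_iff]
  exact ⟨i, by simpa using ha, fun k hk => by simp [hk]⟩

lemma wt_third {p q : Fin m → ZMod 3} (hp : hammingNorm p = 1) (hq : hammingNorm q = 1)
    (hpq : hammingNorm (p - q) = 1) : p + q = 0 := by
  rw [wt_one_iff] at *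
  obtain ⟨i, hi, hi'⟩ := hp
  obtain ⟨k, hk, hk'⟩ := hq
  obtain ⟨l, hl, hl'⟩ := hpq
  have hik : i = k := by
    by_contra hne
    have h1 : l = i := by
      by_contra h
      have := hl' i (Ne.symm h)
      rw [Pi.sub_apply, hk' i hne, sub_zero] at this
      exact hi this
    have h2 : l = k := by
      by_contra h
      have := hl' k (Ne.symm h)
      rw [Pi.sub_apply, hi' k (Ne.symm hne), zero_sub, neg_eq_zero] at this
      exact hk this
    exact hne (h1.symm.trans h2)
  subst hik
  have hli : l = i := by
    by_contra h
    apply hl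
    rw [Pi.sub_apply, hi' l h, hk' l h, sub_zero]
  subst hli
  ext s
  by_cases hs : s = l
  · subst hs
    rw [Pi.sub_apply] at hl
    rw [Pi.add_apply, Pi.zero_apply]
    generalize p s = a at *
    generalize q s = b at *
    clear hi' hk' hl'
    revert a b
    decide
  · rw [Pi.add_apply, Pi.zero_apply, hi' s hs, hk' s hs, add_zero]

lemma wt_square {p q t : Fin m → ZMod 3} {I J : Fin m} (hIJ : I ≠ J) (hp : p I ≠ 0) (hp' : ∀ k, k ≠ I → p k = 0)
    (hq : q J ≠ 0) (hq' : ∀ k, k ≠ J → q k = 0) (ht : t ≠ 0)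
    (h1 : hammingNorm (t - p) = 1) (h2 : hammingNorm (t - q) = 1) : t = p + q := by
  rw [wt_one_iff] at h1 h2
  obtain ⟨L, hL, hL'⟩ := h1
  obtain ⟨L', hM, hM'⟩ := h2
  have tI : t I ≠ 0 := by
    intro h0
    have : I = L := by
      by_contra h
      have := hL' I h
      rw [Pi.sub_apply, h0, zero_sub, neg_eq_zero] at this
      exact hp this
    subst this
    apply ht
    ext k
    by_cases hk : k = I
    · rw [hk, h0]; rfl
    · have := hL' k hk
      rw [Pi.sub_apply, hp' k hk, sub_zero] at this
      exact this
  have tJ : t J ≠ 0 := by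
    intro h0
    have : J = L' := by
      by_contra h
      have := hM' J h
      rw [Pi.sub_apply, h0, zero_sub, neg_eq_zero] at this
      exact hq this
    subst this
    apply ht
    ext k
    by_cases hk : k = J
    · rw [hk, h0]; rfl
    · have := hM' k hk
      rw [Pi.sub_apply, hq' k hk, sub_zero] at this
      exact this
  have e1 : I = L' := by
    by_contra h
    have := hM' I h
    rw [Pi.sub_apply, hq' I hIJ, sub_zero] at this
    exact tI this
  have e2 : J = L := by
    by_contra h
    have := hL' J h
    rw [Pi.sub_apply, hp' J hIJ.symm, sub_zero] at this
    exact tJ this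
  subst e1 e2
  ext k
  rw [Pi.add_apply]
  by_cases hk : k = I
  · subst hk
    have := hL' k hIJ
    rw [Pi.sub_apply, sub_eq_zero] at this
    rw [this, hq' k hIJ, add_zero]
  · have := hM' k hk
    rw [Pi.sub_apply, sub_eq_zero] at this
    rw [this, hp' k hk, zero_add]

theorem ao_of_dist_one (f : Equiv.Perm (Fin m → ZMod 3))
    (hf : ∀ x y, hammingNorm (x - y) = 1 → hammingNorm (f x - f y) = 1) : f ∈ aoTildeSet m := by
  have third : ∀ (x : Fin m → ZMod 3) i, (f (x + Pi.single i 1) - f x) + (f (x - Pi.single i 1) - f x) = 0 := by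
    intro x i
    apply wt_third
    · exact hf _ _ (by rw [add_sub_cancel_left]; exact wt_single i one_ne_zero)
    · refine hf _ _ ?_
      rw [sub_sub_cancel_left, hammingNorm_neg']
      exact wt_single i one_ne_zero
    · rw [sub_sub_sub_cancel_right]
      refine hf _ _ ?_
      rw [add_sub_sub_cancel, ← Pi.single_add]
      exact wt_single i (by decide)
  have hDD : ∀ u ∈ (Set.range fun i : Fin m => (Pi.single i (1 : ZMod 3) : Fin m → ZMod 3)),
      ∀ v ∈ (Set.range fun i : Fin m => (Pi.single i (1 : ZMod 3) : Fin m → ZMod 3)),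
      ∀ x, DD f u v x = 0 := by
    rintro _ ⟨i, rfl⟩ _ ⟨k, rfl⟩ x
    by_cases hik : i = k
    · subst hik
      have := third (x + Pi.single i 1) i
      simp only [add_sub_cancel_right] at this
      unfold DD
      linear_combination this
    · simp only
      set u : Fin m → ZMod 3 := Pi.single i 1 with hu
      set v : Fin m → ZMod 3 := Pi.single k 1 with hv
      have hp : hammingNorm (f (x + u) - f x) = 1 :=
        hf _ _ (by rw [add_sub_cancel_left]; exact wt_single i one_ne_zero)
      have hq : hammingNorm (f (x + v) - f x) = 1 :=
        hf _ _ (by rw [add_sub_cancel_left]; exact wt_single k one_ne_zero)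
      have h1 : hammingNorm ((f (x + u + v) - f x) - (f (x + u) - f x)) = 1 := by
        rw [sub_sub_sub_cancel_right]
        exact hf _ _ (by rw [add_sub_cancel_left]; exact wt_single k one_ne_zero)
      have h2 : hammingNorm ((f (x + u + v) - f x) - (f (x + v) - f x)) = 1 := by
        rw [sub_sub_sub_cancel_right, add_right_comm]
        exact hf _ _ (by rw [add_sub_cancel_left]; exact wt_single i one_ne_zero)
      have ht : f (x + u + v) - f x ≠ 0 := by
        intro h
        have := f.injective (sub_eq_zero.1 h)
        rw [add_assoc, add_eq_left] at this
        have := congrFun this i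
        simp [hu, hv, hik] at this
      obtain ⟨I, hI, hI'⟩ := (wt_one_iff _).1 hp
      obtain ⟨J, hJ, hJ'⟩ := (wt_one_iff _).1 hq
      have hIJ : I ≠ J := by
        intro h
        subst h
        have hpm : f (x + v) - f x = f (x + u) - f x ∨ f (x + v) - f x = -(f (x + u) - f x) := by
          have : (f (x + v) - f x) I = (f (x + u) - f x) I ∨ (f (x + v) - f x) I = -(f (x + u) - f x) I := by
            generalize (f (x + v) - f x) I = a at *
            generalize (f (x + u) - f x) I = b at *
            clear hI' hJ'
            revert a b; decide
          rcases this with h | h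
          · left; ext s
            by_cases hs : s = I
            · rw [hs, h]
            · rw [hI' s hs, hJ' s hs]
          · right; ext s
            by_cases hs : s = I
            · rw [hs, h]; rfl
            · rw [Pi.neg_apply, hI' s hs, hJ' s hs, neg_zero]
        rcases hpm with h | h
        · have := f.injective (sub_left_injective h)
          have := congrFun (add_left_cancel this) i
          simp [hu, hv, hik] at this
        · have h3 := third x i
          rw [← hu] at h3
          have h4 : f (x + v) = f (x - u) := by linear_combination h - h3
          have := f.injective h4
          rw [sub_eq_add_neg] at this
          have := congrFun (add_left_cancel this) i
          simp [hu, hv, hik] at this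
      have := wt_square hIJ hI hI' hJ hJ' ht h1 h2
      unfold DD
      linear_combination this
  obtain ⟨A, hA⟩ := affine_of_DD f _ closure_single hDD
  have hinj : ∀ x, A.mulVec x = 0 → x = 0 := by
    intro x hx
    apply f.injective
    rw [hA x, hx, zero_add]
  have hcol : ∀ i, hammingNorm (A.mulVec (Pi.single i 1)) = 1 := by
    intro i
    have := hf (Pi.single i 1) 0 (by rw [sub_zero]; exact wt_single i one_ne_zero)
    rwa [hA (Pi.single i 1), add_sub_cancel_right] at this
  have hAA : Aᵀ * A = 1 := by
    ext i k
    obtain ⟨I, hI, hI'⟩ := (wt_one_iff _).1 (hcol i)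
    obtain ⟨J, hJ, hJ'⟩ := (wt_one_iff _).1 (hcol k)
    simp only [mulVec_single_one, col_apply] at hI hI' hJ hJ'
    rw [Matrix.mul_apply]
    rw [Finset.sum_eq_single I (fun b _ hb => by rw [transpose_apply, hI' b hb, zero_mul])
      (fun h => absurd (Finset.mem_univ _) h), transpose_apply]
    by_cases hik : i = k
    · subst hik
      rw [Matrix.one_apply_eq]
      generalize A I i = a at *
      clear hI' hJ'
      revert a; decide
    · rw [Matrix.one_apply_ne hik]
      by_cases hIJ : I = J
      · exfalso
        subst hIJ
        have : A I i = A I k ∨ A I i = - A I k := by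
          generalize A I i = a at *
          generalize A I k = b at *
          clear hI' hJ'
          revert a b; decide
        rcases this with h | h
        · have := hinj (Pi.single i 1 - Pi.single k 1) (by
            rw [mulVec_sub]
            ext s
            simp only [mulVec_single_one, Pi.sub_apply, col_apply, Pi.zero_apply]
            by_cases hs : s = I
            · rw [hs, h, sub_self]
            · rw [hI' s hs, hJ' s hs, sub_self])
          have := congrFun this i
          simp [hik] at this
        · have := hinj (Pi.single i 1 + Pi.single k 1) (by
            rw [mulVec_add]
            ext s
            simp only [mulVec_single_one, Pi.add_apply, col_apply, Pi.zero_apply]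
            by_cases hs : s = I
            · rw [hs, h, neg_add_cancel]
            · rw [hI' s hs, hJ' s hs, add_zero])
          have := congrFun this i
          simp [hik] at this
      · rw [hJ' I hIJ, mul_zero]
  refine ⟨A, f 0, 1, ?_, one_ne_zero, by rw [hAA, one_smul], hA⟩
  exact Matrix.isUnit_iff_isUnit_det A |>.2 (Matrix.isUnit_det_of_left_inverse hAA)

end PartG


section PartH
set_option maxRecDepth 100000 in
lemma wt3_iff : ∀ x : Fin 4 → ZMod 3, hammingNorm x = 3 ↔ x ≠ 0 ∧ x ⬝ᵥ x = 0 := by decide +kernel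

set_option maxRecDepth 100000 in
lemma eker43 : ∀ x : Fin 4 → ZMod 3, eker 4 3 x = 1 ↔ x ≠ 0 ∧ x ⬝ᵥ x = 0 := by decide +kernel

set_option maxRecDepth 100000 in
set_option synthInstance.maxHeartbeats 400000 in
lemma third_aux : ∀ v : Fin 4 → ZMod 3, (v ⬝ᵥ v = 0 ∧ v ≠ 0) →
    ∀ u : Fin 4 → ZMod 3, (u ⬝ᵥ u = 0 ∧ u ⬝ᵥ v = 0) → (u = 0 ∨ u = v ∨ u = -v) ∨
      ∃ t : Fin 4 → ZMod 3, t ⬝ᵥ t = 0 ∧ t ⬝ᵥ v = 0 ∧ t ⬝ᵥ u ≠ 0 := by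
  decide +kernel

variable {m : ℕ}

lemma three_zmod : (3 : ZMod 3) = 0 := by decide

lemma three_vec (v : Fin m → ZMod 3) : v + v + v = 0 := by
  ext i
  simp only [Pi.add_apply, Pi.zero_apply]
  linear_combination v i * three_zmod

lemma Q_add (u v : Fin m → ZMod 3) : (u + v) ⬝ᵥ (u + v) = u ⬝ᵥ u + 2 * (u ⬝ᵥ v) + v ⬝ᵥ v := by
  rw [add_dotProduct, dotProduct_add, dotProduct_add, dotProduct_comm v u]
  ring

lemma Q_sub (u v : Fin m → ZMod 3) : (u - v) ⬝ᵥ (u - v) = u ⬝ᵥ u - 2 * (u ⬝ᵥ v) + v ⬝ᵥ v := by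
  rw [sub_dotProduct, dotProduct_sub, dotProduct_sub, dotProduct_comm v u]
  ring

lemma DD_add_right (h : (Fin m → ZMod 3) → (Fin m → ZMod 3)) (u v v' x : Fin m → ZMod 3) :
    DD h u (v + v') x = DD h u v x + DD h u v' (x + v) := by
  unfold DD
  rw [add_right_comm x v u, ← add_assoc, ← add_assoc]
  abel

lemma DD_shift (h : (Fin m → ZMod 3) → (Fin m → ZMod 3)) (u v w x : Fin m → ZMod 3)
    (hw : ∀ x, DD h u w x = 0) : DD h u v (x + w) = DD h u v x := by
  have h1 := hw (x + v)
  have h2 := hw x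
  unfold DD at *
  rw [show x + w + u + v = x + v + u + w by abel, show x + w + u = x + u + w by abel,
    show x + w + v = x + v + w by abel]
  rw [show x + u + v = x + v + u by abel]
  linear_combination h1 - h2

lemma const_of_shift (F : (Fin m → ZMod 3) → (Fin m → ZMod 3)) (G : Set (Fin m → ZMod 3))
    (hG : AddSubgroup.closure G = ⊤) (h : ∀ v ∈ G, ∀ x, F (x + v) = F x) (x : Fin m → ZMod 3) :
    F x = F 0 := by
  have key : ∀ v ∈ AddSubgroup.closure G, ∀ x, F (x + v) = F x := by
    intro v hv
    induction hv using AddSubgroup.closure_induction with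
    | mem v hv => exact h v hv
    | zero => intro x; simp
    | add v v' _ _ h1 h2 => intro x; rw [← add_assoc, h2, h1]
    | neg v _ h1 => intro x; rw [← h1 (x + -v), neg_add_cancel_right]
  have := key x (by rw [hG]; trivial) 0
  rwa [zero_add] at this

def E1 : Fin 4 → ZMod 3 := ![0, 1, 1, 1]
def E2 : Fin 4 → ZMod 3 := ![1, 0, 1, 2]
def E3 : Fin 4 → ZMod 3 := ![2, 0, 1, 2]
def E4 : Fin 4 → ZMod 3 := ![0, 1, 2, 2]
def EE : Set (Fin 4 → ZMod 3) := {E1, E2, E3, E4}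

lemma closure_EE : AddSubgroup.closure EE = ⊤ := by
  have m1 : E1 ∈ AddSubgroup.closure EE := AddSubgroup.subset_closure (by simp [EE])
  have m2 : E2 ∈ AddSubgroup.closure EE := AddSubgroup.subset_closure (by simp [EE])
  have m3 : E3 ∈ AddSubgroup.closure EE := AddSubgroup.subset_closure (by simp [EE])
  have m4 : E4 ∈ AddSubgroup.closure EE := AddSubgroup.subset_closure (by simp [EE])
  rw [eq_top_iff, ← closure_single, AddSubgroup.closure_le]
  rintro _ ⟨i, rfl⟩
  have e0 : (Pi.single 0 1 : Fin 4 → ZMod 3) = E3 - E2 := by decide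
  have e1 : (Pi.single 1 1 : Fin 4 → ZMod 3) = -(E1 + E4) := by decide
  have e3 : (Pi.single 3 1 : Fin 4 → ZMod 3) = (E1 - E4) - (E2 + E3) := by decide
  have e2 : (Pi.single 2 1 : Fin 4 → ZMod 3) = -(E1 - E4) - ((E1 - E4) - (E2 + E3)) := by decide
  have m14 := AddSubgroup.sub_mem _ m1 m4
  have m33 := AddSubgroup.sub_mem _ m14 (AddSubgroup.add_mem _ m2 m3)
  simp only [SetLike.mem_coe]
  fin_cases i
  · exact e0 ▸ AddSubgroup.sub_mem _ m3 m2
  · exact e1 ▸ AddSubgroup.neg_mem _ (AddSubgroup.add_mem _ m1 m4)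
  · exact e2 ▸ AddSubgroup.sub_mem _ (AddSubgroup.neg_mem _ m14) m33
  · exact e3 ▸ m33

/-- maps preserving isotropic differences -/
def IsoPres (f : Equiv.Perm (Fin 4 → ZMod 3)) : Prop :=
  ∀ x y, (f x - f y) ⬝ᵥ (f x - f y) = 0 ↔ (x - y) ⬝ᵥ (x - y) = 0

lemma iso_third {f : Equiv.Perm (Fin 4 → ZMod 3)} (hf : IsoPres f) {v : Fin 4 → ZMod 3}
    (hv : v ⬝ᵥ v = 0) (x : Fin 4 → ZMod 3) : f (x + v) + f (x - v) + f x = 0 := by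
  by_cases hv0 : v = 0
  · subst hv0
    rw [add_zero, sub_zero]; exact three_vec _
  have hV : (f (x + v) - f x) ⬝ᵥ (f (x + v) - f x) = 0 := by
    rw [hf, add_sub_cancel_left]; exact hv
  have hU : (f (x - v) - f x) ⬝ᵥ (f (x - v) - f x) = 0 := by
    rw [hf, sub_sub_cancel_left, neg_dotProduct, dotProduct_neg, neg_neg]; exact hv
  have hUV : ((f (x - v) - f x) - (f (x + v) - f x)) ⬝ᵥ ((f (x - v) - f x) - (f (x + v) - f x)) = 0 := by
    rw [sub_sub_sub_cancel_right, hf]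
    rw [show x - v - (x + v) = v by linear_combination -three_vec v]
    exact hv
  have hV0 : f (x + v) - f x ≠ 0 := by
    intro h
    have := f.injective (sub_eq_zero.1 h)
    exact hv0 (by simpa using this)
  have hdot : (f (x - v) - f x) ⬝ᵥ (f (x + v) - f x) = 0 := by
    rw [Q_sub, hU, hV] at hUV
    linear_combination hUV + ((f (x - v) - f x) ⬝ᵥ (f (x + v) - f x)) * three_zmod
  rcases third_aux _ ⟨hV, hV0⟩ _ ⟨hU, hdot⟩ with h | ⟨t, ht, htv, htu⟩
  · rcases h with h | h | h
    · have := f.injective (sub_eq_zero.1 h)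
      exact absurd (by simpa using this) hv0
    · have := f.injective (sub_left_injective h)
      exact absurd (show v = 0 by linear_combination three_vec v + this) hv0
    · linear_combination h + three_vec (f x)
  · exfalso
    set z := f.symm (f x + t) with hz
    have hfz : f z = f x + t := by rw [hz, Equiv.apply_symm_apply]
    have z1 : (z - x) ⬝ᵥ (z - x) = 0 := by
      rw [← hf, hfz, add_sub_cancel_left]; exact ht
    have z2 : (z - (x + v)) ⬝ᵥ (z - (x + v)) = 0 := by
      rw [← hf, hfz, show f x + t - f (x + v) = t - (f (x + v) - f x) by abel, Q_sub, ht, htv, hV]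
      ring
    rw [← sub_sub, Q_sub, z1, hv] at z2
    have z3 : (z - x) ⬝ᵥ v = 0 := by linear_combination z2 + ((z - x) ⬝ᵥ v) * three_zmod
    have z4 : (z - (x - v)) ⬝ᵥ (z - (x - v)) = 0 := by
      rw [show z - (x - v) = (z - x) + v by abel, Q_add, z1, z3, hv]
      ring
    rw [← hf, hfz, show f x + t - f (x - v) = t - (f (x - v) - f x) by abel, Q_sub, ht, hU] at z4
    apply htu
    linear_combination z4 + (t ⬝ᵥ (f (x - v) - f x)) * three_zmod

lemma iso_DD {f : Equiv.Perm (Fin 4 → ZMod 3)} (hf : IsoPres f) {u v : Fin 4 → ZMod 3}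
    (hu : u ⬝ᵥ u = 0) (hv : v ⬝ᵥ v = 0) (huv : u ⬝ᵥ v = 0) (x : Fin 4 → ZMod 3) : DD f u v x = 0 := by
  have h1 := iso_third hf (v := u + v) (by rw [Q_add, hu, hv, huv]; ring) x
  have h2 := iso_third hf (v := u - v) (by rw [Q_sub, hu, hv, huv]; ring) (x - (u + v))
  rw [show x - (u + v) + (u - v) = x + v by linear_combination -three_vec v,
    show x - (u + v) - (u - v) = x + u by linear_combination -three_vec u] at h2
  unfold DD
  rw [add_assoc]
  linear_combination h1 - h2

lemma iso_form {f : Equiv.Perm (Fin 4 → ZMod 3)} (hf : IsoPres f) :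
    ∃ (A : Matrix (Fin 4) (Fin 4) (ZMod 3)) (c : Fin 4 → ZMod 3),
      ∀ x, f x = A.mulVec x + (x ⬝ᵥ x) • c + f 0 := by
  have q11 : E1 ⬝ᵥ E1 = 0 := by decide
  have q22 : E2 ⬝ᵥ E2 = 0 := by decide
  have q33 : E3 ⬝ᵥ E3 = 0 := by decide
  have q44 : E4 ⬝ᵥ E4 = 0 := by decide
  have q12 : E1 ⬝ᵥ E2 = 0 := by decide
  have q13 : E1 ⬝ᵥ E3 = 0 := by decide
  have q24 : E2 ⬝ᵥ E4 = 0 := by decide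
  have q34 : E3 ⬝ᵥ E4 = 0 := by decide
  have q14 : E1 ⬝ᵥ E4 = 2 := by decide
  have q23 : E2 ⬝ᵥ E3 = 1 := by decide
  have d11 := iso_DD hf q11 q11 q11
  have d22 := iso_DD hf q22 q22 q22
  have d33 := iso_DD hf q33 q33 q33
  have d44 := iso_DD hf q44 q44 q44
  have d12 := iso_DD hf q11 q22 q12
  have d13 := iso_DD hf q11 q33 q13
  have d24 := iso_DD hf q22 q44 q24
  have d34 := iso_DD hf q33 q44 q34
  have sym : ∀ {u v : Fin 4 → ZMod 3}, (∀ x, DD f u v x = 0) → ∀ x, DD f v u x = 0 :=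
    fun h x => by rw [DD_comm]; exact h x
  have d21 := sym d12
  have d31 := sym d13
  have d42 := sym d24
  have d43 := sym d34
  have c14 : ∀ x, DD f E1 E4 x = DD f E1 E4 0 := by
    apply const_of_shift _ EE closure_EE
    rintro v (rfl | rfl | rfl | rfl) x
    · exact DD_shift _ _ _ _ _ d11
    · exact DD_shift _ _ _ _ _ d12
    · exact DD_shift _ _ _ _ _ d13
    · rw [DD_comm, DD_comm f E1]; exact DD_shift _ _ _ _ _ d44
  have c23 : ∀ x, DD f E2 E3 x = DD f E2 E3 0 := by
    apply const_of_shift _ EE closure_EE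
    rintro v (rfl | rfl | rfl | rfl) x
    · exact DD_shift _ _ _ _ _ d21
    · exact DD_shift _ _ _ _ _ d22
    · rw [DD_comm, DD_comm f E2]; exact DD_shift _ _ _ _ _ d33
    · exact DD_shift _ _ _ _ _ d24
  set κ := DD f E1 E4 0 with hκ
  set μ := DD f E2 E3 0 with hμ
  have c41 : ∀ x, DD f E4 E1 x = κ := fun x => by rw [DD_comm]; exact c14 x
  have c32 : ∀ x, DD f E3 E2 x = μ := fun x => by rw [DD_comm]; exact c23 x
  have hs : (E1 + E2 + E3 + E4) ⬝ᵥ (E1 + E2 + E3 + E4) = 0 := by decide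
  have ds := iso_DD hf hs hs hs 0
  have left : ∀ u v v' x, DD f (v + v') u x = DD f v u x + DD f v' u (x + v) := by
    intro u v v' x
    rw [DD_comm, DD_add_right, DD_comm f u v, DD_comm f u v']
  simp only [DD_add_right, left, d11, d22, d33, d44, d12, d13, d24, d34, d21, d31, d42, d43,
    c14, c23, c41, c32, add_zero, zero_add] at ds
  have hμκ : μ = -κ := by linear_combination 2 * ds - three_vec (κ + μ)
  have hQ : ∀ u v x : Fin 4 → ZMod 3, DD (fun x => f x - (x ⬝ᵥ x) • κ) u v x
      = DD f u v x - (2 * (u ⬝ᵥ v)) • κ := by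
    intro u v x
    unfold DD
    simp only [add_dotProduct, dotProduct_add, dotProduct_comm u x, dotProduct_comm v x, dotProduct_comm v u]
    ext i
    simp only [Pi.add_apply, Pi.sub_apply, Pi.smul_apply, smul_eq_mul]
    ring
  obtain ⟨A, hA⟩ := affine_of_DD (fun x => f x - (x ⬝ᵥ x) • κ) EE closure_EE (by
    have z4 : (2 : ZMod 3) * 2 = 1 := by decide
    have z2 : (2 * 1 : ZMod 3) = -1 := by decide
    rintro u (rfl | rfl | rfl | rfl) v (rfl | rfl | rfl | rfl) x
    · rw [hQ, d11, q11]; simp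
    · rw [hQ, d12, q12]; simp
    · rw [hQ, d13, q13]; simp
    · rw [hQ, c14, q14, z4]; simp
    · rw [hQ, d21, dotProduct_comm, q12]; simp
    · rw [hQ, d22, q22]; simp
    · rw [hQ, c23, q23, z2, hμκ]; simp
    · rw [hQ, d24, q24]; simp
    · rw [hQ, d31, dotProduct_comm, q13]; simp
    · rw [hQ, c32, dotProduct_comm, q23, z2, hμκ]; simp
    · rw [hQ, d33, q33]; simp
    · rw [hQ, d34, q34]; simp
    · rw [hQ, c41, dotProduct_comm, q14, z4]; simp
    · rw [hQ, d42, dotProduct_comm, q24]; simp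
    · rw [hQ, d43, dotProduct_comm, q34]; simp
    · rw [hQ, d44, q44]; simp)
  refine ⟨A, κ, fun x => ?_⟩
  have := hA x
  simp only [dotProduct_zero, zero_smul, sub_zero] at this
  linear_combination this

end PartH


section PartI

lemma exists_dot_eq {m : ℕ} {v : Fin m → ZMod 3} (hv : v ≠ 0) (s : ZMod 3) :
    ∃ x : Fin m → ZMod 3, x ⬝ᵥ v = s := by
  obtain ⟨i, hi⟩ : ∃ i, v i ≠ 0 := by
    by_contra hcon
    push Not at hcon
    exact hv (funext hcon)
  refine ⟨Pi.single i (s * v i), ?_⟩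
  rw [single_dotProduct]
  generalize v i = a at *
  clear hv
  revert a s
  decide

lemma sq_one {a : ZMod 3} (ha : a ≠ 0) : a * a = 1 := by
  revert a; decide

theorem ao_of_iso {f : Equiv.Perm (Fin 4 → ZMod 3)} (hf : IsoPres f) : f ∈ aoTildeSet 4 := by
  obtain ⟨A, c, hA⟩ := iso_form hf
  have diff : ∀ x v, f (x + v) - f x = A.mulVec v + (2 * (x ⬝ᵥ v) + v ⬝ᵥ v) • c := by
    intro x v
    rw [hA (x + v), hA x, mulVec_add, Q_add]
    ext i
    simp only [Pi.add_apply, Pi.sub_apply, Pi.smul_apply, smul_eq_mul]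
    ring
  have key : ∀ v, v ⬝ᵥ v = 0 → v ≠ 0 → A.mulVec v ⬝ᵥ c = 0 ∧ A.mulVec v ⬝ᵥ A.mulVec v = 0 := by
    intro v hv hv0
    have h : ∀ s : ZMod 3, A.mulVec v ⬝ᵥ A.mulVec v + s * (A.mulVec v ⬝ᵥ c) + s * s * (c ⬝ᵥ c) = 0 := by
      intro s
      obtain ⟨x, hx⟩ := exists_dot_eq hv0 s
      have h1 : (f (x + v) - f x) ⬝ᵥ (f (x + v) - f x) = 0 := by
        rw [hf, add_sub_cancel_left]; exact hv
      rw [diff, hv, hx, add_zero, Q_add, dotProduct_smul, smul_dotProduct, dotProduct_smul] at h1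
      simp only [smul_eq_mul] at h1
      linear_combination h1 - (s * (A.mulVec v ⬝ᵥ c) + s * s * (c ⬝ᵥ c)) * three_zmod
    have h0 := h 0
    have h1 := h 1
    have h2 := h (-1)
    generalize A.mulVec v ⬝ᵥ A.mulVec v = a at *
    generalize A.mulVec v ⬝ᵥ c = b at *
    generalize c ⬝ᵥ c = d at *
    clear h
    revert a b d
    decide
  have hc : c = 0 := by
    by_contra hc0
    have k1 := (key E1 (by decide) (by decide)).1
    have k2 := (key E2 (by decide) (by decide)).1
    have k3 := (key E3 (by decide) (by decide)).1
    have k4 := (key E4 (by decide) (by decide)).1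
    have hall : ∀ v, A.mulVec v ⬝ᵥ c = 0 := by
      intro v
      have hv : v ∈ AddSubgroup.closure EE := by rw [closure_EE]; trivial
      induction hv using AddSubgroup.closure_induction with
      | mem v hv => rcases hv with rfl | rfl | rfl | rfl <;> assumption
      | zero => simp
      | add v v' _ _ h1 h2 => rw [mulVec_add, add_dotProduct, h1, h2, add_zero]
      | neg v _ h1 => rw [mulVec_neg, neg_dotProduct, h1, neg_zero]
    have hvec : vecMul c A = 0 := by
      ext i
      have := hall (Pi.single i 1)
      rw [dotProduct_comm, dotProduct_mulVec, dotProduct_single_one] at this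
      exact this
    have hdet : A.det = 0 := Matrix.exists_vecMul_eq_zero_iff.1 ⟨c, hc0, hvec⟩
    obtain ⟨u, hu0, hu⟩ := Matrix.exists_mulVec_eq_zero_iff.2 hdet
    obtain ⟨x, hx⟩ := exists_dot_eq hu0 (u ⬝ᵥ u)
    have h1 := diff x u
    rw [hu, hx, show 2 * (u ⬝ᵥ u) + u ⬝ᵥ u = 0 by linear_combination (u ⬝ᵥ u) * three_zmod, zero_smul,
      add_zero] at h1
    have := f.injective (sub_eq_zero.1 h1)
    exact hu0 (by simpa using this)
  subst hc
  simp only [smul_zero, add_zero] at hA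
  have hinj : ∀ x, A.mulVec x = 0 → x = 0 := by
    intro x hx
    apply f.injective
    rw [hA x, hx, zero_add]
  have hdet : A.det ≠ 0 := by
    intro h
    obtain ⟨u, hu0, hu⟩ := Matrix.exists_mulVec_eq_zero_iff.2 h
    exact hu0 (hinj u hu)
  have hS : ∀ v, v ⬝ᵥ v = 0 → v ≠ 0 → v ⬝ᵥ (Aᵀ * A).mulVec v = 0 := by
    intro v h1 h2
    have := (key v h1 h2).2
    rw [dotProduct_mulVec, ← mulVec_transpose, mulVec_mulVec, dotProduct_comm] at this
    exact this
  have hsym : (Aᵀ * A)ᵀ = Aᵀ * A := by rw [transpose_mul, transpose_transpose]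
  have hsymm : ∀ i k, (Aᵀ * A) i k = (Aᵀ * A) k i := fun i k => by
    conv_lhs => rw [← hsym]
    rfl
  have hlam : Aᵀ * A = ((Aᵀ * A) 0 0) • (1 : Matrix (Fin 4) (Fin 4) (ZMod 3)) := by
    generalize Aᵀ * A = S at *
    have a1 := hS ![1, 1, 1, 0] (by decide) (by decide)
    have a2 := hS ![1, 1, -1, 0] (by decide) (by decide)
    have a3 := hS ![1, -1, 1, 0] (by decide) (by decide)
    have a4 := hS ![-1, 1, 1, 0] (by decide) (by decide)
    have b1 := hS ![1, 1, 0, 1] (by decide) (by decide)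
    have b2 := hS ![1, 1, 0, -1] (by decide) (by decide)
    have b3 := hS ![1, -1, 0, 1] (by decide) (by decide)
    have b4 := hS ![-1, 1, 0, 1] (by decide) (by decide)
    have c1 := hS ![1, 0, 1, 1] (by decide) (by decide)
    have c2 := hS ![1, 0, 1, -1] (by decide) (by decide)
    have c3 := hS ![1, 0, -1, 1] (by decide) (by decide)
    have c4 := hS ![-1, 0, 1, 1] (by decide) (by decide)
    have d1 := hS ![0, 1, 1, 1] (by decide) (by decide)
    have d2 := hS ![0, 1, 1, -1] (by decide) (by decide)
    have d3 := hS ![0, 1, -1, 1] (by decide) (by decide)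
    have d4 := hS ![0, -1, 1, 1] (by decide) (by decide)
    simp only [mulVec, dotProduct, Fin.sum_univ_four, hsymm 1 0, hsymm 2 0, hsymm 3 0, hsymm 2 1, hsymm 3 1,
      hsymm 3 2, cons_val] at a1 a2 a3 a4 b1 b2 b3 b4 c1 c2 c3 c4 d1 d2 d3 d4
    have s01 : S 0 1 = 0 := by linear_combination 3 * S 0 1 * three_zmod - (a1 + a2 - a3 - a4)
    have s02 : S 0 2 = 0 := by linear_combination 3 * S 0 2 * three_zmod - (a1 + a3 - a2 - a4)
    have s12 : S 1 2 = 0 := by linear_combination 3 * S 1 2 * three_zmod - (a1 + a4 - a2 - a3)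
    have s03 : S 0 3 = 0 := by linear_combination 3 * S 0 3 * three_zmod - (b1 + b3 - b2 - b4)
    have s13 : S 1 3 = 0 := by linear_combination 3 * S 1 3 * three_zmod - (b1 + b4 - b2 - b3)
    have s23 : S 2 3 = 0 := by linear_combination 3 * S 2 3 * three_zmod - (c1 + c4 - c2 - c3)
    rw [s01, s02, s12] at a1
    rw [s01, s03, s13] at b1
    rw [s02, s03, s23] at c1
    rw [s12, s13, s23] at d1
    have e1 : S 1 1 = S 0 0 := by linear_combination d1 - c1
    have e2 : S 2 2 = S 0 0 := by linear_combination d1 - b1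
    have e3 : S 3 3 = S 0 0 := by linear_combination d1 - a1
    ext i k
    fin_cases i <;> fin_cases k <;>
      simp [hsymm 1 0, hsymm 2 0, hsymm 3 0, hsymm 2 1, hsymm 3 1, hsymm 3 2, s01, s02, s03, s12, s13, s23,
        e1, e2, e3]
  refine ⟨A, f 0, (Aᵀ * A) 0 0, ?_, ?_, hlam, hA⟩
  · rw [Matrix.isUnit_iff_isUnit_det]
    exact isUnit_iff_ne_zero.2 hdet
  · intro h0
    rw [h0, zero_smul] at hlam
    have := congrArg Matrix.det hlam
    rw [det_mul, det_transpose, det_zero] at this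
    rcases mul_eq_zero.1 this with h | h <;> exact hdet h

lemma iso_of_aut {K : Type} [Field K] [CharP K 2] {α : K} (hα : IsPrimitiveRoot α 3)
    {π : Equiv.Perm (Fin 4 → ZMod 3)} (hπ : π ∈ codeAut (abelianCode 3 4 {3} K α)) : IsoPres π := by
  intro x y
  by_cases hxy : x = y
  · subst hxy; simp
  · have h1 := eker43 (π x - π y)
    have h2 := eker43 (x - y)
    rw [eker_inv hα hπ, h2] at h1
    have n1 : x - y ≠ 0 := sub_ne_zero.2 hxy
    have n2 : π x - π y ≠ 0 := sub_ne_zero.2 (fun h => hxy (π.injective h))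
    simp only [n1, n2, ne_eq, not_false_eq_true, true_and] at h1
    exact h1.symm

lemma ao_comp_mem {K : Type} [Field K] [CharP K 2] {α : K} (hα : IsPrimitiveRoot α 3)
    {f : Equiv.Perm (Fin 4 → ZMod 3)} (hf : f ∈ aoTildeSet 4) {c : (Fin 4 → ZMod 3) → ZMod 2}
    (hc : c ∈ abelianCode 3 4 {3} K α) : c ∘ ⇑f ∈ abelianCode 3 4 {3} K α := by
  obtain ⟨A, b, l, hA, hl, hAA, hfx⟩ := hf
  rw [mem_code] at *
  intro j hj
  have hj' : Aᵀ.mulVec (l • A.mulVec j) = j := by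
    rw [mulVec_smul, mulVec_mulVec, hAA, smul_mulVec, one_mulVec, smul_smul, sq_one hl, one_smul]
  set j' := l • A.mulVec j with hj'def
  have hQ : j ⬝ᵥ j = l * (j' ⬝ᵥ j') := by
    have : A.mulVec j ⬝ᵥ A.mulVec j = l * (j ⬝ᵥ j) := by
      rw [dotProduct_mulVec, ← mulVec_transpose, mulVec_mulVec, hAA, smul_mulVec, one_mulVec, smul_dotProduct,
        smul_eq_mul]
    rw [hj'def, smul_dotProduct, dotProduct_smul, this]
    simp only [smul_eq_mul]
    linear_combination (-(l * l * (j ⬝ᵥ j)) - j ⬝ᵥ j) * sq_one hl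
  have hwt : hammingNorm j' ≠ 3 := by
    intro h
    apply hj
    rw [wt3_iff] at h ⊢
    refine ⟨?_, by rw [hQ, h.2, mul_zero]⟩
    intro h0
    apply h.1
    rw [hj'def, h0, mulVec_zero, smul_zero]
  have h1 : hat2 α (c ∘ ⇑f) j = chi3 α (-b ⬝ᵥ j') * hat2 α c j' := by
    unfold hat2
    rw [← Equiv.sum_comp f (fun y => phi2 K (c y) * chi3 α (y ⬝ᵥ j')), Finset.mul_sum]
    refine Finset.sum_congr rfl fun x _ => ?_
    have : x ⬝ᵥ j = -b ⬝ᵥ j' + f x ⬝ᵥ j' := by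
      rw [hfx x, add_dotProduct, neg_dotProduct]
      conv_lhs => rw [← hj']
      rw [dotProduct_mulVec, vecMul_transpose]
      ring
    rw [Function.comp_apply, this, chi3_add hα]
    ring
  rw [h1, hc j' hwt, mul_zero]

lemma ao_symm {m : ℕ} {f : Equiv.Perm (Fin m → ZMod 3)} (hf : f ∈ aoTildeSet m) : f.symm ∈ aoTildeSet m := by
  obtain ⟨A, b, l, hA, hl, hAA, hfx⟩ := hf
  have h1 : (l • Aᵀ) * A = 1 := by rw [smul_mul, hAA, smul_smul, sq_one hl, one_smul]
  have h2 : A * (l • Aᵀ) = 1 := mul_eq_one_comm.1 h1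
  refine ⟨l • Aᵀ, -(l • Aᵀ).mulVec b, l, ?_, hl, ?_, ?_⟩
  · rw [Matrix.isUnit_iff_isUnit_det]
    exact Matrix.isUnit_det_of_left_inverse h2
  · rw [transpose_smul, transpose_transpose, smul_mul, h2]
  · intro x
    apply f.injective
    rw [Equiv.apply_symm_apply, hfx, ← sub_eq_add_neg, ← mulVec_sub, mulVec_mulVec, h2, one_mulVec]
    abel

theorem ao_sub_aut {K : Type} [Field K] [CharP K 2] {α : K} (hα : IsPrimitiveRoot α 3) :
    aoTildeSet 4 ⊆ codeAut (abelianCode 3 4 {3} K α) := by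
  intro f hf
  change (fun c => c ∘ ⇑f.symm) '' _ = _
  ext c
  constructor
  · rintro ⟨d, hd, rfl⟩
    exact ao_comp_mem hα (ao_symm hf) hd
  · intro hc
    refine ⟨c ∘ ⇑f, ao_comp_mem hα hf hc, ?_⟩
    ext x; simp

/-- a reflection-type similarity that does not preserve Hamming distance one -/
lemma ao_bad {m : ℕ} (hm : 6 ≤ m) : ∃ f ∈ aoTildeSet m, ∃ x y : Fin m → ZMod 3,
    hammingNorm (x - y) = 1 ∧ hammingNorm (f x - f y) ≠ 1 := by
  set v : Fin m → ZMod 3 := fun i => if i.val < 4 then 1 else 0 with hv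
  have hvv : v ⬝ᵥ v = 1 := by
    have h1 : v ⬝ᵥ v = ((Finset.univ.filter fun i : Fin m => i.val < 4).card : ZMod 3) := by
      rw [← Finset.sum_boole]
      refine Finset.sum_congr rfl fun i _ => ?_
      simp only [hv]
      split_ifs <;> simp
    have h2 : (Finset.univ.filter fun i : Fin m => i.val < 4).card = 4 := by
      rw [Fin.card_filter_val_lt]
      omega
    rw [h1, h2]; decide
  have hsq : (1 + vecMulVec v v) * (1 + vecMulVec v v) = 1 := by
    rw [mul_add, add_mul, add_mul, vecMulVec_mul_vecMulVec, hvv]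
    simp only [one_mul, mul_one, one_smul]
    ext i k
    simp only [Matrix.add_apply]
    linear_combination (vecMulVec v v i k) * three_zmod
  have htr : (1 + vecMulVec v v)ᵀ = 1 + vecMulVec v v := by
    rw [transpose_add, transpose_one, transpose_vecMulVec]
  have hinv : Function.Involutive (fun x => (1 + vecMulVec v v).mulVec x) := by
    intro x
    simp only [mulVec_mulVec, hsq, one_mulVec]
  refine ⟨hinv.toPerm, ⟨1 + vecMulVec v v, 0, 1, ?_, one_ne_zero, ?_, ?_⟩, Pi.single ⟨0, by omega⟩ 1, 0, ?_, ?_⟩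
  · rw [Matrix.isUnit_iff_isUnit_det]
    exact Matrix.isUnit_det_of_left_inverse hsq
  · rw [htr, hsq, one_smul]
  · intro x
    rw [add_zero]; rfl
  · rw [sub_zero]; exact wt_single _ one_ne_zero
  · intro h
    obtain ⟨i, hi, hi'⟩ := (wt_one_iff _).1 h
    have hval : ∀ k : Fin m, k.val ≠ 0 → k.val < 4 →
        ((1 + vecMulVec v v : Matrix (Fin m) (Fin m) (ZMod 3)).mulVec
          (Pi.single (⟨0, by omega⟩ : Fin m) (1 : ZMod 3)) -
          (1 + vecMulVec v v : Matrix (Fin m) (Fin m) (ZMod 3)).mulVec 0) k ≠ 0 := by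
      intro k hk0 hk4
      have hk : k ≠ ⟨0, by omega⟩ := fun hh => hk0 (by rw [hh])
      simp [mulVec_zero, vecMulVec_apply, hv, hk4, hk, Matrix.one_apply]
    by_cases h1 : i.val = 1
    · exact hval ⟨2, by omega⟩ (by simp) (by simp) (hi' _ (by
        intro hh; rw [← hh] at h1; simp at h1))
    · exact hval ⟨1, by omega⟩ (by simp) (by simp) (hi' _ (by
        intro hh; rw [← hh] at h1; simp at h1))

end PartI

/-- For `m ≥ 4` and `1 ≤ w ≤ m` with `3 ∣ w` and `m` even, the
automorphism group of `C(3, m, {w})` is a subgroup of `AÕ(m, 3) = Z_3^m ⋊ Õ(m, 3)`,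
with equality iff `(m, w) = (4, 3)`. -/
theorem statement4 (m w : ℕ) (hm : 4 ≤ m) (hw1 : 1 ≤ w) (hwm : w ≤ m)
    (h3 : 3 ∣ w) (heven : Even m)
    (K : Type) [Field K] [CharP K 2] (α : K) (hα : IsPrimitiveRoot α 3) :
    codeAut (abelianCode 3 m {w} K α) ⊆ aoTildeSet m ∧
    (codeAut (abelianCode 3 m {w} K α) = aoTildeSet m ↔ (m = 4 ∧ w = 3)) := by
  by_cases h4 : m = 4
  · subst h4
    obtain rfl : w = 3 := by omega
    have hsub : codeAut (abelianCode 3 4 {3} K α) ⊆ aoTildeSet 4 :=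
      fun π hπ => ao_of_iso (iso_of_aut hα hπ)
    exact ⟨hsub, fun _ => ⟨rfl, rfl⟩, fun _ => Set.Subset.antisymm hsub (ao_sub_aut hα)⟩
  · have h6 : 6 ≤ m := by
      obtain ⟨k, hk⟩ := heven
      omega
    refine ⟨fun π hπ => ao_of_dist_one π fun x y hxy => dist_one_pres hα h6 h3 hw1 hwm hπ x y hxy, ?_, ?_⟩
    · intro heq
      exfalso
      obtain ⟨f, hf, x, y, hxy, hne⟩ := ao_bad h6
      rw [← heq] at hf
      exact hne (dist_one_pres hα h6 h3 hw1 hwm hf x y hxy)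
    · intro h
      exact absurd h.1 h4
end

section
/- Let 1 ≤ d ≤ m−1. For every line L ∈ H_1 (an axis-aligned hypercube in [n]^m with exactly one free coordinate), there exist axis-aligned hypercubes H_1, H_2, …, H_{2^{d−1}}, each with exactly d free coordinates, such that L = ⋂_{i=1}^{2^{d−1}} H_i. -/
open Matrix

/-- `aaCube d H` : `H` is an axis-aligned hypercube in `[n]^m` with exactly `d` free
coordinates, i.e. `H = S_1 × ⋯ × S_m` where `S_i = [n]` for the `d` indices `i` in some
set `J` and `S_i` is a singleton for `i ∉ J`. -/
def aaCube {n m : ℕ} (d : ℕ) (H : Set (Fin m → Fin n)) : Prop :=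
  ∃ (J : Finset (Fin m)) (S : Fin m → Set (Fin n)),
    J.card = d ∧
    (∀ i ∈ J, S i = Set.univ) ∧
    (∀ i ∉ J, ∃ a, S i = {a}) ∧
    H = { v | ∀ i, v i ∈ S i }

/-- For `1 ≤ d ≤ m − 1`, every line (axis-aligned hypercube with exactly
one free coordinate) in `[n]^m` is an intersection of `2^(d−1)` axis-aligned hypercubes,
each with exactly `d` free coordinates. -/
theorem statement8 {n m : ℕ} (d : ℕ) (hd1 : 1 ≤ d) (hd2 : d ≤ m - 1)
    (L : Set (Fin m → Fin n)) (hL : aaCube 1 L) :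
    ∃ Hs : Fin (2 ^ (d - 1)) → Set (Fin m → Fin n),
      (∀ i, aaCube d (Hs i)) ∧ L = ⋂ i, Hs i := by
  classical
  obtain ⟨J, S, hJ, hU, hS, rfl⟩ := hL
  obtain ⟨j, rfl⟩ := Finset.card_eq_one.mp hJ
  obtain ⟨T, hjT, -, hT⟩ := Finset.exists_subsuperset_card_eq
    (Finset.subset_univ ({j} : Finset (Fin m))) (n := d) (by simpa using hd1)
    (by simp; omega)
  have hj : j ∈ T := hjT (by simp)
  obtain ⟨x, hx⟩ : ∃ x, x ∉ T := by
    by_contra h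
    push Not at h
    have h2 : T = Finset.univ := Finset.eq_univ_iff_forall.mpr h
    rw [h2, Finset.card_univ, Fintype.card_fin] at hT
    omega
  have hle : d ≤ 2 ^ (d - 1) := by
    have := Nat.lt_two_pow_self (n := d - 1)
    omega
  obtain ⟨e⟩ : Nonempty (T ↪ Fin (2 ^ (d - 1))) :=
    Function.Embedding.nonempty_of_card_le (by simpa [hT] using hle)
  haveI : Nonempty T := ⟨⟨j, hj⟩⟩
  have hf : Function.Surjective (Function.invFun e) := Function.invFun_surjective e.injective
  generalize Function.invFun e = f at hf
  let K : Fin m → Finset (Fin m) := fun t => if t = j then T else insert x (T.erase t)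
  have hK : ∀ t ∈ T, (K t).card = d := by
    intro t ht
    by_cases h : t = j
    · simp [K, h, hT]
    · have : x ∉ T.erase t := fun h => hx (Finset.mem_of_mem_erase h)
      simp only [K, h, if_false]
      rw [Finset.card_insert_of_notMem this, Finset.card_erase_of_mem ht]
      omega
  have hjK : ∀ t, j ∈ K t := by
    intro t
    by_cases h : t = j
    · simp [K, h, hj]
    · simp [K, h, hj, Ne.symm h]
  let S' : Fin m → Fin m → Set (Fin n) := fun t i => if i ∈ K t then Set.univ else S i
  refine ⟨fun k => {v | ∀ i, v i ∈ S' (f k) i}, fun k => ⟨K (f k), S' (f k), hK _ (f k).2,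
    ?_, ?_, rfl⟩, ?_⟩
  · intro i hi
    simp [S', hi]
  · intro i hi
    simp only [S', hi, if_false]
    apply hS
    simp only [Finset.mem_singleton]
    rintro rfl
    exact hi (hjK _)
  · ext v
    simp only [Set.mem_setOf_eq, Set.mem_iInter]
    constructor
    · intro h k i
      by_cases hi : i ∈ K (f k)
      · simp [S', hi]
      · simpa [S', hi] using h i
    · intro h i
      by_cases hij : i = j
      · rw [hU i (by simp [hij])]
        trivial
      by_cases hi : i ∈ T
      · obtain ⟨k, hk⟩ := hf ⟨i, hi⟩
        have h1 := h k i
        have h2 : i ∉ K i := by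
          have : i ≠ x := fun h => hx (h ▸ hi)
          simp [K, hij, this]
        simpa [S', hk, h2] using h1
      · obtain ⟨k, hk⟩ := hf ⟨j, hj⟩
        have h1 := h k i
        have h2 : i ∉ K j := by simp [K, hi]
        simpa [S', hk, h2] using h1
end

section
/- Let n ≥ 3, 1 ≤ r ≤ m−1, and let f : [n]^m → [n]^m be an automorphism of the dual Berman code DB_n(r,m). Then for every line L ∈ H_1 (an axis-aligned hypercube with exactly one free coordinate), the image f(L) is also a line in H_1. -/
open Matrix

/-- The dual Berman code `DB_n(r, m)`, defined recursively.  Coordinates are indexed by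
`[n]^m = (Fin m → Fin n)`; the first coordinate of the index is the block index of the
concatenation `(u + u_0 | u + u_1 | … | u + u_{n-2} | u)`. -/
def bermanDual (n : ℕ) : (m : ℕ) → ℕ → Set ((Fin m → Fin n) → ZMod 2)
  | 0, _ => Set.univ
  | m + 1, 0 => { c | ∃ x : ZMod 2, ∀ v, c v = x }
  | m + 1, r + 1 =>
      if m + 1 ≤ r + 1 then Set.univ
      else
        { c | ∃ (u : (Fin m → Fin n) → ZMod 2)
                (w : Fin n → (Fin m → Fin n) → ZMod 2),
            u ∈ bermanDual n m (r + 1) ∧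
            (∀ l : Fin n, (l : ℕ) < n - 1 → w l ∈ bermanDual n m r) ∧
            (∀ l : Fin n, (l : ℕ) = n - 1 → w l = 0) ∧
            ∀ v : Fin (m + 1) → Fin n,
              c v = u (fun k => v k.succ) + w (v 0) (fun k => v k.succ) }

/-- The dual of a binary code. -/
def dualCode {I : Type} [Fintype I] (C : Set (I → ZMod 2)) : Set (I → ZMod 2) :=
  { c | ∀ d ∈ C, ∑ i, c i * d i = 0 }

/-- The Berman code `B_n(r, m)` is the dual code of the dual Berman code `DB_n(r, m)`. -/
def berman (n m r : ℕ) : Set ((Fin m → Fin n) → ZMod 2) :=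
  dualCode (bermanDual n m r)

open Finset in
/-- Hamming weight. -/
def wtB {n m : ℕ} (c : (Fin m → Fin n) → ZMod 2) : ℕ := ∑ v, if c v ≠ 0 then 1 else 0

/-- The cube through `p` with free coordinates `J`. -/
def cubeB {n m : ℕ} (p : Fin m → Fin n) (J : Finset (Fin m)) : Set (Fin m → Fin n) :=
  { v | ∀ i, i ∉ J → v i = p i }

/-- The block of a word with first coordinate `l`. -/
def blkB {n m : ℕ} (c : (Fin (m + 1) → Fin n) → ZMod 2) (l : Fin n) :
    (Fin m → Fin n) → ZMod 2 := fun v => c (Fin.cons l v)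

lemma add_selfB {n m : ℕ} (a : (Fin m → Fin n) → ZMod 2) : a + a = 0 :=
  funext fun v => CharTwo.add_self_eq_zero (a v)

lemma bd_const (n : ℕ) (x : ZMod 2) : ∀ m r : ℕ, (fun _ => x) ∈ bermanDual n m r
  | 0, _ => by simp [bermanDual]
  | m + 1, 0 => ⟨x, fun _ => rfl⟩
  | m + 1, r + 1 => by
      rw [bermanDual]
      split_ifs
      · trivial
      · exact ⟨fun _ => x, 0, bd_const n x m (r + 1), fun l _ => bd_const n 0 m r,
          fun l _ => rfl, fun v => by simp⟩

lemma bd_zero (n m r : ℕ) : (0 : (Fin m → Fin n) → ZMod 2) ∈ bermanDual n m r :=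
  bd_const n 0 m r

lemma bd_add (n : ℕ) : ∀ (m r : ℕ) (a b : (Fin m → Fin n) → ZMod 2),
    a ∈ bermanDual n m r → b ∈ bermanDual n m r → a + b ∈ bermanDual n m r
  | 0, _ => by simp [bermanDual]
  | m + 1, 0 => by
      rintro a b ⟨x, hx⟩ ⟨y, hy⟩
      exact ⟨x + y, fun v => by simp [hx, hy]⟩
  | m + 1, r + 1 => by
      intro a b
      rw [bermanDual]
      split_ifs
      · intros; trivial
      · rintro ⟨u, w, hu, hw, hw0, h⟩ ⟨u', w', hu', hw', hw0', h'⟩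
        refine ⟨u + u', w + w', bd_add n m _ _ _ hu hu',
          fun l hl => bd_add n m _ _ _ (hw l hl) (hw' l hl),
          fun l hl => by simp [hw0 l hl, hw0' l hl], fun v => ?_⟩
        simp only [Pi.add_apply, h, h']
        ring

lemma bd_nest (n : ℕ) : ∀ (m r : ℕ), bermanDual n m r ⊆ bermanDual n m (r + 1)
  | 0, _ => by simp [bermanDual]
  | m + 1, 0 => by
      rintro a ⟨x, hx⟩
      have : a = fun _ => x := funext hx
      rw [this]
      exact bd_const n x _ _
  | m + 1, r + 1 => by
      intro a
      rw [bermanDual, bermanDual]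
      split_ifs with h1 h2
      · intros; trivial
      · omega
      · intros; trivial
      · rintro ⟨u, w, hu, hw, hw0, h⟩
        exact ⟨u, w, bd_nest n m _ hu, fun l hl => bd_nest n m _ (hw l hl), hw0, h⟩

lemma bd_blk {n m r : ℕ} (hr : r < m) (c : (Fin (m + 1) → Fin n) → ZMod 2)
    (hc : c ∈ bermanDual n (m + 1) (r + 1)) :
    (∀ l, blkB c l ∈ bermanDual n m (r + 1)) ∧
    (∀ l k, blkB c l + blkB c k ∈ bermanDual n m r) := by
  rw [bermanDual, if_neg (by omega)] at hc
  obtain ⟨u, w, hu, hw, hw0, h⟩ := hc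
  have hb : ∀ l, blkB c l = u + w l := by
    intro l
    funext v
    simp [blkB, h]
  have hw' : ∀ l, w l ∈ bermanDual n m r := by
    intro l
    by_cases hl : (l : ℕ) < n - 1
    · exact hw l hl
    · rw [hw0 l (by omega)]
      exact bd_zero n m r
  refine ⟨fun l => ?_, fun l k => ?_⟩
  · rw [hb]
    exact bd_add _ _ _ _ _ hu (bd_nest _ _ _ (hw' l))
  · have : blkB c l + blkB c k = w l + w k := by
      rw [hb, hb]
      have h2 : u + u = 0 := add_selfB u
      calc u + w l + (u + w k) = (u + u) + (w l + w k) := by abel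
        _ = _ := by rw [h2, zero_add]
    rw [this]
    exact bd_add _ _ _ _ _ (hw' l) (hw' k)

lemma bd_of_blk {n m r : ℕ} (hn : 0 < n) (c : (Fin (m + 1) → Fin n) → ZMod 2)
    (h1 : ∀ l, blkB c l ∈ bermanDual n m (r + 1))
    (h2 : ∀ l k, blkB c l + blkB c k ∈ bermanDual n m r) :
    c ∈ bermanDual n (m + 1) (r + 1) := by
  rw [bermanDual]
  split_ifs
  · trivial
  · refine ⟨blkB c ⟨n - 1, by omega⟩, fun l => blkB c l + blkB c ⟨n - 1, by omega⟩,
      h1 _, fun l _ => h2 _ _, fun l hl => ?_, fun v => ?_⟩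
    · have : l = ⟨n - 1, by omega⟩ := Fin.ext hl
      rw [this]
      exact add_selfB _
    · have hv : (Fin.cons (v 0) (fun k => v k.succ) : Fin (m + 1) → Fin n) = v :=
        Fin.cons_self_tail v
      have e : ∀ a b : ZMod 2, a = b + (a + b) := by decide
      simp only [Pi.add_apply]
      have : c v = blkB c (v 0) (fun k => v k.succ) := by
        simp only [blkB]; rw [hv]
      rw [this]
      exact e _ _

open Classical in
lemma bd_cube {n : ℕ} (hn : 0 < n) : ∀ (m r : ℕ) (_ : r ≤ m) (p : Fin m → Fin n)
    (J : Finset (Fin m)) (_ : J.card = m - r),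
    (fun v => if v ∈ cubeB p J then (1 : ZMod 2) else 0) ∈ bermanDual n m r
  | 0, _ => by simp [bermanDual]
  | m + 1, 0 => by
      intro _ p J hJ
      have : J = Finset.univ := by
        rw [← Finset.card_eq_iff_eq_univ]; simpa using hJ
      subst this
      exact ⟨1, fun v => by simp [cubeB]⟩
  | m + 1, r + 1 => by
      intro hr p J hJ
      by_cases hrm : m + 1 ≤ r + 1
      · rw [bermanDual, if_pos hrm]; trivial
      set J' : Finset (Fin m) := Finset.univ.filter (fun k => k.succ ∈ J) with hJ'
      have hcard : J.card = if (0 : Fin (m + 1)) ∈ J then J'.card + 1 else J'.card := by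
        have := Fin.card_filter_univ_succ (fun k : Fin (m + 1) => k ∈ J)
        simp only [Finset.filter_univ_mem] at this
        rw [this]
      have hmem : ∀ l v, (Fin.cons l v : Fin (m + 1) → Fin n) ∈ cubeB p J ↔
          ((0 : Fin (m + 1)) ∉ J → l = p 0) ∧ v ∈ cubeB (fun k => p k.succ) J' := by
        intro l v
        simp [cubeB, Fin.forall_fin_succ, hJ']
      by_cases h0 : (0 : Fin (m + 1)) ∈ J
      · rw [if_pos h0] at hcard
        have hb : ∀ l, blkB (fun v => if v ∈ cubeB p J then (1 : ZMod 2) else 0) l =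
            (fun v => if v ∈ cubeB (fun k => p k.succ) J' then (1 : ZMod 2) else 0) := by
          intro l
          funext v
          simp only [blkB, hmem]
          simp [h0]
        apply bd_of_blk hn
        · intro l
          rw [hb]
          exact bd_cube hn m (r + 1) (by omega) _ _ (by omega)
        · intro l k
          rw [hb, hb, add_selfB]
          exact bd_zero _ _ _
      · rw [if_neg h0] at hcard
        have hb : ∀ l, blkB (fun v => if v ∈ cubeB p J then (1 : ZMod 2) else 0) l ∈
            bermanDual n m r := by
          intro l
          by_cases hl : l = p 0
          · have : blkB (fun v => if v ∈ cubeB p J then (1 : ZMod 2) else 0) l =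
              (fun v => if v ∈ cubeB (fun k => p k.succ) J' then (1 : ZMod 2) else 0) := by
              funext v
              simp only [blkB, hmem]
              simp [hl]
            rw [this]
            exact bd_cube hn m r (by omega) _ _ (by omega)
          · have : blkB (fun v => if v ∈ cubeB p J then (1 : ZMod 2) else 0) l = 0 := by
              funext v
              simp only [blkB, hmem]
              simp [hl, h0]
            rw [this]
            exact bd_zero _ _ _
        apply bd_of_blk hn
        · exact fun l => bd_nest _ _ _ (hb l)
        · exact fun l k => bd_add _ _ _ _ _ (hb l) (hb k)

lemma wtB_blk {n m : ℕ} (c : (Fin (m + 1) → Fin n) → ZMod 2) :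
    wtB c = ∑ l, wtB (blkB c l) := by
  unfold wtB blkB
  rw [← (Fin.consEquiv (fun _ : Fin (m + 1) => Fin n)).sum_comp, Fintype.sum_prod_type]
  rfl

lemma wtB_add {n m : ℕ} (a b : (Fin m → Fin n) → ZMod 2) :
    wtB (a + b) ≤ wtB a + wtB b := by
  unfold wtB
  rw [← Finset.sum_add_distrib]
  apply Finset.sum_le_sum
  intro v _
  by_cases h1 : a v = 0 <;> by_cases h2 : b v = 0 <;> simp [h1, h2]
  split_ifs <;> omega

lemma wtB_zero {n m : ℕ} : wtB (0 : (Fin m → Fin n) → ZMod 2) = 0 := by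
  simp [wtB]

lemma wtB_card {n m : ℕ} (c : (Fin m → Fin n) → ZMod 2) :
    wtB c = Set.ncard {v | c v ≠ 0} := by
  unfold wtB
  rw [← Finset.card_filter, ← Set.ncard_coe_finset]
  simp

lemma cubeB_card {n m : ℕ} (p : Fin m → Fin n) (J : Finset (Fin m)) :
    (cubeB p J).ncard = n ^ J.card := by
  have : cubeB p J = ↑(Fintype.piFinset (fun i => if i ∈ J then Finset.univ else {p i})) := by
    ext v
    simp only [cubeB, Set.mem_ofPred_eq, Finset.mem_coe, Fintype.mem_piFinset]
    refine forall_congr' fun i => ?_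
    by_cases h : i ∈ J <;> simp [h]
  rw [this, Set.ncard_coe_finset, Fintype.card_piFinset]
  simp [apply_ite Finset.card, Finset.prod_ite]

lemma supp_succ {n m : ℕ} (c : (Fin (m + 1) → Fin n) → ZMod 2) (v : Fin (m + 1) → Fin n) :
    c v = blkB c (v 0) (fun k => v k.succ) := by
  have hv : (Fin.cons (v 0) (fun k => v k.succ) : Fin (m + 1) → Fin n) = v :=
    Fin.cons_self_tail v
  simp only [blkB]; rw [hv]

/-- Minimum weight and minimum weight codewords. -/
lemma bd_min {n : ℕ} (hn : 3 ≤ n) : ∀ (m r : ℕ) (_ : r ≤ m) (c : (Fin m → Fin n) → ZMod 2)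
    (_ : c ∈ bermanDual n m r) (_ : c ≠ 0), n ^ (m - r) ≤ wtB c ∧
      (wtB c = n ^ (m - r) → ∃ (p : Fin m → Fin n) (J : Finset (Fin m)),
        J.card = m - r ∧ {v | c v ≠ 0} = cubeB p J) := by
  have triv : ∀ (m : ℕ) (c : (Fin m → Fin n) → ZMod 2), c ≠ 0 → n ^ 0 ≤ wtB c ∧
      (wtB c = n ^ 0 → ∃ (p : Fin m → Fin n) (J : Finset (Fin m)),
        J.card = 0 ∧ {v | c v ≠ 0} = cubeB p J) := by
    intro m c hc
    obtain ⟨v, hv⟩ := Function.ne_iff.mp hc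
    rw [wtB_card, pow_zero]
    refine ⟨?_, fun h => ?_⟩
    · rw [Nat.one_le_iff_ne_zero, ← Nat.pos_iff_ne_zero, Set.ncard_pos]
      exact ⟨v, hv⟩
    · obtain ⟨p, hp⟩ := Set.ncard_eq_one.mp h
      refine ⟨p, ∅, rfl, ?_⟩
      rw [hp]
      ext v
      simp [cubeB, funext_iff]
  intro m
  induction m with
  | zero =>
    intro r hr c _ hc
    simpa using triv 0 c hc
  | succ m ih =>
    intro r hr c hmem hc
    rcases r with _ | r
    · obtain ⟨x, hx⟩ := hmem
      have hx0 : x ≠ 0 := by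
        rintro rfl
        exact hc (funext hx)
      have : {v | c v ≠ 0} = Set.univ := by
        ext v; simp [hx, hx0]
      refine ⟨?_, fun _ => ⟨fun _ => ⟨0, by omega⟩, Finset.univ, by simp, ?_⟩⟩
      · rw [wtB_card, this]
        simp
      · rw [this]
        ext v; simp [cubeB]
    by_cases hrm : m ≤ r
    · have : m + 1 - (r + 1) = 0 := by omega
      rw [this]
      exact triv _ c hc
    push Not at hrm
    obtain ⟨hb1, hb2⟩ := bd_blk hrm c hmem
    have hpow : n ^ (m + 1 - (r + 1)) = n * n ^ (m - (r + 1)) := by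
      rw [← pow_succ']
      congr 1
      omega
    have hpos : 0 < n ^ (m - (r + 1)) := Nat.pow_pos (by omega)
    rw [wtB_blk]
    by_cases hall : ∀ l, blkB c l ≠ 0
    · have hmin := fun l => ih (r + 1) (by omega) _ (hb1 l) (hall l)
      have hsum : ∑ _l : Fin n, n ^ (m - (r + 1)) = n ^ (m + 1 - (r + 1)) := by
        rw [hpow]; simp
      have hle : ∀ l ∈ (Finset.univ : Finset (Fin n)),
          n ^ (m - (r + 1)) ≤ wtB (blkB c l) := fun l _ => (hmin l).1
      refine ⟨hsum ▸ Finset.sum_le_sum hle, fun heq => ?_⟩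
      have hw : ∀ l, n ^ (m - (r + 1)) = wtB (blkB c l) := by
        have := (Finset.sum_eq_sum_iff_of_le hle).mp (hsum.trans heq.symm)
        exact fun l => this l (Finset.mem_univ l)
      have heqb : ∀ l k, blkB c l = blkB c k := by
        intro l k
        by_contra hne
        have hne' : blkB c l + blkB c k ≠ 0 := by
          intro h
          exact hne (funext fun v => CharTwo.add_eq_zero.mp (congrFun h v))
        have h1 := (ih r (by omega) _ (hb2 l k) hne').1
        have h2 := wtB_add (blkB c l) (blkB c k)
        rw [← hw, ← hw] at h2
        have h3 : n ^ (m - r) = n * n ^ (m - (r + 1)) := by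
          rw [← hpow]; congr 1; omega
        rw [h3] at h1
        nlinarith
      obtain ⟨p, J, hJ, hp⟩ := (hmin ⟨0, by omega⟩).2 (hw _).symm
      refine ⟨Fin.cons ⟨0, by omega⟩ p, insert 0 (J.map (Fin.succEmb m)), ?_, ?_⟩
      · rw [Finset.card_insert_of_notMem (by simp [Fin.succ_ne_zero]), Finset.card_map, hJ]
        omega
      · ext v
        have : (fun k => v k.succ) ∈ cubeB p J ↔
            blkB c ⟨0, by omega⟩ (fun k => v k.succ) ≠ 0 := by
          rw [← hp]; rfl
        rw [Set.mem_ofPred_eq, supp_succ c v, heqb _ ⟨0, by omega⟩, ← this]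
        simp [cubeB, Fin.forall_fin_succ, Fin.succ_ne_zero]
    · push Not at hall
      obtain ⟨k, hk⟩ := hall
      have hb : ∀ l, blkB c l ∈ bermanDual n m r := by
        intro l
        have := hb2 l k
        rwa [hk, add_zero] at this
      obtain ⟨l, hl⟩ : ∃ l, blkB c l ≠ 0 := by
        by_contra! h
        apply hc
        funext v
        rw [supp_succ c v, h]; rfl
      have hmin := ih r (by omega) _ (hb l) hl
      have hmr : m + 1 - (r + 1) = m - r := by omega
      rw [hmr]
      have hsplit : wtB (blkB c l) + ∑ j ∈ Finset.univ.erase l, wtB (blkB c j) =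
          ∑ j, wtB (blkB c j) := Finset.add_sum_erase _ (fun j => wtB (blkB c j)) (Finset.mem_univ l)
      refine ⟨by omega, fun heq => ?_⟩
      have hoth : ∑ j ∈ Finset.univ.erase l, wtB (blkB c j) = 0 := by omega
      have hz : ∀ j, j ≠ l → blkB c j = 0 := by
        intro j hj
        by_contra hne
        have h1 := (ih r (by omega) _ (hb j) hne).1
        have h2 := (Finset.sum_eq_zero_iff.mp hoth) j (by simp [hj])
        have : 0 < n ^ (m - r) := Nat.pow_pos (by omega)
        omega
      obtain ⟨p, J, hJ, hp⟩ := hmin.2 (by omega)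
      refine ⟨Fin.cons l p, J.map (Fin.succEmb m), ?_, ?_⟩
      · rw [Finset.card_map, hJ]
      · ext v
        have : (fun k => v k.succ) ∈ cubeB p J ↔
            blkB c l (fun k => v k.succ) ≠ 0 := by
          rw [← hp]; rfl
        rw [Set.mem_ofPred_eq, supp_succ c v]
        have h' : v ∈ cubeB (Fin.cons l p) (J.map (Fin.succEmb m)) ↔
            v 0 = l ∧ (fun k => v k.succ) ∈ cubeB p J := by
          simp [cubeB, Fin.forall_fin_succ, Fin.succ_ne_zero]
        rw [h', this]
        by_cases hv : v 0 = l
        · simp [hv]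
        · simp [hv, hz _ hv]

lemma aaCube_iff {n m d : ℕ} (hn : 0 < n) (H : Set (Fin m → Fin n)) :
    aaCube d H ↔ ∃ (p : Fin m → Fin n) (J : Finset (Fin m)), J.card = d ∧ H = cubeB p J := by
  constructor
  · rintro ⟨J, S, hJ, h1, h2, rfl⟩
    haveI : Nonempty (Fin n) := ⟨⟨0, hn⟩⟩
    choose! a ha using h2
    refine ⟨fun i => if i ∈ J then ⟨0, hn⟩ else a i, J, hJ, ?_⟩
    ext v
    simp only [cubeB, Set.mem_ofPred_eq]
    refine forall_congr' fun i => ?_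
    by_cases h : i ∈ J
    · simp [h, h1 i h]
    · simp [h, ha i h]
  · rintro ⟨p, J, hJ, rfl⟩
    refine ⟨J, fun i => if i ∈ J then Set.univ else {p i}, hJ, fun i hi => by simp [hi],
      fun i hi => ⟨p i, by simp [hi]⟩, ?_⟩
    ext v
    simp only [cubeB, Set.mem_ofPred_eq]
    refine forall_congr' fun i => ?_
    by_cases h : i ∈ J <;> simp [h]

lemma cubeB_base {n m : ℕ} (p q : Fin m → Fin n) (J : Finset (Fin m)) (h : q ∈ cubeB p J) :
    cubeB p J = cubeB q J := by
  ext v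
  exact forall_congr' fun i => forall_congr' fun hi => by rw [h i hi]

lemma aut_cube {n m r : ℕ} (hn : 3 ≤ n) (hr : r ≤ m)
    (f : Equiv.Perm (Fin m → Fin n)) (hf : f ∈ codeAut (bermanDual n m r))
    (p : Fin m → Fin n) (J : Finset (Fin m)) (hJ : J.card = m - r) :
    ∃ J' : Finset (Fin m), f '' cubeB p J = cubeB (f p) J' := by
  classical
  set c : (Fin m → Fin n) → ZMod 2 := fun v => if v ∈ cubeB p J then (1 : ZMod 2) else 0 with hc
  have hcm : c ∈ bermanDual n m r := bd_cube (by omega) m r hr p J hJ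
  have hfc : c ∘ ⇑f.symm ∈ bermanDual n m r := by
    have hf' : (fun c => c ∘ ⇑f.symm) '' bermanDual n m r = bermanDual n m r := hf
    rw [← hf']
    exact ⟨c, hcm, rfl⟩
  have hsupp : {v | (c ∘ ⇑f.symm) v ≠ 0} = f '' cubeB p J := by
    ext v
    rw [Equiv.image_eq_preimage_symm]
    simp [hc]
  have hp : f p ∈ f '' cubeB p J := ⟨p, fun _ _ => rfl, rfl⟩
  have hne : c ∘ ⇑f.symm ≠ 0 := by
    intro h
    rw [← hsupp, h] at hp
    simp at hp
  have hw : wtB (c ∘ ⇑f.symm) = n ^ (m - r) := by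
    rw [wtB_card, hsupp, Set.ncard_image_of_injective _ f.injective, cubeB_card, hJ]
  obtain ⟨q, J', _, h⟩ := (bd_min hn m r hr _ hfc hne).2 hw
  rw [hsupp] at h
  refine ⟨J', h.trans (cubeB_base _ _ _ (h ▸ hp))⟩

/-- For `n ≥ 3` and `1 ≤ r ≤ m − 1`, every automorphism of the dual
Berman code `DB_n(r, m)` maps every line (axis-aligned hypercube with exactly one free
coordinate) of `[n]^m` to a line. -/
theorem statement9 (n m r : ℕ) (hn : 3 ≤ n) (hr1 : 1 ≤ r) (hr2 : r ≤ m - 1)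
    (f : Equiv.Perm (Fin m → Fin n)) (hf : f ∈ codeAut (bermanDual n m r))
    (L : Set (Fin m → Fin n)) (hL : aaCube 1 L) :
    aaCube 1 (⇑f '' L) := by
  rw [aaCube_iff (by omega)] at hL ⊢
  obtain ⟨p, J, hJ, rfl⟩ := hL
  obtain ⟨i, rfl⟩ := Finset.card_eq_one.mp hJ
  have hA := fun (K : {K : Finset (Fin m) // K.card = m - r ∧ i ∈ K}) =>
    aut_cube hn (by omega) f hf p K.1 K.2.1
  choose A hA using hA
  -- existence of cubes separating `i` from other coordinates
  have hex : ∀ j, j ≠ i → ∃ K : Finset (Fin m), (K.card = m - r ∧ i ∈ K) ∧ j ∉ K := by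
    intro j hj
    obtain ⟨K, hK1, hK2, hK3⟩ := Finset.exists_subsuperset_card_eq
      (s := {i}) (t := Finset.univ.erase j) (n := m - r)
      (by simpa using hj.symm) (by simp; omega) (by simp; omega)
    exact ⟨K, ⟨hK3, hK1 (by simp)⟩, fun h => by simpa using hK2 h⟩
  have hinter : cubeB p {i} =
      ⋂ K : {K : Finset (Fin m) // K.card = m - r ∧ i ∈ K}, cubeB p K.1 := by
    ext v
    simp only [Set.mem_iInter]
    constructor
    · intro h K j hj
      refine h j ?_
      simp only [Finset.mem_singleton]
      rintro rfl
      exact hj K.2.2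
    · intro h j hj
      obtain ⟨K, hK, hjK⟩ := hex j (by simpa using hj)
      exact h ⟨K, hK⟩ j hjK
  classical
  have himg : f '' cubeB p {i} = cubeB (f p) (Finset.univ.filter fun j => ∀ K, j ∈ A K) := by
    rw [hinter, Set.image_iInter f.bijective]
    simp only [hA]
    ext v
    simp only [Set.mem_iInter, cubeB, Set.mem_ofPred_eq, Finset.mem_filter, Finset.mem_univ,
      true_and, not_forall]
    constructor
    · rintro h j ⟨K, hK⟩
      exact h K j hK
    · intro h K j hK
      exact h j ⟨K, hK⟩
  refine ⟨_, _, ?_, himg⟩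
  have hcard := congrArg Set.ncard himg
  rw [Set.ncard_image_of_injective _ f.injective, cubeB_card, cubeB_card] at hcard
  rw [← Nat.pow_right_injective (show 2 ≤ n by omega) hcard]
  simp
end

section
/- For any odd integer n ≥ 3, any integer m ≥ 1, and any W ⊆ {0,1,…,m}, the wreath product S_n ≀ S_m in its product action on Z_n^m is a subgroup of the automorphism group of the abelian code C(n,m,W). -/
open Matrix

/-- The wreath product `S_α ≀ S_m` in its product action on `[α]^m`, realized as the
set of permutations of `Fin m → α` of the form `x ↦ (k ↦ σ_k (x (π⁻¹ k)))`. -/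
def wreathPermSet (α : Type) (m : ℕ) : Set (Equiv.Perm (Fin m → α)) :=
  { f | ∃ (σ : Fin m → Equiv.Perm α) (π : Equiv.Perm (Fin m)),
      ∀ (x : Fin m → α) (k : Fin m), f x k = σ k (x (π⁻¹ k)) }

lemma oneDim {n : ℕ} [NeZero n] {K : Type} [Field K] (hnK : (n : K) ≠ 0)
    (ψ : AddChar (ZMod n) K) (hψ : ψ.IsPrimitive) (σ : Equiv.Perm (ZMod n)) (j : ZMod n) :
    ∃ c : ZMod n → K, (∀ l, c l ≠ 0 → (l = 0 ↔ j = 0)) ∧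
      ∀ y, ψ (σ y * j) = ∑ l, c l * ψ (y * l) := by
  classical
  by_cases hj : j = 0
  · refine ⟨Pi.single 0 1, ?_, ?_⟩
    · intro l hl
      simp only [hj, iff_true]
      by_contra h
      exact hl (by simp [h])
    · intro y
      rw [Finset.sum_eq_single 0]
      · simp [hj]
      · intro l _ hl
        simp [hl]
      · simp
  · refine ⟨fun l => (n : K)⁻¹ * ∑ y, ψ (σ y * j) * ψ (-(y * l)), ?_, ?_⟩
    · intro l hl
      simp only [hj, iff_false]
      rintro rfl
      apply hl
      have h1 : ∑ y, ψ (σ y * j) = ∑ y, ψ (y * j) :=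
        Equiv.sum_comp σ (fun y => ψ (y * j))
      have h2 := AddChar.sum_mulShift j hψ
      simp [h1, h2, hj]
    · intro y
      have h : ∀ z, ∑ l, ψ (-(z * l)) * ψ (y * l) = if z = y then (n : K) else 0 := by
        intro z
        have h2 := AddChar.sum_mulShift (y - z) hψ
        rw [ZMod.card] at h2
        calc _ = ∑ l, ψ (l * (y - z)) := by
              refine Finset.sum_congr rfl fun l _ => ?_
              rw [← AddChar.map_add_eq_mul]
              congr 1
              ring
          _ = _ := by
              rw [h2]
              by_cases hz : z = y
              · simp [hz]
              · have : y - z ≠ 0 := sub_ne_zero.mpr (Ne.symm hz)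
                simp [hz, this]
      calc ψ (σ y * j) = (n : K)⁻¹ * ∑ z, ψ (σ z * j) * (if z = y then (n : K) else 0) := by
            simp only [mul_ite, mul_zero, Finset.sum_ite_eq', Finset.mem_univ, if_true]
            field_simp
        _ = (n : K)⁻¹ * ∑ z, ∑ l, ψ (σ z * j) * (ψ (-(z * l)) * ψ (y * l)) := by
            congr 1
            refine Finset.sum_congr rfl fun z _ => ?_
            rw [← h z, Finset.mul_sum]
        _ = _ := by
            rw [Finset.sum_comm, Finset.mul_sum]
            refine Finset.sum_congr rfl fun l _ => ?_
            rw [mul_assoc, Finset.sum_mul]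
            congr 1
            refine Finset.sum_congr rfl fun z _ => ?_
            ring

lemma addChar_sum {n m : ℕ} {K : Type} [Field K]
    (ψ : AddChar (ZMod n) K) (g : Fin m → ZMod n) : ψ (∑ k, g k) = ∏ k, ψ (g k) :=
  map_prod ψ.toMonoidHom (fun k => Multiplicative.ofAdd (g k)) Finset.univ

lemma closed_under {n m : ℕ} [NeZero n] (hodd : Odd n) (W : Set ℕ)
    (K : Type) [Field K] [CharP K 2] (α : K) (hα : IsPrimitiveRoot α n)
    (f : Equiv.Perm (Fin m → ZMod n)) (hf : f ∈ wreathPermSet (ZMod n) m)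
    (a : (Fin m → ZMod n) → ZMod 2) (ha : a ∈ abelianCode n m W K α) :
    a ∘ ⇑f.symm ∈ abelianCode n m W K α := by
  classical
  obtain ⟨σ, π, hf⟩ := hf
  have hnK : (n : K) ≠ 0 := by
    rw [Ne, CharP.cast_eq_zero_iff K 2 n]
    exact hodd.not_two_dvd_nat
  set ψ : AddChar (ZMod n) K := AddChar.zmodChar n hα.pow_eq_one with hψd
  have hψ : ψ.IsPrimitive := AddChar.zmodChar_primitive_of_primitive_root n hα
  have hval : ∀ x : ZMod n, α ^ x.val = ψ x := fun x => (AddChar.zmodChar_apply _ x).symm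
  intro j hj
  simp only [hval]
  have ha' : ∀ j : Fin m → ZMod n, hammingNorm j ∉ W →
      ∑ i : Fin m → ZMod n, (if a i = 1 then (1 : K) else 0) * ψ (∑ k, i k * j k) = 0 := by
    intro j hj
    have := ha j hj
    simpa only [hval] using this
  choose c hc0 hc using fun k => oneDim hnK ψ hψ (σ k) (j k)
  rw [← Equiv.sum_comp f]
  have key : ∀ i : Fin m → ZMod n, ψ (∑ k, f i k * j k) =
      ∑ l : Fin m → ZMod n, (∏ k, c k (l k)) * ψ (∑ k, i k * l (π k)) := by
    intro i
    rw [addChar_sum]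
    simp only [hf, hc]
    rw [Finset.prod_univ_sum, Fintype.piFinset_univ]
    refine Finset.sum_congr rfl fun l _ => ?_
    rw [Finset.prod_mul_distrib, ← addChar_sum]
    congr 2
    rw [← Equiv.sum_comp π]
    simp
  simp only [key, Function.comp, Equiv.symm_apply_apply, Finset.mul_sum]
  rw [Finset.sum_comm]
  refine Finset.sum_eq_zero fun l _ => ?_
  by_cases hp : ∏ k, c k (l k) = 0
  · simp [hp]
  · have hl : ∀ k, l k = 0 ↔ j k = 0 := fun k =>
      hc0 k (l k) (Finset.prod_ne_zero_iff.mp hp k (Finset.mem_univ k))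
    have hnorm : hammingNorm (fun k => l (π k)) = hammingNorm j := by
      unfold hammingNorm
      refine Finset.card_bij (fun k _ => π k) ?_ ?_ ?_
      · intro k hk
        simpa [hl] using hk
      · intro x _ y _ h
        exact π.injective h
      · intro k hk
        refine ⟨π.symm k, ?_, by simp⟩
        simpa [hl] using hk
    have h0 := ha' (fun k => l (π k)) (by rwa [hnorm])
    calc _ = (∏ k, c k (l k)) * ∑ i : Fin m → ZMod n,
          (if a i = 1 then (1 : K) else 0) * ψ (∑ k, i k * l (π k)) := by
          rw [Finset.mul_sum]
          refine Finset.sum_congr rfl fun i _ => ?_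
          ring
      _ = 0 := by rw [h0, mul_zero]

/-- For odd `n ≥ 3`, `m ≥ 1` and any `W ⊆ {0, 1, …, m}`, the wreath
product `S_n ≀ S_m` in its product action on `Z_n^m` is contained in the automorphism group
of the abelian code `C(n, m, W)`. -/
theorem statement10 (n m : ℕ) [NeZero n] (hn : 3 ≤ n) (hodd : Odd n) (hm : 1 ≤ m)
    (W : Set ℕ) (hW : W ⊆ Set.Iic m)
    (K : Type) [Field K] [CharP K 2] (α : K) (hα : IsPrimitiveRoot α n) :
    wreathPermSet (ZMod n) m ⊆ codeAut (abelianCode n m W K α) := by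
  intro f hf
  have hsub : (fun c : (Fin m → ZMod n) → ZMod 2 => c ∘ ⇑f.symm) '' abelianCode n m W K α
      ⊆ abelianCode n m W K α := by
    rintro _ ⟨a, ha, rfl⟩
    exact closed_under hodd W K α hα f hf a ha
  refine Set.eq_of_subset_of_ncard_le hsub ?_ (Set.toFinite _)
  rw [Set.ncard_image_of_injective]
  intro a b h
  exact f.symm.surjective.injective_comp_right h
end
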